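/- Let Γ be an Abelian group, let γ ∈ Γ and let ℓ be a fixed positive integer. The long A-paths of weight γ (i.e. A-paths of weight γ having length at least ℓ) have the Erdős–Pósa property if and only if the A-paths of weight γ have the Erdős–Pósa property. -/

import Mathlib

/-!
Paths are handled as vertex lists: `GP G lab A γ n l` says that `l` is the vertex list of an `A`-path
of weight `γ` and length at least `n`, and `LEPP Γ γ n f` is the Erdős–Pósa property of these paths
with bound `f`.

**From long paths to all paths.** Subdividing every edge once doubles all lengths and preserves
weights, so the property for a length bound implies the property for half of that bound, and by
iteration the property for all paths of weight `γ` (`lepp_forward`).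

**Infinite groups.** If `Γ` is infinite, neither property holds: with sufficiently generic labels, a
family of pairwise intersecting, edge-disjoint paths has the property that every `A`-path of weight
`γ` contains one of them (`not_lepp_of_infinite`).

**Finite groups, from all paths to long paths.** The bound for `k + 1` is derived from the one for `k`.
Assume that there are no `k + 1` disjoint long paths. A depth-first search argument in the graph
`H = G - A` gives a path `W` of `H` such that all long paths outside a bounded set meet `W`
(`exists_path`). A path of `H` that touches many disjoint short paths of weight `γ` yields many
disjoint long ones: detours along the path from one short path to a later one change the weight by a
difference of values of a function into `Γ`, so by pigeonhole some detour has weight `γ`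
(`pack_of_touch`). Hence the short paths that touch `W` are hit by a bounded set. Call a vertex *core*
(with parameter `c ∈ {1, 2}`, relative to a set `X`) if fewer than `c` vertices outside `X` never
suffice to separate it from `W` (`IsCore`). If many disjoint short paths contain core vertices, then a
rank argument (`IsCore.step`) followed by Menger's theorem (`menger`) links these vertices to `W` by
disjoint fans of size `c`. For `c = 2` these ears can be threaded into one path of `H` through many of
the short paths (the ladder lemmas), and for `c = 1` and `Γ` of exponent two the links can be
walked back and forth at no cost; both give a packing of long paths. So there is a bounded set `X` such
that each path of weight `γ` that avoids `X` and has a core vertex is long (`exists_core_free`).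

If `Γ` has exponent two, take `c = 1`: the property of all paths of weight `γ`, applied to the graph
induced by the core vertices and `A`, finishes the step (`hit_of_exponent_two`). Otherwise take
`c = 2`. The core vertices of a path that avoids `X` are then consecutive, and the two remaining pieces
of the path are tails that attach to the core at a single vertex (`IsHull`). For each pair of weights
of the two tails, the tails are replaced by gadgets attached to the core vertices. The labels of a
gadget are chosen so that no path of weight `γ` lives in a single gadget, which is possible because
some `x` has `x + x ≠ 0`. Paths of weight `γ` of the gadget graph correspond to long paths of `G`
(`exists_expand`, `gp_compress`), so the property of all paths of weight `γ` gives a bounded hitting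
set. Long paths with only one core vertex are hit by a packing argument (`hit_of_fibers`).
-/

open SimpleGraph

/-- An `A`-path in a graph `G`: a non-trivial path with both endvertices in `A`
and no interior vertex in `A`. -/
structure APath {V : Type} (G : SimpleGraph V) (A : Set V) where
  first : V
  last : V
  walk : G.Walk first last
  isPath : walk.IsPath
  ne : first ≠ last
  firstMem : first ∈ A
  lastMem : last ∈ A
  interior : ∀ x ∈ walk.support, x ∈ A → x = first ∨ x = last

/-- The weight of a walk under an edge labelling `lab`. -/
def walkWeight {V Γ : Type} [AddCommGroup Γ] (lab : Sym2 V → Γ)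
    {G : SimpleGraph V} {u v : V} (p : G.Walk u v) : Γ :=
  (p.edges.map lab).sum

/-- The weight of an `A`-path under an edge labelling `lab`. -/
def APath.weight {V Γ : Type} [AddCommGroup Γ] {G : SimpleGraph V} {A : Set V}
    (lab : Sym2 V → Γ) (P : APath G A) : Γ :=
  walkWeight lab P.walk

/-- Two `A`-paths are vertex-disjoint. -/
def APath.VDisjoint {V : Type} {G : SimpleGraph V} {A : Set V}
    (P Q : APath G A) : Prop :=
  List.Disjoint P.walk.support Q.walk.support

/-- The (vertex-)Erdős–Pósa property for a class of `A`-paths in `Γ`-labelled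
graphs, the class being given by the predicate `Good`. -/
def HasEPP (Γ : Type) [AddCommGroup Γ]
    (Good : ∀ (V : Type) (G : SimpleGraph V) (A : Set V),
      (Sym2 V → Γ) → APath G A → Prop) : Prop :=
  ∃ f : ℕ → ℕ, ∀ (V : Type) [Fintype V] (G : SimpleGraph V)
      (lab : Sym2 V → Γ) (A : Set V) (k : ℕ),
    (∃ P : Fin k → APath G A, (∀ i, Good V G A lab (P i)) ∧
      ∀ i j : Fin k, i ≠ j → (P i).VDisjoint (P j)) ∨
    (∃ X : Finset V, X.card ≤ f k ∧
      ∀ P : APath G A, Good V G A lab P → ∃ x ∈ X, x ∈ P.walk.support)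

namespace LongAPaths

/-! ### Paths as lists -/

/-- The weight of a walk given by its list of vertices. -/
def lw {V Γ : Type} [AddCommGroup Γ] (lab : Sym2 V → Γ) : List V → Γ
  | [] => 0
  | [_] => 0
  | x :: y :: l => lab s(x, y) + lw lab (y :: l)

lemma _root_.List.IsChain.middle {α : Type*} {R : α → α → Prop} {l l' : List α} (h : l.IsChain R)
    (h' : l' <:+: l) : l'.IsChain R := by
  obtain ⟨s, t, rfl⟩ := h'
  exact (List.isChain_append.1 (List.isChain_append.1 h).1).2.1

lemma _root_.List.IsChain.front {α : Type*} {R : α → α → Prop} {l l' : List α} (h : l.IsChain R)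
    (h' : l' <+: l) : l'.IsChain R := by
  obtain ⟨t, rfl⟩ := h'
  exact (List.isChain_append.1 h).1

section lw
variable {V Γ : Type} [AddCommGroup Γ] (lab : Sym2 V → Γ)

@[simp] lemma lw_nil : lw lab [] = 0 := rfl
@[simp] lemma lw_single (x : V) : lw lab [x] = 0 := rfl
@[simp] lemma lw_cons_cons (x y : V) (l : List V) :
    lw lab (x :: y :: l) = lab s(x, y) + lw lab (y :: l) := rfl

lemma lw_append_cons (l : List V) (x : V) (l' : List V) :
    lw lab (l ++ x :: l') = lw lab (l ++ [x]) + lw lab (x :: l') := by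
  induction l with
  | nil => simp
  | cons a l ih =>
    cases l with
    | nil => simp
    | cons b l => simp only [List.cons_append, lw_cons_cons] at ih ⊢; rw [ih]; abel

lemma lw_reverse (l : List V) : lw lab l.reverse = lw lab l := by
  induction l with
  | nil => simp
  | cons a l ih =>
    cases l with
    | nil => simp
    | cons b l =>
      simp only [List.reverse_cons, lw_cons_cons, List.append_assoc, List.singleton_append] at ih ⊢
      rw [lw_append_cons, ih]
      simp [Sym2.eq_swap, add_comm]

lemma lw_support {G : SimpleGraph V} {u v : V} (p : G.Walk u v) :
    lw lab p.support = (p.edges.map lab).sum := by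
  induction p with
  | nil => simp
  | cons h p ih =>
    rename_i a b c
    have : p.support = b :: p.support.tail := by cases p <;> simp
    rw [Walk.support_cons, this, lw_cons_cons, ← this, ih]; simp

end lw

/-- The vertex list of an `A`-path. -/
def IsAP {V : Type} (G : SimpleGraph V) (A : Set V) (l : List V) : Prop :=
  l.IsChain G.Adj ∧ l.Nodup ∧ ∃ a m b, l = a :: (m ++ [b]) ∧ a ∈ A ∧ b ∈ A ∧ ∀ x ∈ m, x ∉ A

/-- The vertex list of an `A`-path of weight `γ` and length at least `n`. -/
def GP {V Γ : Type} [AddCommGroup Γ] (G : SimpleGraph V) (lab : Sym2 V → Γ) (A : Set V) (γ : Γ)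
    (n : ℕ) (l : List V) : Prop :=
  IsAP G A l ∧ lw lab l = γ ∧ n < l.length

/-- There are `k` pairwise disjoint lists satisfying `C`. -/
def Pack {V : Type} (C : List V → Prop) (k : ℕ) : Prop :=
  ∃ Ps : List (List V), Ps.length = k ∧ (∀ l ∈ Ps, C l) ∧ Ps.Pairwise List.Disjoint

/-- The set `X` meets every list satisfying `C`. -/
def Hit {V : Type} (C : List V → Prop) (X : Finset V) : Prop :=
  ∀ l, C l → ∃ x ∈ X, x ∈ l

/-- The Erdős–Pósa property of `A`-paths of weight `γ` and length at least `n`, in terms of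
vertex lists. -/
def LEPP (Γ : Type) [AddCommGroup Γ] (γ : Γ) (n : ℕ) (f : ℕ → ℕ) : Prop :=
  ∀ (V : Type) [Fintype V] (G : SimpleGraph V) (lab : Sym2 V → Γ) (A : Set V) (k : ℕ),
    Pack (GP G lab A γ n) k ∨ ∃ X : Finset V, X.card ≤ f k ∧ Hit (GP G lab A γ n) X

section conv
variable {V Γ : Type} [AddCommGroup Γ] {G : SimpleGraph V} {A : Set V}

lemma isAP_support (P : APath G A) : IsAP G A P.walk.support := by
  refine ⟨P.walk.isChain_adj_support, P.isPath.support_nodup, ?_⟩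
  obtain ⟨u, v, w, hp, hne, hu, hv, hint⟩ := P
  have h1 : w.support = u :: w.support.tail := by cases w <;> simp
  have h2 : w.support.tail ≠ [] := by
    cases w with
    | nil => exact absurd rfl hne
    | cons h p => simp
  have h3 : w.support.tail.getLast h2 = v := by
    rw [List.getLast_tail]; exact w.getLast_support
  have h4 : w.support.tail = w.support.tail.dropLast ++ [v] := by
    conv_lhs => rw [← List.dropLast_append_getLast h2, h3]
  have hnd := hp.support_nodup
  refine ⟨u, w.support.tail.dropLast, v, by rw [← h4, ← h1], hu, hv, ?_⟩
  intro x hx hxA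
  have hx' : x ∈ w.support := List.mem_of_mem_tail (List.mem_of_mem_dropLast hx)
  rw [h1, h4] at hnd
  rcases hint x hx' hxA with rfl | rfl
  · exact (List.nodup_cons.1 hnd).1 (List.mem_append_left _ hx)
  · rw [List.nodup_cons, List.nodup_append] at hnd
    exact hnd.2.2.2 x hx x (by simp) rfl

lemma isAP_exists {l : List V} (h : IsAP G A l) : ∃ P : APath G A, P.walk.support = l := by
  obtain ⟨hc, hn, a, m, b, rfl, ha, hb, hm⟩ := h
  have key : ∀ (x y : V) (w : G.Walk x y), w.support = a :: (m ++ [b]) → x = a → y = b →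
      ∃ P : APath G A, P.walk.support = a :: (m ++ [b]) := by
    rintro x y w hw rfl rfl
    refine ⟨⟨x, y, w, Walk.IsPath.mk' (hw ▸ hn), ?_, ha, hb, ?_⟩, hw⟩
    · rintro rfl; simp at hn
    · intro z hz hzA
      rw [hw] at hz
      simp only [List.mem_cons, List.mem_append, List.not_mem_nil, or_false] at hz
      rcases hz with h | h | h
      · exact .inl h
      · exact absurd hzA (hm z h)
      · exact .inr h
  exact key _ _ _ (Walk.support_ofSupport (G := G) (by simp) hc) (by simp) (by simp)

lemma hasEPP_iff (γ : Γ) (n : ℕ) :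
    HasEPP Γ (fun _ _ _ lab P => P.weight lab = γ ∧ n ≤ P.walk.length) ↔
      ∃ f, LEPP Γ γ n f := by
  refine exists_congr fun f => ?_
  have hg : ∀ (V : Type) (G : SimpleGraph V) (lab : Sym2 V → Γ) (A : Set V) (P : APath G A),
      (P.weight lab = γ ∧ n ≤ P.walk.length) ↔ GP G lab A γ n P.walk.support := by
    intro V G lab A P
    unfold GP APath.weight walkWeight
    rw [lw_support, Walk.length_support]
    exact ⟨fun h => ⟨isAP_support P, h.1, by omega⟩, fun h => ⟨h.2.1, by omega⟩⟩
  constructor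
  · intro h V _ G lab A k
    rcases h V G lab A k with ⟨P, hP, hd⟩ | ⟨X, hX, hh⟩
    · left
      refine ⟨List.ofFn fun i => (P i).walk.support, by simp, ?_, ?_⟩
      · intro l hl
        obtain ⟨i, rfl⟩ := (List.mem_ofFn' _ _).1 hl
        exact (hg _ _ _ _ _).1 (hP i)
      · rw [List.pairwise_ofFn]
        intro i j hij
        exact hd i j hij.ne
    · right
      refine ⟨X, hX, fun l hl => ?_⟩
      obtain ⟨P, rfl⟩ := isAP_exists hl.1
      exact hh P ((hg _ _ _ _ _).2 hl)
  · intro h V _ G lab A k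
    rcases h V G lab A k with ⟨Ps, hk, hP, hd⟩ | ⟨X, hX, hh⟩
    · left
      subst hk
      choose Q hQ using fun i : Fin Ps.length => isAP_exists (hP _ (List.get_mem Ps i)).1
      refine ⟨Q, fun i => (hg _ _ _ _ _).2 ?_, fun i j hij => ?_⟩
      · rw [hQ]; exact hP _ (List.get_mem Ps i)
      · unfold APath.VDisjoint
        rw [hQ, hQ]
        rcases lt_or_gt_of_ne hij with h | h
        · exact List.pairwise_iff_get.1 hd i j h
        · exact (List.pairwise_iff_get.1 hd j i h).symm
    · right
      exact ⟨X, hX, fun P hP => hh _ ((hg _ _ _ _ _).1 hP)⟩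

lemma IsAP.one_lt_length {l : List V} (h : IsAP G A l) : 1 < l.length := by
  obtain ⟨-, -, a, m, b, rfl, -⟩ := h; simp

lemma IsAP.reverse {l : List V} (h : IsAP G A l) : IsAP G A l.reverse := by
  obtain ⟨hc, hn, a, m, b, rfl, ha, hb, hm⟩ := h
  refine ⟨?_, List.nodup_reverse.2 hn, b, m.reverse, a, by simp, hb, ha, by simpa using hm⟩
  rw [List.isChain_reverse]
  exact hc.imp fun _ _ h => G.adj_symm h

end conv

lemma hasEPP_iff' {Γ : Type} [AddCommGroup Γ] (γ : Γ) :
    HasEPP Γ (fun _ _ _ lab P => P.weight lab = γ) ↔ ∃ f, LEPP Γ γ 1 f := by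
  rw [← hasEPP_iff]
  have : ∀ (V : Type) (G : SimpleGraph V) (A : Set V) (P : APath G A), 1 ≤ P.walk.length := by
    intro V G A P
    have := (isAP_support P).one_lt_length
    rw [Walk.length_support] at this; omega
  simp [this]

/-! ### Packings -/

/-- A greedy maximal family: if there is no `K`-element list of pairwise `r`-related members
of `C`, then some shorter such list blocks every member of `C`. -/
lemma exists_blocking {α : Type*} (C : α → Prop) (r : α → α → Prop) (K : ℕ)
    (h : ¬ ∃ Ps : List α, Ps.length = K ∧ (∀ l ∈ Ps, C l) ∧ Ps.Pairwise r) :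
    ∃ Ps : List α, Ps.length < K ∧ (∀ l ∈ Ps, C l) ∧ Ps.Pairwise r ∧
      ∀ l, C l → ∃ p ∈ Ps, ¬ r l p := by
  induction K with
  | zero => exact absurd ⟨[], rfl, by simp, by simp⟩ h
  | succ K ih =>
    by_cases hK : ∃ Ps : List α, Ps.length = K ∧ (∀ l ∈ Ps, C l) ∧ Ps.Pairwise r
    · obtain ⟨Ps, h1, h2, h3⟩ := hK
      refine ⟨Ps, by omega, h2, h3, ?_⟩
      intro l hl
      by_contra! hcon
      exact h ⟨l :: Ps, by simp [h1], by simpa using ⟨hl, h2⟩, by simpa using ⟨hcon, h3⟩⟩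
    · obtain ⟨Ps, h1, h2⟩ := ih hK
      exact ⟨Ps, by omega, h2⟩

/-! ### From long paths to all paths: subdividing edges -/

section subdivision
variable {V Γ : Type} [AddCommGroup Γ]

/-- The graph obtained from `G` by subdividing every edge once. -/
def subdiv (G : SimpleGraph V) : SimpleGraph (V ⊕ Sym2 V) where
  Adj p q := match p, q with
    | .inl x, .inr e => x ∈ e ∧ e ∈ G.edgeSet
    | .inr e, .inl x => x ∈ e ∧ e ∈ G.edgeSet
    | _, _ => False
  symm := ⟨by rintro (x | e) (y | e') <;> simp⟩
  loopless := ⟨by rintro (x | e) <;> simp⟩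

open Classical in
/-- The labelling of the subdivision: one half of each edge carries the label, the other half
gets label zero. -/
noncomputable def subLab (lab : Sym2 V → Γ) : Sym2 (V ⊕ Sym2 V) → Γ :=
  Sym2.lift ⟨fun p q => match p, q with
    | .inl x, .inr e => if x = e.out.1 then lab e else 0
    | .inr e, .inl x => if x = e.out.1 then lab e else 0
    | _, _ => 0, by rintro (x | e) (y | e') <;> simp⟩

/-- The part after the first vertex `x` of the subdivision of the walk `x :: l`. -/
def subTail : V → List V → List (V ⊕ Sym2 V)
  | _, [] => []
  | x, y :: l => .inr s(x, y) :: .inl y :: subTail y l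

lemma out_cases (x y : V) : (s(x, y)).out = (x, y) ∨ (s(x, y)).out = (y, x) := by
  have : Sym2.mk (s(x, y)).out.1 (s(x, y)).out.2 = s(x, y) := Quot.out_eq _
  rw [Sym2.eq_iff] at this
  rcases this with h | h
  · left; ext <;> simp [h]
  · right; ext <;> simp [h]

lemma inl_mem_subTail (x z : V) (l : List V) : Sum.inl z ∈ subTail x l ↔ z ∈ l := by
  induction l generalizing x with
  | nil => simp [subTail]
  | cons y l ih => simp [subTail, ih]

lemma inr_mem_subTail (x : V) (e : Sym2 V) (l : List V) (h : Sum.inr e ∈ subTail x l) :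
    ∀ z ∈ e, z ∈ x :: l := by
  induction l generalizing x with
  | nil => simp [subTail] at h
  | cons y l ih =>
    simp only [subTail, List.mem_cons, Sum.inr.injEq, reduceCtorEq, false_or] at h
    rcases h with rfl | h
    · intro z hz; simp at hz; rcases hz with rfl | rfl <;> simp
    · intro z hz; exact List.mem_cons_of_mem _ (ih y h z hz)

lemma length_subTail (x : V) (l : List V) : (subTail x l).length = 2 * l.length := by
  induction l generalizing x with
  | nil => simp [subTail]
  | cons y l ih => simp [subTail, ih]; ring

lemma isChain_subTail {G : SimpleGraph V} (x : V) (l : List V)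
    (h : (x :: l).IsChain G.Adj) : (Sum.inl x :: subTail x l).IsChain (subdiv G).Adj := by
  induction l generalizing x with
  | nil => simp [subTail]
  | cons y l ih =>
    rw [List.isChain_cons_cons] at h
    simp only [subTail, List.isChain_cons_cons]
    refine ⟨?_, ?_, ih y h.2⟩ <;> simp [subdiv, h.1]

lemma nodup_subTail (x : V) (l : List V) (h : (x :: l).Nodup) :
    (Sum.inl x :: subTail x l).Nodup := by
  induction l generalizing x with
  | nil => simp [subTail]
  | cons y l ih =>
    have h2 := ih y (List.nodup_cons.1 h).2
    simp only [subTail]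
    rw [List.nodup_cons]
    refine ⟨?_, ?_⟩
    · rw [List.nodup_cons] at h
      simp only [List.mem_cons, reduceCtorEq, Sum.inl.injEq, inl_mem_subTail, false_or]
      simpa using h.1
    · rw [List.nodup_cons]
      refine ⟨?_, h2⟩
      simp only [List.mem_cons, reduceCtorEq, false_or]
      intro hm
      have := inr_mem_subTail _ _ _ hm x (by simp)
      exact (List.nodup_cons.1 h).1 this

lemma lw_subTail (lab : Sym2 V → Γ) (x : V) (l : List V) (h : (x :: l).Nodup) :
    lw (subLab lab) (Sum.inl x :: subTail x l) = lw lab (x :: l) := by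
  induction l generalizing x with
  | nil => simp [subTail]
  | cons y l ih =>
    have hxy : x ≠ y := by rintro rfl; simp at h
    simp only [subTail, lw_cons_cons]
    rw [ih y (List.nodup_cons.1 h).2, ← add_assoc]
    congr 1
    rcases out_cases x y with h | h <;> simp [subLab, h, hxy, hxy.symm]

lemma subTail_append (x : V) (m : List V) (b : V) :
    ∃ m', subTail x (m ++ [b]) = m' ++ [Sum.inl b] ∧ ∀ z, Sum.inl z ∈ m' → z ∈ m := by
  induction m generalizing x with
  | nil => exact ⟨[.inr s(x, b)], by simp [subTail], by simp⟩
  | cons y m ih =>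
    obtain ⟨m', h1, h2⟩ := ih y
    refine ⟨.inr s(x, y) :: .inl y :: m', by simp [subTail, h1], ?_⟩
    intro z hz
    simp at hz ⊢
    exact hz.imp id (h2 z)

/-- Every path of the subdivision between two original vertices is the subdivision of a
walk of `G`. -/
lemma subTail_surj {G : SimpleGraph V} (n : ℕ) : ∀ (x : V) (m' : List (V ⊕ Sym2 V)) (b : V),
    m'.length ≤ n → (Sum.inl x :: (m' ++ [Sum.inl b])).IsChain (subdiv G).Adj →
    (Sum.inl x :: (m' ++ [Sum.inl b])).Nodup →
    ∃ m, m' ++ [Sum.inl b] = subTail x (m ++ [b]) ∧ (x :: (m ++ [b])).IsChain G.Adj := by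
  have key : ∀ (x y : V) (e : Sym2 V), x ≠ y → (subdiv G).Adj (.inl x) (.inr e) →
      (subdiv G).Adj (.inr e) (.inl y) → e = s(x, y) ∧ G.Adj x y := by
    intro x y e hxy h1 h2
    have : e = s(x, y) := (Sym2.mem_and_mem_iff hxy).1 ⟨h1.1, h2.1⟩
    refine ⟨this, ?_⟩
    have h3 := h1.2
    rw [this] at h3; exact h3
  induction n with
  | zero =>
    intro x m' b hm hc hn
    have : m' = [] := List.length_eq_zero_iff.1 (by omega)
    subst this
    simp [subdiv] at hc
  | succ n ih =>
    intro x m' b hm hc hn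
    rcases m' with _ | ⟨p, m'⟩
    · simp [subdiv] at hc
    rcases p with y | e
    · simp [subdiv] at hc
    rcases m' with _ | ⟨q, m'⟩
    · simp only [List.cons_append, List.nil_append, List.isChain_cons_cons] at hc
      obtain ⟨rfl, h⟩ := key x b e (by rintro rfl; simp at hn) hc.1 hc.2.1
      exact ⟨[], by simp [subTail], by simpa using h⟩
    rcases q with y | e'
    swap
    · simp [subdiv] at hc
    simp only [List.cons_append, List.isChain_cons_cons] at hc
    obtain ⟨rfl, h⟩ := key x y e (by rintro rfl; simp at hn) hc.1 hc.2.1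
    obtain ⟨m, h1, h2⟩ := ih y m' b (by simp at hm; omega) hc.2.2
      (by simp only [List.cons_append] at hn; exact (List.nodup_cons.1 (List.nodup_cons.1 hn).2).2)
    refine ⟨y :: m, by simp [subTail, h1], ?_⟩
    simp only [List.cons_append, List.isChain_cons_cons]
    exact ⟨h, h2⟩

end subdivision

/-- The subdivision of a path of length `m` has length `2 * m`, which is at least `n` exactly if `m` is at
least `n / 2` rounded up. -/
lemma lepp_half {Γ : Type} [AddCommGroup Γ] (γ : Γ) (n : ℕ) (f : ℕ → ℕ) (h : LEPP Γ γ n f) :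
    LEPP Γ γ ((n + 1) / 2) f := by
  classical
  intro V _ G lab A k
  have conv : ∀ l', GP (subdiv G) (subLab lab) (Sum.inl '' A) γ n l' →
      ∃ l, GP G lab A γ ((n + 1) / 2) l ∧ ∀ x ∈ l, Sum.inl x ∈ l' := by
    rintro l' ⟨⟨hc, hn, a', m', b', rfl, ⟨a, ha, rfl⟩, ⟨b, hb, rfl⟩, hm⟩, hw, hl⟩
    obtain ⟨m, h1, h2⟩ := subTail_surj _ a m' b le_rfl hc hn
    obtain ⟨m'', h3, -⟩ := subTail_append a m b
    have h4 : m'' = m' := by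
      rw [h3] at h1; exact (List.append_cancel_right h1).symm
    subst h4
    have hn' : (a :: (m ++ [b])).Nodup := by
      have : ∀ (l : List V) (x : V), (Sum.inl x :: subTail x l).Nodup → (x :: l).Nodup := by
        intro l
        induction l with
        | nil => simp
        | cons y l ih =>
          intro x hx
          rw [List.nodup_cons] at hx ⊢
          refine ⟨fun h => hx.1 ((inl_mem_subTail _ _ _).2 h), ih y ?_⟩
          simp only [subTail] at hx
          exact (List.nodup_cons.1 hx.2).2
      rw [h1] at hn
      exact this _ _ hn
    rw [h1] at hw hl
    refine ⟨a :: (m ++ [b]), ⟨⟨h2, hn', a, m, b, rfl, ha, hb, fun x hx hA => ?_⟩, ?_, ?_⟩, ?_⟩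
    · refine hm (.inl x) ?_ ⟨x, hA, rfl⟩
      have : Sum.inl x ∈ m'' ++ [Sum.inl b] := by
        rw [h1, inl_mem_subTail]; simp [hx]
      simp only [List.mem_append, List.mem_singleton, Sum.inl.injEq] at this
      rcases this with h | rfl
      · exact h
      · exact absurd hn' (by simp [List.nodup_append, hx])
    · rwa [lw_subTail _ _ _ hn'] at hw
    · simp only [List.length_cons, length_subTail] at hl ⊢
      omega
    · intro x hx
      rw [h1]
      simp only [List.mem_cons, Sum.inl.injEq, inl_mem_subTail]
      simpa using hx
  rcases h (V ⊕ Sym2 V) (subdiv G) (subLab lab) (Sum.inl '' A) k with ⟨Ps, hk, hP, hd⟩ | ⟨X, hX, hh⟩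
  · left
    choose! g hg using conv
    refine ⟨Ps.map g, by simpa using hk, ?_, ?_⟩
    · intro l hl
      obtain ⟨l', h1, rfl⟩ := List.mem_map.1 hl
      exact (hg l' (hP l' h1)).1
    · rw [List.pairwise_map]
      refine hd.imp_of_mem ?_
      intro p q hp hq hpq x hx hx'
      exact hpq ((hg p (hP p hp)).2 x hx) ((hg q (hP q hq)).2 x hx')
  · right
    refine ⟨X.image (Sum.elim id fun e => e.out.1), Finset.card_image_le.trans hX, ?_⟩
    rintro l ⟨⟨hc, hn, a, m, b, rfl, ha, hb, hm⟩, hw, hl⟩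
    obtain ⟨m', h1, h2⟩ := subTail_append a m b
    have hgp : GP (subdiv G) (subLab lab) (Sum.inl '' A) γ n
        (Sum.inl a :: subTail a (m ++ [b])) := by
      refine ⟨⟨isChain_subTail _ _ hc, nodup_subTail _ _ hn, .inl a, m', .inl b, by rw [h1],
        ⟨a, ha, rfl⟩, ⟨b, hb, rfl⟩, ?_⟩, ?_, ?_⟩
      · rintro _ hx ⟨x, hxA, rfl⟩
        exact hm x (h2 x hx) hxA
      · rw [lw_subTail _ _ _ hn, hw]
      · simp only [List.length_cons, length_subTail] at hl ⊢
        omega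
    obtain ⟨p, hp, hp'⟩ := hh _ hgp
    refine ⟨_, Finset.mem_image_of_mem _ hp, ?_⟩
    rcases p with x | e
    · simpa [inl_mem_subTail] using hp'
    · simp only [List.mem_cons, reduceCtorEq, false_or] at hp'
      exact inr_mem_subTail _ _ _ hp' _ (Sym2.out_fst_mem e)

/-- Halving the length bound repeatedly brings it down to `1`, which no `A`-path violates. -/
lemma lepp_forward {Γ : Type} [AddCommGroup Γ] (γ : Γ) (n : ℕ) (f : ℕ → ℕ) (h : LEPP Γ γ n f) :
    LEPP Γ γ 1 f := by
  induction n using Nat.strong_induction_on with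
  | _ n ih =>
    rcases Nat.lt_or_ge 1 n with hn | hn
    · exact ih _ (by omega) (lepp_half γ n f h)
    · have : ∀ (V : Type) (G : SimpleGraph V) (lab : Sym2 V → Γ) (A : Set V),
          GP G lab A γ n = GP G lab A γ 1 := by
        intro V G lab A
        ext l
        constructor
        · exact fun h => ⟨h.1, h.2.1, h.1.one_lt_length⟩
        · exact fun h => ⟨h.1, h.2.1, by have := h.1.one_lt_length; omega⟩
      intro V _ G lab A k
      rw [← this]
      exact h V G lab A k

/-! ### Infinite groups: the Erdős–Pósa property fails -/

section generic
variable {Γ : Type} [AddCommGroup Γ]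

/-- In an infinite group one can label a finite set so that no nontrivial combination with
coefficients in `{-1, 0, 1}` falls into a given finite set. -/
lemma exists_generic [Infinite Γ] {T : Type} [DecidableEq T] (D : Set Γ) (hD : D.Finite)
    (s : Finset T) : ∃ x : T → Γ, ∀ ε : T → ℤ, (∀ t, ε t = 0 ∨ ε t = 1 ∨ ε t = -1) →
      (∃ t ∈ s, ε t ≠ 0) → ∑ t ∈ s, ε t • x t ∉ D := by
  induction s using Finset.induction_on with
  | empty => exact ⟨0, by simp⟩
  | insert a s ha ih =>
    obtain ⟨x, hx⟩ := ih
    -- all values taken by the combinations on `s`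
    let S : Set Γ := (fun c : T → ℤ => ∑ t ∈ s, c t • x t) ''
      {c | ∀ t, c t = 0 ∨ c t = 1 ∨ c t = -1}
    have hS : S.Finite := by
      have h1 : S ⊆ (fun c : (t : T) → t ∈ s → ℤ => ∑ t ∈ s.attach, c t.1 t.2 • x t.1) ''
          (s.pi fun _ => ({0, 1, -1} : Finset ℤ)) := by
        rintro _ ⟨c, hc, rfl⟩
        refine ⟨fun t _ => c t, ?_, ?_⟩
        · simp only [Finset.mem_coe, Finset.mem_pi]
          intro t _
          simpa using hc t
        · simp only
          rw [Finset.sum_attach s (fun t => c t • x t)]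
      exact (Set.Finite.image _ (Finset.finite_toSet _)).subset h1
    let Bad : Set Γ := (fun p : Γ × Γ => p.1 - p.2) '' (D ×ˢ S) ∪
      (fun p : Γ × Γ => p.2 - p.1) '' (D ×ˢ S)
    have hBad : Bad.Finite := ((hD.prod hS).image _).union ((hD.prod hS).image _)
    obtain ⟨y, hy⟩ := hBad.exists_notMem
    refine ⟨Function.update x a y, ?_⟩
    intro ε hε hne hmem
    rw [Finset.sum_insert ha, Function.update_self] at hmem
    have hsum : ∑ t ∈ s, ε t • Function.update x a y t = ∑ t ∈ s, ε t • x t := by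
      refine Finset.sum_congr rfl fun t ht => ?_
      rw [Function.update_of_ne (by rintro rfl; exact ha ht)]
    rw [hsum] at hmem
    have hin : ∑ t ∈ s, ε t • x t ∈ S := ⟨ε, hε, rfl⟩
    rcases hε a with h | h | h
    · rw [h, zero_smul, zero_add] at hmem
      refine hx ε hε ?_ hmem
      obtain ⟨t, ht, h'⟩ := hne
      rcases Finset.mem_insert.1 ht with rfl | ht
      · exact absurd h h'
      · exact ⟨t, ht, h'⟩
    · rw [h, one_smul] at hmem
      exact hy (.inl ⟨(_, ∑ t ∈ s, ε t • x t), ⟨hmem, hin⟩, by simp⟩)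
    · rw [h, neg_smul, one_smul] at hmem
      exact hy (.inr ⟨(_, ∑ t ∈ s, ε t • x t), ⟨hmem, hin⟩, by simp⟩)

/-- Labels on `ι × κ` with all rows summing to `γ` such that every nonempty set of sum `γ`
contains a full row. -/
lemma exists_rows [Infinite Γ] {ι κ : Type} [Fintype ι] [Fintype κ] [Nonempty κ]
    [DecidableEq ι] [DecidableEq κ] (γ : Γ) :
    ∃ x : ι × κ → Γ, (∀ i, ∑ j, x (i, j) = γ) ∧
      ∀ F : Finset (ι × κ), F.Nonempty → ∑ t ∈ F, x t = γ → ∃ i, ∀ j, (i, j) ∈ F := by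
  obtain ⟨j0⟩ := ‹Nonempty κ›
  let D : Set Γ := (fun m : ℕ => γ - m • γ) '' (Set.Iic (Fintype.card ι))
  obtain ⟨x, hx⟩ := exists_generic D ((Set.finite_Iic _).image _)
    (Finset.univ.filter fun t : ι × κ => t.2 ≠ j0)
  let y : ι × κ → Γ := fun t => if t.2 = j0 then
    γ - ∑ j ∈ Finset.univ.erase j0, x (t.1, j) else x t
  refine ⟨y, ?_, ?_⟩
  · intro i
    rw [← Finset.add_sum_erase _ _ (Finset.mem_univ j0)]
    have : ∑ j ∈ Finset.univ.erase j0, y (i, j) = ∑ j ∈ Finset.univ.erase j0, x (i, j) :=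
      Finset.sum_congr rfl fun j hj => by simp [y, (Finset.mem_erase.1 hj).1]
    rw [this]; simp [y]
  · intro F hF hsum
    by_contra! hno
    let ε : ι × κ → ℤ := fun t => (if t ∈ F then 1 else 0) - (if (t.1, j0) ∈ F then 1 else 0)
    refine hx ε ?_ ?_ ?_
    · intro t
      by_cases h1 : t ∈ F <;> by_cases h2 : (t.1, j0) ∈ F <;> simp [ε, h1, h2]
    · -- otherwise every row is contained in `F` or disjoint from it
      by_contra! hz
      obtain ⟨⟨i, j⟩, hij⟩ := hF
      have hrow : ∀ j, (i, j) ∈ F ↔ (i, j0) ∈ F := by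
        intro j
        by_cases hj : j = j0
        · rw [hj]
        · have := hz (i, j) (by simp [hj])
          by_cases h1 : (i, j) ∈ F <;> by_cases h2 : (i, j0) ∈ F <;> simp [ε, h1, h2] at this ⊢
      obtain ⟨j', hj'⟩ := hno i
      exact hj' ((hrow j').2 ((hrow j).1 hij))
    · refine ⟨(Finset.univ.filter fun i => (i, j0) ∈ F).card, ?_, ?_⟩
      · exact Finset.card_le_univ _
      · have e1 : ∑ t ∈ F, y t = ∑ i, ∑ j, if (i, j) ∈ F then y (i, j) else 0 := by
          rw [← Fintype.sum_prod_type', Finset.sum_ite_mem, Finset.univ_inter]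
        have e2 : ∀ i, (∑ j, if (i, j) ∈ F then y (i, j) else 0) =
            (if (i, j0) ∈ F then γ else 0) + ∑ j ∈ Finset.univ.erase j0, ε (i, j) • x (i, j) := by
          intro i
          rw [← Finset.add_sum_erase _ _ (Finset.mem_univ j0)]
          have : ∑ j ∈ Finset.univ.erase j0, (if (i, j) ∈ F then y (i, j) else 0) =
              ∑ j ∈ Finset.univ.erase j0, (ε (i, j) • x (i, j) +
                (if (i, j0) ∈ F then x (i, j) else 0)) := by
            refine Finset.sum_congr rfl fun j hj => ?_
            have hj' := (Finset.mem_erase.1 hj).1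
            by_cases h1 : (i, j) ∈ F <;> by_cases h2 : (i, j0) ∈ F <;> simp [ε, y, h1, h2, hj']
          rw [this, Finset.sum_add_distrib]
          by_cases h2 : (i, j0) ∈ F
          · simp only [h2, if_true, y]; abel
          · simp [h2]
        have e3 : ∑ t ∈ Finset.univ.filter (fun t : ι × κ => t.2 ≠ j0), ε t • x t =
            ∑ i, ∑ j ∈ Finset.univ.erase j0, ε (i, j) • x (i, j) := by
          rw [Finset.sum_filter, Fintype.sum_prod_type]
          refine Finset.sum_congr rfl fun i _ => ?_
          rw [← Finset.sum_filter]
          congr 1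
          ext j; simp
        rw [e1] at hsum
        simp only [e2] at hsum
        rw [Finset.sum_add_distrib, ← e3, ← Finset.sum_filter, Finset.sum_const] at hsum
        simp only
        rw [sub_eq_iff_eq_add']
        exact hsum.symm

end generic

section crossing
variable (n : ℕ)

/-- The vertices of the crossing paths: `inl (i, j)` is private to the `i`-th path, and the
`i`-th and the `j`-th path share the vertex `inr s(i, j)`. -/
abbrev CrossV : Type := (Fin n × Fin (n + 1)) ⊕ Sym2 (Fin n)

variable {n}

/-- The edges of the crossing paths. -/
def crossEdge (t : Fin n × Fin n × Bool) : Sym2 (CrossV n) :=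
  s(.inl (t.1, if t.2.2 then t.2.1.succ else t.2.1.castSucc), .inr s(t.1, t.2.1))

lemma crossEdge_injective : Function.Injective (crossEdge (n := n)) := by
  rintro ⟨i, j, b⟩ ⟨i', j', b'⟩ h
  simp only [crossEdge, Sym2.eq_iff, Sum.inl.injEq, Prod.mk.injEq, Sum.inr.injEq, reduceCtorEq,
    and_false, or_false] at h
  obtain ⟨⟨rfl, h1⟩, h2⟩ := h
  have : j = j' := by grind
  subst this
  cases b <;> cases b' <;> simp_all [Fin.ext_iff]

/-- The union of the crossing paths. -/
def crossG (n : ℕ) : SimpleGraph (CrossV n) where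
  Adj p q := s(p, q) ∈ Set.range (crossEdge (n := n))
  symm := ⟨by intro p q h; rwa [Sym2.eq_swap]⟩
  loopless := ⟨by
    rintro p ⟨t, ht⟩
    simp only [crossEdge, Sym2.eq_iff] at ht
    rcases ht with ⟨rfl, h⟩ | ⟨rfl, h⟩ <;> simp at h⟩

/-- The ends of the crossing paths. -/
def crossA (n : ℕ) : Set (CrossV n) := {p | ∃ i, p = .inl (i, 0) ∨ p = .inl (i, Fin.last n)}

variable {Γ : Type} [AddCommGroup Γ]

/-- The initial part of the `i`-th crossing path up to its `(k + 1)`-st private vertex. -/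
lemma cross_path (x : Fin n × Fin n × Bool → Γ) (lab : Sym2 (CrossV n) → Γ)
    (hlab : ∀ t, lab (crossEdge t) = x t) (i : Fin n) (k : ℕ) (hk : k < n) :
    ∃ m : List (CrossV n), (Sum.inl (i, 0) :: (m ++ [Sum.inl (i, ⟨k + 1, by omega⟩)])).IsChain
        (crossG n).Adj ∧
      (Sum.inl (i, 0) :: (m ++ [Sum.inl (i, ⟨k + 1, by omega⟩)])).Nodup ∧
      (∀ p ∈ m, (∃ j : Fin (n + 1), 0 < j.1 ∧ j.1 ≤ k ∧ p = .inl (i, j)) ∨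
        ∃ j : Fin n, j.1 ≤ k ∧ p = .inr s(i, j)) ∧
      lw lab (Sum.inl (i, 0) :: (m ++ [Sum.inl (i, ⟨k + 1, by omega⟩)])) =
        ∑ j : Fin n with j.1 ≤ k, ∑ b, x (i, j, b) := by
  have adj0 : ∀ j : Fin n, s(Sum.inl (i, j.castSucc), Sum.inr s(i, j)) = crossEdge (i, j, false) :=
    fun j => by simp [crossEdge]
  have adj1 : ∀ j : Fin n, s(Sum.inr s(i, j), Sum.inl (i, j.succ)) = crossEdge (i, j, true) :=
    fun j => by rw [Sym2.eq_swap]; simp [crossEdge]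
  induction k with
  | zero =>
    have a0 := adj0 ⟨0, hk⟩
    have a1 := adj1 ⟨0, hk⟩
    have e0 : (Fin.castSucc ⟨0, hk⟩ : Fin (n + 1)) = 0 := rfl
    have e1 : (Fin.succ ⟨0, hk⟩ : Fin (n + 1)) = ⟨0 + 1, by omega⟩ := rfl
    rw [e0] at a0
    rw [e1] at a1
    refine ⟨[Sum.inr s(i, ⟨0, hk⟩)], ?_, ?_, ?_, ?_⟩
    · simp only [List.cons_append, List.nil_append, List.isChain_cons_cons]
      exact ⟨⟨_, a0.symm⟩, ⟨_, a1.symm⟩, by simp⟩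
    · simp [Fin.ext_iff]
    · intro p hp
      right
      exact ⟨⟨0, hk⟩, by simp, by simpa using hp⟩
    · simp only [List.cons_append, List.nil_append, lw_cons_cons, lw_single, add_zero]
      rw [a0, a1, hlab, hlab]
      have : (Finset.univ.filter fun j : Fin n => j.1 ≤ 0) = {⟨0, hk⟩} := by
        ext j; simp [Fin.ext_iff]
      rw [this]; simp [add_comm]
  | succ k ih =>
    obtain ⟨m, h1, h2, h3, h4⟩ := ih (by omega)
    have a0 := adj0 ⟨k + 1, hk⟩
    have a1 := adj1 ⟨k + 1, hk⟩
    have e0 : (Fin.castSucc ⟨k + 1, hk⟩ : Fin (n + 1)) = ⟨k + 1, by omega⟩ := rfl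
    have e1 : (Fin.succ ⟨k + 1, hk⟩ : Fin (n + 1)) = ⟨k + 1 + 1, by omega⟩ := rfl
    rw [e0] at a0
    rw [e1] at a1
    refine ⟨m ++ [Sum.inl (i, ⟨k + 1, by omega⟩), Sum.inr s(i, ⟨k + 1, hk⟩)], ?_, ?_, ?_, ?_⟩
    · rw [List.append_assoc, ← List.cons_append]
      simp only [List.cons_append, List.nil_append]
      rw [← List.cons_append, List.isChain_split]
      refine ⟨h1, ?_⟩
      simp only [List.isChain_cons_cons]
      exact ⟨⟨_, a0.symm⟩, ⟨_, a1.symm⟩, by simp⟩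
    · have hm : ∀ p ∈ (Sum.inl (i, 0) :: (m ++ [Sum.inl (i, ⟨k + 1, by omega⟩)]) : List (CrossV n)),
          p ≠ Sum.inl (i, ⟨k + 1 + 1, by omega⟩) ∧ p ≠ Sum.inr s(i, ⟨k + 1, hk⟩) := by
        intro p hp
        simp only [List.mem_cons, List.mem_append, List.not_mem_nil, or_false] at hp
        rcases hp with rfl | hp | rfl
        · simp [Fin.ext_iff]
        · rcases h3 p hp with ⟨j, _, hj, rfl⟩ | ⟨j, hj, rfl⟩
          · simp [Fin.ext_iff]; omega
          · have : j ≠ ⟨k + 1, hk⟩ := by simp [Fin.ext_iff]; omega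
            refine ⟨by simp, fun h => this ?_⟩
            rw [Sum.inr.injEq, Sym2.eq_iff] at h
            grind
        · simp [Fin.ext_iff]
      have e : (Sum.inl (i, 0) :: (m ++ [Sum.inl (i, ⟨k + 1, by omega⟩), Sum.inr s(i, ⟨k + 1, hk⟩)] ++
          [Sum.inl (i, ⟨k + 1 + 1, by omega⟩)]) : List (CrossV n)) =
          (Sum.inl (i, 0) :: (m ++ [Sum.inl (i, ⟨k + 1, by omega⟩)])) ++
            [Sum.inr s(i, ⟨k + 1, hk⟩), Sum.inl (i, ⟨k + 1 + 1, by omega⟩)] := by simp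
      rw [e, List.nodup_append]
      refine ⟨h2, by simp, ?_⟩
      intro p hp q hq
      simp only [List.mem_cons, List.not_mem_nil, or_false] at hq
      rcases hq with rfl | rfl
      · exact (hm p hp).2
      · exact (hm p hp).1
    · intro p hp
      simp only [List.mem_append, List.mem_cons, List.not_mem_nil, or_false] at hp
      rcases hp with hp | rfl | rfl
      · rcases h3 p hp with ⟨j, h0, hj, rfl⟩ | ⟨j, hj, rfl⟩
        · exact .inl ⟨j, h0, by omega, rfl⟩
        · exact .inr ⟨j, by omega, rfl⟩
      · exact .inl ⟨_, by simp, by simp, rfl⟩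
      · exact .inr ⟨⟨k + 1, hk⟩, by simp, rfl⟩
    · rw [List.append_assoc]
      simp only [List.cons_append, List.nil_append]
      rw [← List.cons_append, lw_append_cons, List.cons_append, h4]
      simp only [lw_cons_cons, lw_single, add_zero]
      rw [a0, a1, hlab, hlab]
      have : (Finset.univ.filter fun j : Fin n => j.1 ≤ k + 1) =
          insert ⟨k + 1, hk⟩ (Finset.univ.filter fun j : Fin n => j.1 ≤ k) := by
        ext j; simp [Fin.ext_iff]; omega
      rw [this, Finset.sum_insert (by simp)]
      simp only [Fintype.sum_bool]
      abel

end crossing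

/-- Any two of the `n` crossing paths share a vertex, every vertex lies on at most two of them, and
every path of weight `γ` contains the shared vertices of one of them. Hence no two disjoint paths of
weight `γ` exist, and a hitting set has at least `n / 2` vertices. -/
lemma not_lepp_of_infinite {Γ : Type} [AddCommGroup Γ] [Infinite Γ] (γ : Γ) (f : ℕ → ℕ) :
    ¬ LEPP Γ γ 1 f := by
  classical
  intro h
  obtain ⟨n, hn⟩ : ∃ n, n = 2 * f 2 + 1 := ⟨_, rfl⟩
  have : NeZero n := ⟨by omega⟩
  obtain ⟨x, hx1, hx2⟩ := exists_rows (ι := Fin n) (κ := Fin n × Bool) γ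
  let lab : Sym2 (CrossV n) → Γ := Function.extend crossEdge x 0
  have hlab : ∀ t, lab (crossEdge t) = x t := crossEdge_injective.extend_apply x 0
  rcases h (CrossV n) (crossG n) lab (crossA n) 2 with ⟨Ps, h2, hP, hd⟩ | ⟨X, hX, hh⟩
  · -- every path of weight `γ` contains all shared vertices of one of the crossing paths
    have key : ∀ l, GP (crossG n) lab (crossA n) γ 1 l → ∃ i, ∀ j, Sum.inr s(i, j) ∈ l := by
      intro l hl
      obtain ⟨P, rfl⟩ := isAP_exists hl.1
      have hedge : ∀ e ∈ P.walk.edges, e ∈ Set.range (crossEdge (n := n)) := by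
        intro e he
        have := P.walk.edges_subset_edgeSet he
        induction e with | _ p q => exact this
      have hw := hl.2.1
      rw [lw_support, ← List.sum_toFinset lab P.isPath.isTrail.edges_nodup] at hw
      let F : Finset (Fin n × Fin n × Bool) := Finset.univ.filter fun t =>
        crossEdge t ∈ P.walk.edges
      have hF : P.walk.edges.toFinset = F.image crossEdge := by
        ext e
        simp only [List.mem_toFinset, Finset.mem_image, F, Finset.mem_filter, Finset.mem_univ,
          true_and]
        constructor
        · intro he
          obtain ⟨t, rfl⟩ := hedge e he
          exact ⟨t, he, rfl⟩
        · rintro ⟨t, ht, rfl⟩; exact ht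
      rw [hF, Finset.sum_image (crossEdge_injective.injOn)] at hw
      rw [Finset.sum_congr rfl fun t _ => hlab t] at hw
      have hne : F.Nonempty := by
        rw [← Finset.image_nonempty (f := crossEdge), ← hF, List.toFinset_nonempty_iff]
        intro h0
        have := hl.2.2
        rw [Walk.length_support, ← Walk.length_edges, h0] at this
        simp at this
      obtain ⟨i, hi⟩ := hx2 F hne hw
      refine ⟨i, fun j => ?_⟩
      have := (Finset.mem_filter.1 (hi (j, false))).2
      exact P.walk.snd_mem_support_of_mem_edges this
    obtain ⟨l1, l2, rfl⟩ := List.length_eq_two.1 h2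
    obtain ⟨i, hi⟩ := key l1 (hP _ (by simp))
    obtain ⟨j, hj⟩ := key l2 (hP _ (by simp))
    have hdis : l1.Disjoint l2 := by simpa using hd
    refine hdis (hi j) ?_
    rw [Sym2.eq_swap]; exact hj i
  · -- every vertex lies on at most two of the crossing paths
    have key : ∀ i : Fin n, ∃ p ∈ X, (∃ j, p = Sum.inl (i, j)) ∨ ∃ j, p = Sum.inr s(i, j) := by
      intro i
      obtain ⟨m, h1, h2, h3, h4⟩ := cross_path x lab hlab i (n - 1) (by omega)
      have hlast : (⟨n - 1 + 1, by omega⟩ : Fin (n + 1)) = Fin.last n := by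
        simp [Fin.ext_iff]; omega
      rw [hlast] at h1 h2 h4
      obtain ⟨p, hp, hp'⟩ := hh _ ⟨⟨h1, h2, _, m, _, rfl, ⟨i, .inl rfl⟩, ⟨i, .inr rfl⟩, by
        rintro p hp ⟨i', hi'⟩
        rcases h3 p hp with ⟨j, h0, hj, rfl⟩ | ⟨j, hj, rfl⟩
        · rcases hi' with hi' | hi' <;> rw [Sum.inl.injEq, Prod.mk.injEq] at hi' <;>
            have := congrArg Fin.val hi'.2 <;>
            simp only [Fin.coe_ofNat_eq_mod, Nat.zero_mod, Fin.val_last] at this <;> omega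
        · simp at hi'⟩, by
        rw [h4, ← hx1 i, Fintype.sum_prod_type]
        refine Finset.sum_congr ?_ fun _ _ => rfl
        ext j; simp; omega, by simp⟩
      refine ⟨p, hp, ?_⟩
      simp only [List.mem_cons, List.mem_append, List.not_mem_nil, or_false] at hp'
      rcases hp' with rfl | hp' | rfl
      · exact .inl ⟨_, rfl⟩
      · rcases h3 p hp' with ⟨j, _, _, rfl⟩ | ⟨j, _, rfl⟩
        · exact .inl ⟨_, rfl⟩
        · exact .inr ⟨_, rfl⟩
      · exact .inl ⟨_, rfl⟩
    choose g hgX hg using key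
    have hcard := Finset.card_le_mul_card_image_of_maps_to (s := (Finset.univ : Finset (Fin n)))
      (t := X) (f := g) (fun i _ => hgX i) 2 (by
        intro p hp
        rcases p with ⟨i, j⟩ | e
        · refine (Finset.card_le_card (t := {i}) ?_).trans (by simp)
          intro i' hi'
          have h1 := (Finset.mem_filter.1 hi').2
          have h2 := hg i'
          rw [h1] at h2
          simp at h2
          simp [h2]
        · induction e with | _ a b =>
          refine (Finset.card_le_card (t := {a, b}) ?_).trans Finset.card_le_two
          intro i' hi'
          have h1 := (Finset.mem_filter.1 hi').2
          have h2 := hg i'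
          rw [h1] at h2
          simp only [reduceCtorEq, exists_const, Sum.inr.injEq, false_or] at h2
          obtain ⟨j, hj⟩ := h2
          simp only [Finset.mem_insert, Finset.mem_singleton]
          have : i' ∈ s(a, b) := by rw [hj]; simp
          simpa using this)
    simp only [Finset.card_univ, Fintype.card_fin] at hcard
    omega

/-! ### Menger's theorem -/

/-- `l` is the vertex list of a walk from `a` to `b` along the relation `R`. -/
def Conn {V : Type} (R : V → V → Prop) (a b : V) (l : List V) : Prop :=
  l.IsChain R ∧ l.head? = some a ∧ l.getLast? = some b

section conn
variable {V : Type} {R : V → V → Prop} {a b c : V} {l l' : List V}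

lemma Conn.ne_nil (h : Conn R a b l) : l ≠ [] := by
  rintro rfl; simpa using h.2.1

lemma Conn.eq_cons (h : Conn R a b l) : ∃ t, l = a :: t := by
  obtain ⟨-, h, -⟩ := h
  cases l with
  | nil => simp at h
  | cons x t => simp at h; exact ⟨t, by rw [h]⟩

lemma Conn.eq_concat (h : Conn R a b l) : ∃ t, l = t ++ [b] := by
  obtain ⟨-, -, h⟩ := h
  exact ⟨l.dropLast, (List.dropLast_append_getLast? b h).symm⟩

lemma Conn.head_mem (h : Conn R a b l) : a ∈ l := List.mem_of_head? h.2.1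
lemma Conn.last_mem (h : Conn R a b l) : b ∈ l := List.mem_of_getLast? h.2.2

lemma Conn.mono {R' : V → V → Prop} (h : Conn R a b l) (hR : ∀ x y, R x y → R' x y) :
    Conn R' a b l := ⟨h.1.imp hR, h.2⟩

lemma Conn.single (a : V) : Conn R a a [a] := by simp [Conn]

lemma Conn.reverse (h : Conn R a b l) : Conn (fun x y => R y x) b a l.reverse :=
  ⟨List.isChain_reverse.2 h.1, by simp [h.2.2], by simp [h.2.1]⟩

/-- Splitting a walk at one of its vertices. -/
lemma Conn.split (h : Conn R a b l) {s t : List V} (e : l = s ++ c :: t) :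
    Conn R a c (s ++ [c]) ∧ Conn R c b (c :: t) := by
  subst e
  obtain ⟨h1, h2, h3⟩ := h
  rw [List.isChain_split] at h1
  refine ⟨⟨h1.1, ?_, by simp⟩, ⟨h1.2, by simp, ?_⟩⟩
  · cases s <;> simpa using h2
  · rwa [List.getLast?_append_of_ne_nil _ (by simp)] at h3

/-- Joining two walks at a common end. -/
lemma Conn.join {s t : List V} (h : Conn R a c (s ++ [c])) (h' : Conn R c b (c :: t)) :
    Conn R a b (s ++ c :: t) := by
  refine ⟨List.isChain_split.2 ⟨h.1, h'.1⟩, ?_, ?_⟩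
  · have := h.2.1; cases s <;> simpa using this
  · rw [List.getLast?_append_of_ne_nil _ (by simp)]; exact h'.2.2

/-- Joining two walks by an edge. -/
lemma Conn.join_edge {d : V} {s t : List V} (h : Conn R a c s) (h' : Conn R d b t) (hcd : R c d) :
    Conn R a b (s ++ t) := by
  refine ⟨List.isChain_append.2 ⟨h.1, h'.1, ?_⟩, ?_, ?_⟩
  · intro x hx y hy
    rw [h.2.2] at hx; rw [h'.2.1] at hy
    simp at hx hy; subst hx hy; exact hcd
  · rw [List.head?_append_of_ne_nil _ h.ne_nil, h.2.1]
  · rw [List.getLast?_append_of_ne_nil _ h'.ne_nil]; exact h'.2.2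

lemma Conn.cons {d : V} (h : Conn R a b l) (hd : R d a) : Conn R d b (d :: l) :=
  Conn.join_edge (Conn.single d) h hd

lemma exists_nodup_conn (h : Conn R a b l) :
    ∃ l', Conn R a b l' ∧ l'.Nodup ∧ l' ⊆ l := by
  classical
  induction l generalizing a with
  | nil => exact absurd rfl h.ne_nil
  | cons x t ih =>
    obtain ⟨hc, hh, hl⟩ := h
    simp at hh; subst hh
    rcases t with _ | ⟨y, t⟩
    · simp at hl; subst hl; exact ⟨[x], Conn.single x, by simp, by simp⟩
    rw [List.isChain_cons_cons] at hc
    obtain ⟨l', h1, h2, h3⟩ := ih (a := y) ⟨hc.2, by simp, by simpa using hl⟩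
    by_cases hx : x ∈ l'
    · obtain ⟨s, r, rfl⟩ := List.append_of_mem hx
      refine ⟨x :: r, (h1.split rfl).2, (List.nodup_append.1 h2).2.1, ?_⟩
      intro z hz
      exact List.mem_cons_of_mem _ (h3 (List.mem_append_right _ hz))
    · refine ⟨x :: l', h1.cons hc.1, List.nodup_cons.2 ⟨hx, h2⟩, ?_⟩
      exact List.cons_subset_cons _ h3

/-- The first vertex of a list satisfying `p`. -/
lemma exists_first (p : V → Prop) (l : List V) (h : ∃ x ∈ l, p x) :
    ∃ s x t, l = s ++ x :: t ∧ p x ∧ ∀ y ∈ s, ¬ p y := by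
  classical
  induction l with
  | nil => simp at h
  | cons z l ih =>
    by_cases hz : p z
    · exact ⟨[], z, l, rfl, hz, by simp⟩
    · obtain ⟨s, x, t, rfl, h1, h2⟩ := ih (by simpa [hz] using h)
      exact ⟨z :: s, x, t, rfl, h1, by simpa [hz] using h2⟩

/-- The last vertex of a list satisfying `p`. -/
lemma exists_last (p : V → Prop) (l : List V) (h : ∃ x ∈ l, p x) :
    ∃ s x t, l = s ++ x :: t ∧ p x ∧ ∀ y ∈ t, ¬ p y := by
  obtain ⟨s, x, t, e, h1, h2⟩ := exists_first p l.reverse (by simpa using h)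
  refine ⟨t.reverse, x, s.reverse, ?_, h1, by simpa using h2⟩
  have := congrArg List.reverse e
  simpa using this

end conn

lemma disjoint_of_mem {V : Type} {Ps : List (List V)} (h : Ps.Pairwise List.Disjoint)
    {l l' : List V} (hl : l ∈ Ps) (hl' : l' ∈ Ps) (hne : l ≠ l') : l.Disjoint l' := by
  have : Std.Symm (List.Disjoint : List V → List V → Prop) := ⟨fun _ _ h => h.symm⟩
  exact h.forall hl hl' hne

section menger
set_option linter.unusedSectionVars false
variable {V : Type} [DecidableEq V]

/-- `X` meets every walk from `S` to `T`. -/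
def Sep (R : V → V → Prop) (S T X : Finset V) : Prop :=
  ∀ a ∈ S, ∀ b ∈ T, ∀ l, Conn R a b l → ∃ x ∈ X, x ∈ l

/-- `Ps` is a list of `n` disjoint paths from `S` to `T`. -/
def Linkage (R : V → V → Prop) (S T : Finset V) (n : ℕ) (Ps : List (List V)) : Prop :=
  Ps.length = n ∧ (∀ l ∈ Ps, l.Nodup ∧ ∃ a ∈ S, ∃ b ∈ T, Conn R a b l) ∧ Ps.Pairwise List.Disjoint

lemma Linkage.symm {R : V → V → Prop} {S T : Finset V} {n : ℕ} {Ps : List (List V)}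
    (h : Linkage R S T n Ps) : Linkage (fun x y => R y x) T S n (Ps.map List.reverse) := by
  refine ⟨by simpa using h.1, ?_, ?_⟩
  · intro l hl
    obtain ⟨l, hl', rfl⟩ := List.mem_map.1 hl
    obtain ⟨h1, a, ha, b, hb, h2⟩ := h.2.1 l hl'
    exact ⟨List.nodup_reverse.2 h1, b, hb, a, ha, h2.reverse⟩
  · rw [List.pairwise_map]
    exact h.2.2.imp fun h x => by simpa using @h x

/-- A linkage of full size covers all vertices of the target set, each path containing just
one of them. -/
lemma Linkage.index {R : V → V → Prop} {S T : Finset V} {n : ℕ} {Ps : List (List V)}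
    (h : Linkage R S T n Ps) (hT : T.card ≤ n) :
    ∃ g : V → List V, (∀ b ∈ T, (g b).Nodup ∧ (∃ a ∈ S, Conn R a b (g b)) ∧
      ∀ x ∈ g b, x ∈ T → x = b) ∧
      ∀ b ∈ T, ∀ c ∈ T, b ≠ c → (g b).Disjoint (g c) := by
  obtain ⟨h1, h2, h3⟩ := h
  have hall : ∀ l ∈ Ps, ∀ l' ∈ Ps, l ≠ l' → l.Disjoint l' :=
    fun l hl l' hl' hne => disjoint_of_mem h3 hl hl' hne
  rcases isEmpty_or_nonempty V with hV | hV
  · exact ⟨fun _ => [], fun b => isEmptyElim b, fun b => isEmptyElim b⟩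
  choose! a ha b hb hab using fun l hl => (h2 l hl).2
  have hnd : Ps.Nodup := by
    refine (h3.and (List.pairwise_of_forall_mem_list (r := fun l _ => l ≠ [])
      fun l hl _ _ => (hab l hl).ne_nil)).imp ?_
    rintro l l' ⟨h, h'⟩ rfl
    obtain ⟨x, hx⟩ := List.exists_mem_of_ne_nil _ h'
    exact h hx hx
  have hinj : Set.InjOn b (Ps.toFinset : Set (List V)) := by
    intro l hl l' hl' e
    by_contra hne
    simp only [List.coe_toFinset, Set.mem_ofPred_eq] at hl hl'
    refine hall l hl l' hl' hne (hab l hl).last_mem ?_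
    rw [e]; exact (hab l' hl').last_mem
  have himg : Ps.toFinset.image b = T := by
    refine Finset.eq_of_subset_of_card_le ?_ ?_
    · intro x hx
      obtain ⟨l, hl, rfl⟩ := Finset.mem_image.1 hx
      exact hb l (by simpa using hl)
    · rw [Finset.card_image_of_injOn hinj, List.toFinset_card_of_nodup hnd]; omega
  have hsurj : ∀ t ∈ T, ∃ l ∈ Ps, b l = t := by
    intro t ht
    rw [← himg] at ht
    obtain ⟨l, hl, rfl⟩ := Finset.mem_image.1 ht
    exact ⟨l, by simpa using hl, rfl⟩
  choose! g hg hgb using hsurj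
  have hgd : ∀ t ∈ T, ∀ t' ∈ T, t ≠ t' → (g t).Disjoint (g t') := by
    intro t ht t' ht' hne
    refine hall _ (hg t ht) _ (hg t' ht') ?_
    intro e
    exact hne (by rw [← hgb t ht, e, hgb t' ht'])
  have hc : ∀ t ∈ T, Conn R (a (g t)) t (g t) := by
    intro t ht
    have := hab _ (hg t ht)
    rwa [hgb t ht] at this
  refine ⟨g, fun t ht => ⟨(h2 _ (hg t ht)).1, ⟨_, ha _ (hg t ht), hc t ht⟩, ?_⟩, hgd⟩
  intro x hx hxT
  by_contra hne
  exact hgd t ht x hxT (Ne.symm hne) hx (hc x hxT).last_mem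

/-- The walk of a chain avoiding the source of an edge does not use this edge, except possibly
at its end. -/
lemma isChain_erase_source {E : Finset (V × V)} {x y : V} {s : List V} {c : V}
    (h : (s ++ [c]).IsChain fun a b => (a, b) ∈ E) (hx : x ∉ s) :
    (s ++ [c]).IsChain fun a b => (a, b) ∈ E.erase (x, y) := by
  induction s with
  | nil => simp
  | cons z s ih =>
    simp only [List.mem_cons, not_or] at hx
    have h2 := ih (by simpa using h.tail) hx.2
    cases s with
    | nil =>
      simp only [List.cons_append, List.nil_append, List.isChain_cons_cons] at h ⊢
      refine ⟨Finset.mem_erase.2 ⟨?_, h.1⟩, by simp⟩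
      simp [Ne.symm hx.1]
    | cons w s =>
      simp only [List.cons_append, List.isChain_cons_cons] at h h2 ⊢
      refine ⟨Finset.mem_erase.2 ⟨?_, h.1⟩, h2⟩
      simp [Ne.symm hx.1]

lemma isChain_erase_target {E : Finset (V × V)} {x y : V} {t : List V} {c : V}
    (h : (c :: t).IsChain fun a b => (a, b) ∈ E) (hy : y ∉ t) :
    (c :: t).IsChain fun a b => (a, b) ∈ E.erase (x, y) := by
  induction t generalizing c with
  | nil => simp
  | cons z t ih =>
    simp only [List.mem_cons, not_or] at hy
    rw [List.isChain_cons_cons] at h ⊢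
    refine ⟨Finset.mem_erase.2 ⟨?_, h.1⟩, ih h.2 hy.2⟩
    simp [Ne.symm hy.1]

/-- Menger's theorem for digraphs, by Göring's argument of deleting an arc. -/
lemma menger_aux (n m : ℕ) : ∀ (E : Finset (V × V)) (S T : Finset V), E.card = m →
    (∀ X, Sep (fun a b => (a, b) ∈ E) S T X → n ≤ X.card) →
    ∃ Ps, Linkage (fun a b => (a, b) ∈ E) S T n Ps := by
  induction m with
  | zero =>
    intro E S T hE hsep
    have hE' : E = ∅ := Finset.card_eq_zero.1 hE
    subst hE'
    have : n ≤ (S ∩ T).card := by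
      refine hsep _ ?_
      intro a ha b hb l hl
      obtain ⟨t, rfl⟩ := hl.eq_cons
      rcases t with _ | ⟨y, t⟩
      · have := hl.2.2
        simp at this; subst this
        exact ⟨a, by simp [ha, hb], by simp⟩
      · exact absurd hl.1 (by simp)
    obtain ⟨U, hU, hUc⟩ := Finset.exists_subset_card_eq this
    refine ⟨U.toList.map fun x => [x], by simp [hUc], ?_, ?_⟩
    · intro l hl
      obtain ⟨x, hx, rfl⟩ := List.mem_map.1 hl
      have := hU (Finset.mem_toList.1 hx)
      rw [Finset.mem_inter] at this
      exact ⟨by simp, x, this.1, x, this.2, Conn.single x⟩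
    · rw [List.pairwise_map]
      refine U.nodup_toList.imp ?_
      intro a b h
      simpa using fun e => h e.symm
  | succ m ih =>
    intro E S T hE hsep
    obtain ⟨⟨x, y⟩, hxy⟩ : E.Nonempty := Finset.card_pos.1 (by omega)
    have hE' : (E.erase (x, y)).card = m := by rw [Finset.card_erase_of_mem hxy]; omega
    set E' := E.erase (x, y) with hE'def
    have hmono : ∀ a b, (a, b) ∈ E' → (a, b) ∈ E := fun a b h => Finset.mem_of_mem_erase h
    by_cases hs : ∀ X, Sep (fun a b => (a, b) ∈ E') S T X → n ≤ X.card
    · obtain ⟨Ps, h1, h2, h3⟩ := ih E' S T hE' hs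
      refine ⟨Ps, h1, fun l hl => ?_, h3⟩
      obtain ⟨h4, a, ha, b, hb, h5⟩ := h2 l hl
      exact ⟨h4, a, ha, b, hb, h5.mono hmono⟩
    push Not at hs
    obtain ⟨Z, hZ, hZc⟩ := hs
    -- `Z` together with either end of the arc separates in the whole digraph
    have hZx : Sep (fun a b => (a, b) ∈ E) S T (insert x Z) := by
      intro a ha b hb l hl
      by_cases hx : x ∈ l
      · exact ⟨x, by simp, hx⟩
      · obtain ⟨t, rfl⟩ := hl.eq_concat
        obtain ⟨z, hz, hz'⟩ := hZ a ha b hb _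
          ⟨isChain_erase_source (x := x) (y := y) hl.1 fun h => hx (by simp [h]), hl.2⟩
        exact ⟨z, by simp [hz], hz'⟩
    have hZy : Sep (fun a b => (a, b) ∈ E) S T (insert y Z) := by
      intro a ha b hb l hl
      by_cases hy : y ∈ l
      · exact ⟨y, by simp, hy⟩
      · obtain ⟨t, rfl⟩ := hl.eq_cons
        obtain ⟨z, hz, hz'⟩ := hZ a ha b hb _
          ⟨isChain_erase_target (x := x) (y := y) hl.1 fun h => hy (by simp [h]), hl.2⟩
        exact ⟨z, by simp [hz], hz'⟩
    have hx := hsep _ hZx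
    have hy := hsep _ hZy
    have hcx := Finset.card_insert_le x Z
    have hcy := Finset.card_insert_le y Z
    have hxZ : x ∉ Z := fun h => by rw [Finset.insert_eq_of_mem h] at hx; omega
    have hyZ : y ∉ Z := fun h => by rw [Finset.insert_eq_of_mem h] at hy; omega
    obtain ⟨Ps, hPs⟩ := ih E' S (insert x Z) hE' (by
      intro X hX
      refine hsep X ?_
      intro a ha b hb l hl
      obtain ⟨s, c, t, rfl, hc, hs⟩ := exists_first (· ∈ insert x Z) l (by
        obtain ⟨z, hz, hz'⟩ := hZx a ha b hb l hl; exact ⟨z, hz', hz⟩)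
      have h1 := (hl.split rfl).1
      obtain ⟨z, hz, hz'⟩ := hX a ha c hc (s ++ [c])
        ⟨isChain_erase_source h1.1 fun h => hs x h (by simp), h1.2⟩
      refine ⟨z, hz, ?_⟩
      simp at hz' ⊢; tauto)
    obtain ⟨Qs, hQs⟩ := ih E' (insert y Z) T hE' (by
      intro X hX
      refine hsep X ?_
      intro a ha b hb l hl
      obtain ⟨s, c, t, rfl, hc, hs⟩ := exists_last (· ∈ insert y Z) l (by
        obtain ⟨z, hz, hz'⟩ := hZy a ha b hb l hl; exact ⟨z, hz', hz⟩)
      have h1 := (hl.split rfl).2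
      obtain ⟨z, hz, hz'⟩ := hX c hc b hb (c :: t)
        ⟨isChain_erase_target h1.1 fun h => hs y h (by simp), h1.2⟩
      exact ⟨z, hz, by simp at hz' ⊢; tauto⟩)
    obtain ⟨P, hP, hPd⟩ := hPs.index (by omega)
    obtain ⟨Q', hQ', hQd'⟩ := hQs.symm.index (by omega)
    let Q : V → List V := fun b => (Q' b).reverse
    have hQ : ∀ b ∈ insert y Z, (Q b).Nodup ∧ (∃ c ∈ T, Conn (fun a b => (a, b) ∈ E') b c (Q b)) ∧
        ∀ x ∈ Q b, x ∈ insert y Z → x = b := by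
      intro b hb
      obtain ⟨h1, ⟨c, hc, h2⟩, h3⟩ := hQ' b hb
      exact ⟨List.nodup_reverse.2 h1, ⟨c, hc, h2.reverse⟩, fun z hz => h3 z (by simpa [Q] using hz)⟩
    have hQd : ∀ b ∈ insert y Z, ∀ c ∈ insert y Z, b ≠ c → (Q b).Disjoint (Q c) := by
      intro b hb c hc hbc z h1 h2
      exact hQd' b hb c hc hbc (by simpa [Q] using h1) (by simpa [Q] using h2)
    -- a path to `Z + x` and a path from `Z + y` meet only in `Z`
    have hPQ : ∀ b ∈ insert x Z, ∀ c ∈ insert y Z, ∀ z, z ∈ P b → z ∈ Q c → z ∈ Z ∧ z = b ∧ z = c := by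
      intro b hb c hc z hzP hzQ
      obtain ⟨hP1, ⟨a, ha, hP2⟩, hP3⟩ := hP b hb
      obtain ⟨hQ1, ⟨d, hd, hQ2⟩, hQ3⟩ := hQ c hc
      by_cases hzZ : z ∈ Z
      · exact ⟨hzZ, hP3 z hzP (by simp [hzZ]), hQ3 z hzQ (by simp [hzZ])⟩
      exfalso
      obtain ⟨s, t, es⟩ := List.append_of_mem hzP
      obtain ⟨s', t', es'⟩ := List.append_of_mem hzQ
      have hj := ((hP2.split es).1).join (hQ2.split es').2
      obtain ⟨w, hw, hw'⟩ := hZ a ha d hd _ hj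
      have hwz : w ≠ z := fun h => hzZ (h ▸ hw)
      simp only [List.mem_append, List.mem_cons] at hw'
      rcases hw' with hw' | hw' | hw'
      · have hwb := hP3 w (by rw [es]; simp [hw']) (by simp [hw])
        obtain ⟨r, er⟩ := hP2.eq_concat
        rw [es] at hP1 er
        rw [List.nodup_append] at hP1
        have hb' : b ∈ z :: t := by
          have : (s ++ z :: t).getLast? = some b := by rw [er]; simp
          rw [List.getLast?_append_of_ne_nil _ (by simp)] at this
          exact List.mem_of_getLast? this
        exact hP1.2.2 w hw' b hb' hwb
      · exact hwz hw'
      · have hwc := hQ3 w (by rw [es']; simp [hw']) (by simp [hw])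
        obtain ⟨r, er⟩ := hQ2.eq_cons
        rw [es'] at hQ1 er
        rw [List.nodup_append] at hQ1
        rcases s' with _ | ⟨q, s'⟩
        · simp at er
          have hn := hQ1.2.1
          rw [List.nodup_cons, er.1, ← hwc] at hn
          exact hn.1 hw'
        · simp only [List.cons_append, List.cons.injEq] at er
          refine hQ1.2.2 c (by simp [er.1]) w (by simp [hw']) hwc.symm
    let N : V → List V := fun z => if z = x then P x ++ Q y else P z ++ (Q z).tail
    have hNmem : ∀ z ∈ insert x Z, ∀ w ∈ N z, w ∈ P z ∨ (w ∈ Q (if z = x then y else z)) := by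
      intro z hz w hw
      simp only [N] at hw
      split_ifs at hw with h
      · subst h; simpa using hw
      · simp only [List.mem_append] at hw
        simp only [h, if_false]
        exact hw.imp id List.mem_of_mem_tail
    have hf : ∀ z ∈ insert x Z, (if z = x then y else z) ∈ insert y Z := by
      intro z hz
      split_ifs with h
      · simp
      · simp only [Finset.mem_insert, h, false_or] at hz; simp [hz]
    have hfi : ∀ z ∈ insert x Z, ∀ w ∈ insert x Z, z ≠ w →
        (if z = x then y else z) ≠ (if w = x then y else w) := by
      intro z hz w hw hne
      simp only [Finset.mem_insert] at hz hw
      split_ifs with h1 h2 h2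
      · exact absurd (h1.trans h2.symm) hne
      · rintro rfl; tauto
      · rintro rfl; tauto
      · exact hne
    refine ⟨(insert x Z).toList.map N, ?_, ?_, ?_⟩
    · simp only [List.length_map, Finset.length_toList]; omega
    · intro l hl
      obtain ⟨z, hz, rfl⟩ := List.mem_map.1 hl
      rw [Finset.mem_toList] at hz
      obtain ⟨hP1, ⟨a, ha, hP2⟩, hP3⟩ := hP z hz
      by_cases h : z = x
      · subst h
        obtain ⟨hQ1, ⟨d, hd, hQ2⟩, hQ3⟩ := hQ y (by simp)
        refine ⟨?_, a, ha, d, hd, ?_⟩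
        · simp only [N, if_true]
          rw [List.nodup_append]
          refine ⟨hP1, hQ1, ?_⟩
          rintro w hw w' hw' rfl
          obtain ⟨h1, h2, -⟩ := hPQ z hz y (by simp) w hw hw'
          exact hxZ (h2 ▸ h1)
        · simp only [N, if_true]
          exact (hP2.mono hmono).join_edge (hQ2.mono hmono) hxy
      · have hzZ : z ∈ Z := by simpa [h] using hz
        obtain ⟨hQ1, ⟨d, hd, hQ2⟩, hQ3⟩ := hQ z (by simp [hzZ])
        obtain ⟨r, er⟩ := hQ2.eq_cons
        obtain ⟨r', er'⟩ := hP2.eq_concat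
        simp only [N, h, if_false]
        rw [er] at hQ2 hQ1 ⊢
        refine ⟨?_, a, ha, d, hd, ?_⟩
        · rw [List.nodup_append]
          refine ⟨hP1, (List.nodup_cons.1 hQ1).2, ?_⟩
          rintro w hw w' hw' rfl
          obtain ⟨-, -, h2⟩ := hPQ z hz z (by simp [hzZ]) w hw (by rw [er]; simpa using .inr hw')
          subst h2
          exact (List.nodup_cons.1 hQ1).1 hw'
        · rw [er'] at hP2 ⊢
          have := (hP2.mono hmono).join (hQ2.mono hmono)
          simpa using this
    · rw [List.pairwise_map]
      refine (Finset.nodup_toList (insert x Z)).imp_of_mem ?_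
      intro z w hz hw hne v hv hv'
      rw [Finset.mem_toList] at hz hw
      rcases hNmem z hz v hv with h1 | h1 <;> rcases hNmem w hw v hv' with h2 | h2
      · exact hPd z hz w hw hne h1 h2
      · obtain ⟨h3, h4, h5⟩ := hPQ z hz _ (hf w hw) v h1 h2
        split_ifs at h5 with h
        · exact hyZ (h5 ▸ h3)
        · exact hne (h4.symm.trans h5)
      · obtain ⟨h3, h4, h5⟩ := hPQ w hw _ (hf z hz) v h2 h1
        split_ifs at h5 with h
        · exact hyZ (h5 ▸ h3)
        · exact hne (h5.symm.trans h4)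
      · exact hQd _ (hf z hz) _ (hf w hw) (hfi z hz w hw hne) h1 h2

lemma menger [Fintype V] (R : V → V → Prop) (n : ℕ) (S T : Finset V)
    (hsep : ∀ X, Sep R S T X → n ≤ X.card) : ∃ Ps, Linkage R S T n Ps := by
  classical
  have hR : R = fun a b => (a, b) ∈ (Finset.univ.filter fun p : V × V => R p.1 p.2) := by
    ext a b; simp
  rw [hR] at hsep ⊢
  exact menger_aux n _ _ S T rfl hsep

end menger

/-! ### Vertices that are well connected to a set -/

section rank
set_option linter.unusedSectionVars false
variable {V : Type} [Fintype V] [DecidableEq V] (H : SimpleGraph V) (W : Finset V)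

open Classical in
/-- The boundary of `R`: the vertices outside `R` that lie in `W` or have a neighbour in `R`.
It separates `R ∪ W` from the rest of the graph. -/
noncomputable def bd (R : Finset V) : Finset V :=
  Finset.univ.filter fun v => v ∉ R ∧ (v ∈ W ∨ ∃ r ∈ R, H.Adj r v)

/-- The size of the boundary, where the vertices of `Y` count `c`-fold. -/
noncomputable def dd (c : ℕ) (Y R : Finset V) : ℕ :=
  ∑ v ∈ bd H W R, if v ∈ Y then c else 1

/-- No set of small boundary separates `Y` from `W`: equivalently, there are `c` paths
from each vertex of `Y` to `W`, all of them disjoint apart from their starting vertices. -/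
def Linked (c : ℕ) (Y : Finset V) : Prop :=
  ∀ R, Disjoint R Y → c * Y.card ≤ dd H W c Y R

/-- After removal of `X`, the vertex `u` cannot be separated from `W` by fewer than `c` vertices
different from `u`. -/
def IsCore (c : ℕ) (X : Finset V) (u : V) : Prop :=
  u ∉ X ∧ ∀ R, (bd H W R \ X).card < c → u ∉ bd H W R → u ∈ R

variable {H W}

lemma mem_bd {R : Finset V} {v : V} :
    v ∈ bd H W R ↔ v ∉ R ∧ (v ∈ W ∨ ∃ r ∈ R, H.Adj r v) := by
  simp [bd]

lemma IsCore.anti {c : ℕ} {X X' : Finset V} {u : V} (h : IsCore H W c X' u) (hX : X ⊆ X') :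
    IsCore H W c X u :=
  ⟨fun hu => h.1 (hX hu), fun R hR hu => h.2 R
    (lt_of_le_of_lt (Finset.card_le_card (Finset.sdiff_subset_sdiff le_rfl hX)) hR) hu⟩

lemma dd_submodular (c : ℕ) (Y R S : Finset V) :
    dd H W c Y (R ∩ S) + dd H W c Y (R ∪ S) ≤ dd H W c Y R + dd H W c Y S := by
  have e : ∀ R, dd H W c Y R =
      ∑ v, if v ∈ bd H W R then (if v ∈ Y then c else 1) else 0 := by
    intro R; rw [dd, Finset.sum_ite_mem, Finset.univ_inter]
  rw [e, e, e, e, ← Finset.sum_add_distrib, ← Finset.sum_add_distrib]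
  refine Finset.sum_le_sum fun v _ => ?_
  generalize (if v ∈ Y then c else 1) = w
  have h1 : v ∈ bd H W (R ∩ S) → v ∈ bd H W R ∨ v ∈ bd H W S := by
    simp only [mem_bd, Finset.mem_inter]; grind
  have h2 : v ∈ bd H W (R ∪ S) → v ∈ bd H W R ∨ v ∈ bd H W S := by
    simp only [mem_bd, Finset.mem_union]; grind
  have h3 : v ∈ bd H W (R ∩ S) → v ∈ bd H W (R ∪ S) → v ∈ bd H W R ∧ v ∈ bd H W S := by
    simp only [mem_bd, Finset.mem_union, Finset.mem_inter]; grind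
  by_cases p : v ∈ bd H W (R ∩ S) <;> by_cases q : v ∈ bd H W (R ∪ S) <;>
    by_cases r : v ∈ bd H W R <;> by_cases s : v ∈ bd H W S <;> simp [p, q, r, s] <;> tauto

lemma card_bd_le_dd {c : ℕ} (hc : 1 ≤ c) (Y R : Finset V) :
    (bd H W R).card ≤ dd H W c Y R := by
  rw [dd, Finset.card_eq_sum_ones]
  refine Finset.sum_le_sum fun v _ => ?_
  split_ifs <;> omega

/-- Every linked set can be extended by any vertex that is core with respect to a suitable
set of bounded size. -/
lemma Linked.step {c : ℕ} (hc : c = 1 ∨ c = 2) {Y : Finset V} (hY : Linked H W c Y) :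
    ∃ X : Finset V, X.card ≤ (2 * Y.card + 1) ^ 2 ∧
      ∀ u, IsCore H W c X u → Linked H W c (insert u Y) := by
  obtain ⟨i, hi⟩ : ∃ i, i = Y.card := ⟨_, rfl⟩
  have hc1 : 1 ≤ c := by omega
  have hY' : ∀ R, Disjoint R Y → c * i ≤ dd H W c Y R := by rw [hi]; exact hY
  -- a smallest tight set
  have hex : ((Finset.univ : Finset (Finset V)).filter fun R =>
      Disjoint R Y ∧ dd H W c Y R = c * i).Nonempty := by
    refine ⟨Yᶜ, ?_⟩
    have h1 : Disjoint Yᶜ Y := disjoint_compl_left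
    simp only [Finset.mem_filter, Finset.mem_univ, true_and, h1]
    refine le_antisymm ?_ (hY' _ h1)
    have hb : bd H W Yᶜ ⊆ Y := by
      intro v hv
      have := (mem_bd.1 hv).1
      simpa using this
    calc dd H W c Y Yᶜ = ∑ v ∈ bd H W Yᶜ, c :=
          Finset.sum_congr rfl fun v hv => by simp [hb hv]
      _ = (bd H W Yᶜ).card * c := by simp
      _ ≤ i * c := Nat.mul_le_mul_right _ (by rw [hi]; exact Finset.card_le_card hb)
      _ = c * i := Nat.mul_comm _ _
  obtain ⟨R0, hR0, hmin⟩ := Finset.exists_min_image _ Finset.card hex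
  simp only [Finset.mem_filter, Finset.mem_univ, true_and, and_imp] at hR0 hmin
  have hsub0 : ∀ R, R ⊆ R0 → dd H W c Y R = c * i → R = R0 := by
    intro R hR hd
    exact Finset.eq_of_subset_of_card_le hR
      (hmin R (Finset.disjoint_of_subset_left hR hR0.1) hd)
  have hge : ∀ R, R ⊆ R0 → c * i ≤ dd H W c Y R := fun R hR =>
    hY' R (Finset.disjoint_of_subset_left hR hR0.1)
  -- for `x` on its boundary, a smallest almost tight subset not having `x` on its boundary
  let Ex : V → Finset V → Prop := fun x R => R ⊆ R0 ∧ dd H W c Y R = c * i + 1 ∧ x ∉ bd H W R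
  have hEx : ∀ x ∈ bd H W R0, ∃ Rx : Finset V, (bd H W Rx).card ≤ c * i + 1 ∧
      ∀ S, Ex x S → Rx ⊆ S ∧ Rx ⊆ R0 := by
    intro x hx
    by_cases hne : ((Finset.univ : Finset (Finset V)).filter fun R => Ex x R).Nonempty
    swap
    · refine ⟨R0, (card_bd_le_dd hc1 Y R0).trans (by have := hR0.2; omega), fun S hS => absurd ?_ hne⟩
      exact ⟨S, by simpa using hS⟩
    obtain ⟨Rx, hRx, hRmin⟩ := Finset.exists_min_image _ Finset.card hne
    simp only [Finset.mem_filter, Finset.mem_univ, true_and] at hRx hRmin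
    refine ⟨Rx, (card_bd_le_dd (by omega) Y Rx).trans hRx.2.1.le, fun S hS => ⟨?_, hRx.1⟩⟩
    have hsm := dd_submodular (H := H) (W := W) c Y Rx S
    have hx0 := (mem_bd.1 hx).1
    have hxR : x ∉ Rx := fun h => hx0 (hRx.1 h)
    have hxS : x ∉ S := fun h => hx0 (hS.1 h)
    have hU : Rx ∪ S ⊆ R0 := Finset.union_subset hRx.1 hS.1
    have hI : Rx ∩ S ⊆ R0 := Finset.inter_subset_left.trans hRx.1
    have hxI : x ∉ bd H W (Rx ∩ S) := by
      have := hRx.2.2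
      simp only [mem_bd, Finset.mem_inter] at this ⊢; grind
    have hxU : x ∉ bd H W (Rx ∪ S) := by
      have h1 := hRx.2.2
      have h2 := hS.2.2
      simp only [mem_bd, Finset.mem_union] at h1 h2 ⊢; grind
    have hU2 : dd H W c Y (Rx ∪ S) ≠ c * i := fun h => by
      rw [hsub0 _ hU h] at hxU; exact hxU hx
    have hI2 : dd H W c Y (Rx ∩ S) ≠ c * i := fun h => by
      rw [hsub0 _ hI h] at hxI; exact hxI hx
    have h3 := hge _ hU
    have h4 := hge _ hI
    have h5 := hRx.2.1
    have h6 := hS.2.1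
    have hmem : Ex x (Rx ∩ S) := ⟨hI, by omega, hxI⟩
    have := Finset.eq_of_subset_of_card_le Finset.inter_subset_left (hRmin _ hmem)
    exact Finset.inter_eq_left.1 this
  choose! Rx hRx1 hRx2 using hEx
  refine ⟨bd H W R0 ∪ (bd H W R0).biUnion fun x => bd H W (Rx x), ?_, ?_⟩
  · have h1 : (bd H W R0).card ≤ c * i := (card_bd_le_dd (by omega) Y R0).trans hR0.2.le
    have h2 : ((bd H W R0).biUnion fun x => bd H W (Rx x)).card ≤ (bd H W R0).card * (c * i + 1) :=
      Finset.card_biUnion_le_card_mul _ _ _ hRx1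
    have h3 := Finset.card_union_le (bd H W R0) ((bd H W R0).biUnion fun x => bd H W (Rx x))
    have h4 : c * i ≤ 2 * i := by rcases hc with rfl | rfl <;> omega
    have h5 : (bd H W R0).card * (c * i + 1) ≤ (2 * i) * (2 * i + 1) :=
      Nat.mul_le_mul (h1.trans h4) (by omega)
    rw [← hi]
    nlinarith
  · intro u hu R hR
    by_contra hbad
    push Not at hbad
    set X := bd H W R0 ∪ (bd H W R0).biUnion fun x => bd H W (Rx x) with hX
    have hX0 : bd H W R0 ⊆ X := Finset.subset_union_left
    have huR : u ∉ R := fun h => Finset.disjoint_left.1 hR h (by simp)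
    have hRY : Disjoint R Y := Finset.disjoint_of_subset_right (Finset.subset_insert _ _) hR
    have hle : dd H W c Y R ≤ dd H W c (insert u Y) R := by
      refine Finset.sum_le_sum fun v _ => ?_
      simp only [Finset.mem_insert]
      split_ifs <;> first | omega | (exfalso; tauto)
    have huY : u ∉ Y := by
      intro h
      rw [Finset.insert_eq_of_mem h] at hbad
      exact absurd (hY R hRY) (by omega)
    rw [Finset.card_insert_of_notMem huY, ← hi, Nat.mul_add, Nat.mul_one] at hbad
    have hsm := dd_submodular (H := H) (W := W) c Y R R0
    have hU := hY' (R ∪ R0) (Finset.disjoint_union_left.2 ⟨hRY, hR0.1⟩)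
    have h1 : dd H W c Y (R ∩ R0) ≤ dd H W c Y R := by have := hR0.2; omega
    have hI := hge (R ∩ R0) Finset.inter_subset_right
    have hu0 : ∀ S, bd H W S ⊆ X → u ∈ S := fun S hS =>
      hu.2 S (by rw [Finset.sdiff_eq_empty_iff_subset.2 hS]; simp; omega) fun h => hu.1 (hS h)
    by_cases heq : dd H W c Y (R ∩ R0) = c * i
    · have := hsub0 _ Finset.inter_subset_right heq
      have h2 := hu0 R0 hX0
      rw [← this] at h2
      exact huR (Finset.mem_inter.1 h2).1
    have hc2 : c = 2 := by rcases hc with rfl | rfl <;> omega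
    have hub : u ∉ bd H W R := by
      intro hub
      have : dd H W c Y R < dd H W c (insert u Y) R := by
        refine Finset.sum_lt_sum (fun v _ => ?_) ⟨u, hub, by simp [huY, hc2]⟩
        simp only [Finset.mem_insert]
        split_ifs <;> first | omega | (exfalso; tauto)
      omega
    have hub1 : u ∉ bd H W (R ∩ R0) := by
      simp only [mem_bd, Finset.mem_inter] at hub ⊢; grind
    have hd1 : dd H W c Y (R ∩ R0) = c * i + 1 := by omega
    by_cases hss : bd H W R0 ⊆ bd H W (R ∩ R0)
    · have h2 : dd H W c Y (R ∩ R0) = (∑ v ∈ bd H W (R ∩ R0) \ bd H W R0,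
          if v ∈ Y then c else 1) + dd H W c Y R0 := by
        rw [dd, dd, Finset.sum_sdiff hss]
      have h3 : (bd H W (R ∩ R0) \ bd H W R0).card ≤
          ∑ v ∈ bd H W (R ∩ R0) \ bd H W R0, if v ∈ Y then c else 1 := by
        rw [Finset.card_eq_sum_ones]
        refine Finset.sum_le_sum fun v _ => ?_
        split_ifs <;> omega
      have h4 := Finset.card_le_card (Finset.sdiff_subset_sdiff (le_refl (bd H W (R ∩ R0))) hX0)
      have h5 := hR0.2
      have h6 := hu.2 (R ∩ R0) (by omega) hub1
      exact huR (Finset.mem_inter.1 h6).1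
    · obtain ⟨x, hx, hx'⟩ := Finset.not_subset.1 hss
      have h2 := (hRx2 x hx (R ∩ R0) ⟨Finset.inter_subset_right, hd1, hx'⟩).1
      have h3 := hu0 (Rx x) ((Finset.subset_biUnion_of_mem (fun x => bd H W (Rx x)) hx).trans
        Finset.subset_union_right)
      exact huR (Finset.mem_inter.1 (h2 h3)).1

/-- The auxiliary digraph for linked sets: every vertex of `Y` is replaced by `c` twins, which
have outgoing arcs only. -/
def twinRel (H : SimpleGraph V) (c : ℕ) (Y : Finset V) : V ⊕ (V × Fin c) → V ⊕ (V × Fin c) → Prop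
  | .inl v, .inl w => H.Adj v w ∧ v ∉ Y ∧ w ∉ Y
  | .inr p, .inl w => H.Adj p.1 w ∧ w ∉ Y
  | _, .inr _ => False

lemma twin_chain {c : ℕ} {Y : Finset V} (p : V ⊕ (V × Fin c)) (t : List (V ⊕ (V × Fin c)))
    (h : (p :: t).IsChain (twinRel H c Y)) :
    ∃ t' : List V, t = t'.map Sum.inl ∧ (∀ x ∈ t', x ∉ Y) ∧
      (Sum.elim id Prod.fst p :: t').IsChain H.Adj := by
  induction t generalizing p with
  | nil => exact ⟨[], by simp⟩
  | cons q t ih =>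
    rw [List.isChain_cons_cons] at h
    rcases q with w | q
    · obtain ⟨t', rfl, h2, h3⟩ := ih _ h.2
      refine ⟨w :: t', by simp, ?_, ?_⟩
      · rcases p with v | p
        · simpa using ⟨h.1.2.2, h2⟩
        · simpa using ⟨h.1.2, h2⟩
      · rw [List.isChain_cons_cons]
        rcases p with v | p
        · exact ⟨h.1.1, h3⟩
        · exact ⟨h.1.1, h3⟩
    · rcases p with v | p <;> exact h.1.elim

/-- The paths provided by a linked set, trimmed to their first vertex in `W`. -/
lemma Linked.fan {c : ℕ} {Y : Finset V} (hY : Linked H W c Y) (hYW : Disjoint Y W) :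
    ∃ (g : V → Fin c → List V) (w : V → Fin c → V), ∀ y ∈ Y, ∀ j,
      (y :: (g y j ++ [w y j])).IsChain H.Adj ∧ (y :: (g y j ++ [w y j])).Nodup ∧
      w y j ∈ W ∧ (∀ x ∈ g y j, x ∉ W) ∧ (∀ x ∈ g y j ++ [w y j], x ∉ Y) ∧
      ∀ y' ∈ Y, ∀ j', (y, j) ≠ (y', j') → (g y j ++ [w y j]).Disjoint (g y' j' ++ [w y' j']) := by
  let S : Finset (V ⊕ (V × Fin c)) := (∅ : Finset V).disjSum (Y ×ˢ Finset.univ)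
  let T : Finset (V ⊕ (V × Fin c)) := W.disjSum ∅
  have hS : ∀ y ∈ Y, ∀ j, Sum.inr (y, j) ∈ S := by
    intro y hy j; simp [S, hy]
  have hScard : S.card = c * Y.card := by
    simp [S, Nat.mul_comm]
  have hmen : ∃ Ps, Linkage (twinRel H c Y) S T (c * Y.card) Ps := by
    classical
    refine menger _ _ _ _ fun X hX => ?_
    let R : Finset V := Finset.univ.filter fun v => v ∉ Y ∧ ∃ w ∈ W, ∃ l,
      Conn (twinRel H c Y) (.inl v) (.inl w) l ∧ ∀ x ∈ l, x ∉ X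
    have hRY : Disjoint R Y := by
      rw [Finset.disjoint_left]
      intro v hv; exact (Finset.mem_filter.1 hv).2.1
    refine (hY R hRY).trans ?_
    have e : dd H W c Y R = (((bd H W R).filter (· ∉ Y)).disjSum
        (((bd H W R).filter (· ∈ Y)) ×ˢ (Finset.univ : Finset (Fin c)))).card := by
      rw [Finset.card_disjSum, Finset.card_product, Finset.card_univ, Fintype.card_fin, dd,
        Finset.sum_ite, Finset.sum_const, Finset.sum_const, smul_eq_mul, smul_eq_mul, Nat.mul_one,
        Nat.add_comm]
    rw [e]
    refine Finset.card_le_card ?_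
    intro p hp
    rcases p with v | ⟨v, j⟩
    · simp only [Finset.inl_mem_disjSum, Finset.mem_filter, mem_bd] at hp
      by_contra hvX
      obtain ⟨⟨hvR, hv⟩, hvY⟩ := hp
      refine hvR (Finset.mem_filter.2 ⟨Finset.mem_univ _, hvY, ?_⟩)
      rcases hv with hv | ⟨r, hr, hrv⟩
      · exact ⟨v, hv, _, Conn.single _, by simpa using hvX⟩
      · obtain ⟨-, hrY, w, hw, l, hl, hlX⟩ := Finset.mem_filter.1 hr
        exact ⟨w, hw, _, hl.cons (show twinRel H c Y (.inl v) (.inl r) from ⟨hrv.symm, hvY, hrY⟩),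
          by simpa using ⟨hvX, by simpa using hlX⟩⟩
    · simp only [Finset.inr_mem_disjSum, Finset.mem_product, Finset.mem_filter, mem_bd,
        Finset.mem_univ, and_true] at hp
      by_contra hvX
      obtain ⟨⟨hvR, hv⟩, hvY⟩ := hp
      rcases hv with hv | ⟨r, hr, hrv⟩
      · exact Finset.disjoint_left.1 hYW hvY hv
      · obtain ⟨-, hrY, w, hw, l, hl, hlX⟩ := Finset.mem_filter.1 hr
        obtain ⟨x, hx, hx'⟩ := hX (.inr (v, j)) (hS v hvY j) (.inl w) (by simpa [T] using hw) _
          (hl.cons (show twinRel H c Y (.inr (v, j)) (.inl r) from ⟨hrv.symm, hrY⟩))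
        simp only [List.mem_cons] at hx'
        rcases hx' with rfl | hx'
        · exact hvX hx
        · exact hlX x hx' hx
  obtain ⟨Ps, hPs⟩ := hmen
  obtain ⟨P, hP, hPd⟩ := hPs.symm.index hScard.le
  have key : ∀ y ∈ Y, ∀ j, ∃ (g : List V) (w : V), (y :: (g ++ [w])).IsChain H.Adj ∧
      (y :: (g ++ [w])).Nodup ∧ w ∈ W ∧ (∀ x ∈ g, x ∉ W) ∧ (∀ x ∈ g ++ [w], x ∉ Y) ∧
      ∀ x ∈ g ++ [w], Sum.inl x ∈ P (.inr (y, j)) := by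
    intro y hy j
    obtain ⟨h1, ⟨a, ha, h2⟩, -⟩ := hP (.inr (y, j)) (hS y hy j)
    have h3 := h2.reverse
    obtain ⟨t, et⟩ := h3.eq_cons
    rw [et] at h3
    have hnd : (Sum.inr (y, j) :: t).Nodup := by rw [← et]; exact List.nodup_reverse.2 h1
    obtain ⟨t', rfl, ht1, ht2⟩ := twin_chain _ _ h3.1
    simp only [Sum.elim_inr] at ht2
    obtain ⟨w0, hw0, rfl⟩ : ∃ w0 ∈ W, Sum.inl w0 = a := by
      rcases a with w0 | q
      · exact ⟨w0, by simpa [T] using ha, rfl⟩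
      · simp [T] at ha
    have hw0t : w0 ∈ t' := by
      have := h3.last_mem
      simpa using this
    obtain ⟨s, w, r, rfl, hw, hs⟩ := exists_first (· ∈ W) t' ⟨w0, hw0t, hw0⟩
    have hpre : (s ++ [w]) <+: (s ++ w :: r) := ⟨r, by simp⟩
    have hnd' : (s ++ w :: r).Nodup := by
      have := (List.nodup_cons.1 hnd).2
      exact List.Nodup.of_map _ this
    refine ⟨s, w, ?_, ?_, hw, hs, fun x hx => ht1 x (hpre.subset hx), fun x hx => ?_⟩
    · exact ht2.front (by simp)
    · rw [List.nodup_cons]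
      exact ⟨fun h => ht1 y (hpre.subset h) hy, hnd'.sublist hpre.sublist⟩
    · have : Sum.inl x ∈ (P (.inr (y, j))).reverse := by
        rw [et]
        exact List.mem_cons_of_mem _ (List.mem_map_of_mem (hpre.subset hx))
      simpa using this
  choose! g w h1 h2 h3 h4 h5 h6 using key
  refine ⟨g, w, fun y hy j => ⟨h1 y hy j, h2 y hy j, h3 y hy j, h4 y hy j, h5 y hy j, ?_⟩⟩
  intro y' hy' j' hne x hx hx'
  exact hPd _ (hS y hy j) _ (hS y' hy' j') (by simpa using hne) (h6 y hy j x hx) (h6 y' hy' j' x hx')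

end rank

/-! ### Long paths from many beads on a path -/

/-- A bead on a path: a segment `S` with first vertex `x` and last vertex `y`, the `gap` between it
and the next bead, an arm `a :: (s ++ [y])` leading from `A` to the end of the segment, and an
arm `x :: (e ++ [b])` leading from its beginning to `A`. -/
structure Bead (V : Type) where
  /-- the segment -/
  S : List V
  /-- the part of the path between this segment and the next one -/
  gap : List V
  /-- beginning of the first arm -/
  a : V
  /-- interior of the first arm -/
  s : List V
  /-- end of the segment -/
  y : V
  /-- beginning of the segment -/
  x : V
  /-- interior of the second arm -/
  e : List V
  /-- end of the second arm -/
  b : V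

namespace Bead
variable {V : Type}

/-- The arm ending in the last vertex of the segment. -/
def inArm (β : Bead V) : List V := β.a :: (β.s ++ [β.y])
/-- The arm starting in the first vertex of the segment. -/
def outArm (β : Bead V) : List V := β.x :: (β.e ++ [β.b])
/-- The path made up by a sequence of beads. -/
def spine (Bs : List (Bead V)) : List V := Bs.flatMap fun β => β.S ++ β.gap

@[simp] lemma spine_nil : spine ([] : List (Bead V)) = [] := rfl
@[simp] lemma spine_cons (β : Bead V) (Bs : List (Bead V)) :
    spine (β :: Bs) = β.S ++ β.gap ++ spine Bs := rfl
@[simp] lemma spine_append (Bs Bs' : List (Bead V)) :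
    spine (Bs ++ Bs') = spine Bs ++ spine Bs' := List.flatMap_append

end Bead

section beads
variable {V Γ : Type} [AddCommGroup Γ]

/-- The bead is attached to `A` by paths, and its weights are such that going in and out of it
is worth `γ` plus the weight of the segment. -/
def IsBead (G : SimpleGraph V) (lab : Sym2 V → Γ) (A : Set V) (γ : Γ) (β : Bead V) : Prop :=
  β.S.head? = some β.x ∧ β.S.getLast? = some β.y ∧
  β.inArm.IsChain G.Adj ∧ β.inArm.Nodup ∧ β.outArm.IsChain G.Adj ∧ β.outArm.Nodup ∧
  β.a ∈ A ∧ β.b ∈ A ∧ (∀ v ∈ β.s, v ∉ A) ∧ (∀ v ∈ β.e, v ∉ A) ∧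
  lw lab β.inArm + lw lab β.outArm = γ + lw lab β.S

/-- A sequence of beads along a path that avoids `A`, with disjoint arms. -/
def IsBeads (G : SimpleGraph V) (lab : Sym2 V → Γ) (A : Set V) (γ : Γ) (Bs : List (Bead V)) :
    Prop :=
  (Bead.spine Bs).IsChain G.Adj ∧ (Bead.spine Bs).Nodup ∧ (∀ v ∈ Bead.spine Bs, v ∉ A) ∧
  (∀ β ∈ Bs, IsBead G lab A γ β ∧ ∀ v, v ∈ β.inArm ++ β.outArm → v ∈ Bead.spine Bs → v ∈ β.S) ∧
  Bs.Pairwise fun β β' => (β.inArm ++ β.outArm).Disjoint (β'.inArm ++ β'.outArm)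

variable {G : SimpleGraph V} {lab : Sym2 V → Γ} {A : Set V} {γ : Γ}

lemma IsBeads.part {Bs Cs Ds : List (Bead V)} (h : IsBeads G lab A γ (Cs ++ Bs ++ Ds)) :
    IsBeads G lab A γ Bs := by
  obtain ⟨h1, h2, h3, h4, h5⟩ := h
  have hi : Bead.spine Bs <:+: Bead.spine (Cs ++ Bs ++ Ds) :=
    ⟨Bead.spine Cs, Bead.spine Ds, by simp⟩
  refine ⟨h1.middle hi, h2.sublist hi.sublist, fun v hv => h3 v (hi.subset hv), fun β hβ => ?_,
    h5.sublist (List.IsInfix.sublist ⟨Cs, Ds, rfl⟩)⟩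
  have := h4 β (by simp [hβ])
  exact ⟨this.1, fun v hv hv' => this.2 v hv (hi.subset hv')⟩

/-- The potential of a bead `r` that is preceded by the beads `P`. -/
def potential (lab : Sym2 V → Γ) (P : List (Bead V)) (r : Bead V) : Γ :=
  lw lab (Bead.spine P ++ [r.x]) + lw lab r.outArm

/-- The path entering through the bead `t` and leaving through the later bead `r`. -/
def beadPath (t : Bead V) (M : List (Bead V)) (r : Bead V) : List V :=
  (t.a :: t.s) ++ t.y :: (t.gap ++ Bead.spine M ++ r.x :: (r.e ++ [r.b]))

lemma eq_cons_of_head? {l : List V} {x : V} (h : l.head? = some x) : ∃ t, l = x :: t := by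
  cases l <;> simp_all

lemma eq_concat_of_getLast? {l : List V} {x : V} (h : l.getLast? = some x) : ∃ t, l = t ++ [x] :=
  ⟨l.dropLast, (List.dropLast_append_getLast? x h).symm⟩

lemma lw_beadPath {P M : List (Bead V)} {t r : Bead V} (ht : IsBead G lab A γ t) :
    lw lab (beadPath t M r) = γ + potential lab (P ++ t :: M) r - potential lab P t := by
  obtain ⟨hx, hy, -, -, -, -, -, -, -, -, hw⟩ := ht
  obtain ⟨S', hS'⟩ := eq_concat_of_getLast? hy
  have e1 : lw lab (beadPath t M r) = lw lab t.inArm +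
      (lw lab ((t.y :: (t.gap ++ Bead.spine M)) ++ [r.x]) + lw lab r.outArm) := by
    rw [beadPath, lw_append_cons, Bead.inArm, Bead.outArm, ← lw_append_cons _ _ r.x]
    simp
  have e2 : lw lab (Bead.spine (P ++ t :: M) ++ [r.x]) = lw lab (Bead.spine P ++ [t.x]) +
      (lw lab t.S + lw lab ((t.y :: (t.gap ++ Bead.spine M)) ++ [r.x])) := by
    have : Bead.spine (P ++ t :: M) ++ [r.x] =
        (Bead.spine P ++ S') ++ t.y :: (t.gap ++ Bead.spine M ++ [r.x]) := by
      simp [hS']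
    rw [this, lw_append_cons]
    obtain ⟨S'', hS''⟩ := eq_cons_of_head? hx
    rw [List.append_assoc, ← hS', hS'', lw_append_cons, ← hS'', add_assoc]
    simp
  rw [potential, potential, e1, e2]
  have : lw lab t.inArm = γ + lw lab t.S - lw lab t.outArm := by rw [← hw]; abel
  rw [this]; abel

lemma beadPath_subset {t r : Bead V} {M : List (Bead V)} {v : V} (hv : v ∈ beadPath t M r) :
    v ∈ t.inArm ∨ v ∈ t.gap ++ Bead.spine M ∨ v ∈ r.outArm := by
  simp only [beadPath, Bead.inArm, Bead.outArm, List.mem_append, List.mem_cons] at *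
  tauto

lemma isAP_beadPath {P M Q : List (Bead V)} {t r : Bead V}
    (h : IsBeads G lab A γ (P ++ t :: (M ++ r :: Q))) : IsAP G A (beadPath t M r) := by
  obtain ⟨h1, h2, h3, h4, h5⟩ := h
  obtain ⟨ht, htS⟩ := h4 t (by simp)
  obtain ⟨hr, hrS⟩ := h4 r (by simp)
  obtain ⟨hx, hy, hic, hin, -, -, haA, -, hsA, -, -⟩ := ht
  obtain ⟨hx', hy', -, -, hoc, hon, -, hbA, -, heA, -⟩ := hr
  obtain ⟨S', hS'⟩ := eq_concat_of_getLast? hy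
  obtain ⟨S'', hS''⟩ := eq_cons_of_head? hx'
  have hi : t.y :: (t.gap ++ Bead.spine M ++ [r.x]) <:+:
      Bead.spine (P ++ t :: (M ++ r :: Q)) :=
    ⟨Bead.spine P ++ S', S'' ++ r.gap ++ Bead.spine Q, by simp [hS', hS'']⟩
  have hF : (Bead.spine P ++ (t.S ++ (t.gap ++ Bead.spine M) ++ (r.S ++ (r.gap ++
      Bead.spine Q)))).Nodup := by simpa using h2
  have hc := h1.middle hi
  have hn := h2.sublist hi.sublist
  have hA : ∀ v ∈ t.y :: (t.gap ++ Bead.spine M ++ [r.x]), v ∉ A := fun v hv => h3 v (hi.subset hv)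
  have hdis : t.inArm.Disjoint r.outArm := by
    have : (t :: (M ++ r :: Q)).Pairwise fun β β' =>
        (β.inArm ++ β.outArm).Disjoint (β'.inArm ++ β'.outArm) :=
      h5.sublist (List.sublist_append_right _ _)
    have := (List.pairwise_cons.1 this).1 r (by simp)
    intro v hv hv'
    exact this (List.mem_append_left _ hv) (List.mem_append_right _ hv')
  have hmid : ∀ v ∈ t.gap ++ Bead.spine M, v ∈ Bead.spine (P ++ t :: (M ++ r :: Q)) ∧
      v ∉ t.S ∧ v ∉ r.S := by
    intro v hv
    refine ⟨by simp at hv ⊢; tauto, ?_, ?_⟩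
    · intro hv'
      have := (List.nodup_append.1 (List.nodup_append.1 (List.nodup_append.1 hF).2.1).1).2.2
      exact this v hv' v hv rfl
    · intro hv'
      have := (List.nodup_append.1 (List.nodup_append.1 hF).2.1).2.2
      exact this v (List.mem_append_right _ hv) v (List.mem_append_left _ hv') rfl
  have hd1 : ∀ v ∈ t.inArm, v ∉ t.gap ++ Bead.spine M := fun v hv hv' =>
    (hmid v hv').2.1 (htS v (List.mem_append_left _ hv) (hmid v hv').1)
  have hd2 : ∀ v ∈ r.outArm, v ∉ t.gap ++ Bead.spine M := fun v hv hv' =>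
    (hmid v hv').2.2 (hrS v (List.mem_append_right _ hv) (hmid v hv').1)
  have hmn : (t.gap ++ Bead.spine M).Nodup :=
    hn.sublist (((List.sublist_append_left _ [r.x])).trans (List.sublist_cons_self _ _))
  refine ⟨?_, ?_, t.a, t.s ++ t.y :: (t.gap ++ Bead.spine M ++ r.x :: r.e), r.b,
    by simp [beadPath], haA, hbA, ?_⟩
  · rw [beadPath, List.isChain_split]
    refine ⟨hic, ?_⟩
    rw [← List.cons_append, List.isChain_split]
    exact ⟨hc, hoc⟩
  · have e : beadPath t M r = t.inArm ++ ((t.gap ++ Bead.spine M) ++ r.outArm) := by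
      simp [beadPath, Bead.inArm, Bead.outArm]
    rw [e]
    refine hin.append (hmn.append hon ?_) ?_
    · intro v hv hv'; exact hd2 v hv' hv
    · intro v hv hv'
      rcases List.mem_append.1 hv' with hv' | hv'
      · exact hd1 v hv hv'
      · exact hdis hv hv'
  · intro v hv
    simp only [List.mem_append, List.mem_cons] at hv
    rcases hv with hv | rfl | (hv | hv) | rfl | hv
    · exact hsA v hv
    · exact hA _ (by simp)
    · exact hA _ (by simp [hv])
    · exact hA _ (by simp [hv])
    · exact hA _ (by simp)
    · exact heA v hv

lemma length_spine_le {Bs : List (Bead V)} (h : ∀ β ∈ Bs, IsBead G lab A γ β) :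
    Bs.length ≤ (Bead.spine Bs).length := by
  induction Bs with
  | nil => simp
  | cons β Bs ih =>
    have h1 := ih fun β hβ => h β (by simp [hβ])
    obtain ⟨S, hS⟩ := eq_cons_of_head? (h β (by simp)).1
    simp [hS]; omega

/-- Among `|Γ| * ℓ + 1` beads there are two far apart of the same potential. -/
lemma long_of_beads [Fintype Γ] {ℓ : ℕ} {Bs : List (Bead V)} (h : IsBeads G lab A γ Bs)
    (hlen : Bs.length = Fintype.card Γ * ℓ + 1) (hℓ : 0 < ℓ) :
    ∃ l, GP G lab A γ ℓ l ∧ ∀ v ∈ l, v ∈ Bead.spine Bs ∨ ∃ β ∈ Bs, v ∈ β.inArm ++ β.outArm := by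
  obtain ⟨m, n, hi, hj, hgap, hκ⟩ : ∃ (m n : ℕ) (hi : m < Bs.length) (hj : n < Bs.length),
      m + ℓ ≤ n ∧ potential lab (Bs.take m) Bs[m] = potential lab (Bs.take n) Bs[n] := by
    have hlt : ∀ i : Fin (Fintype.card Γ + 1), i.1 * ℓ < Bs.length := by
      intro i
      have : i.1 * ℓ ≤ Fintype.card Γ * ℓ := Nat.mul_le_mul_right _ (by omega)
      omega
    have hgap : ∀ i j : Fin (Fintype.card Γ + 1), i < j → i.1 * ℓ + ℓ ≤ j.1 * ℓ := by
      intro i j hij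
      have : (i.1 + 1) * ℓ ≤ j.1 * ℓ := Nat.mul_le_mul_right _ hij
      linarith [this, Nat.add_mul i.1 1 ℓ]
    obtain ⟨i, j, hne, he⟩ := Fintype.exists_ne_map_eq_of_card_lt
      (fun i : Fin (Fintype.card Γ + 1) =>
        potential lab (Bs.take (i.1 * ℓ)) (Bs[i.1 * ℓ]'(hlt i))) (by simp)
    rcases lt_or_gt_of_ne hne with h | h
    · exact ⟨_, _, hlt i, hlt j, hgap i j h, he⟩
    · exact ⟨_, _, hlt j, hlt i, hgap j i h, he.symm⟩
  let M := (Bs.take n).drop (m + 1)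
  have e1 : Bs.take n = Bs.take m ++ Bs[m] :: M := by
    conv_lhs => rw [← List.take_append_drop m (Bs.take n)]
    rw [List.take_take, min_eq_left (by omega)]
    congr 1
    rw [List.drop_eq_getElem_cons (i := m) (l := Bs.take n) (by simp; omega)]
    simp [M]
  have e2 : Bs = Bs.take m ++ Bs[m] :: (M ++ Bs[n] :: Bs.drop (n + 1)) := by
    conv_lhs => rw [← List.take_append_drop n Bs, e1]
    rw [List.append_assoc, List.cons_append, List.cons_getElem_drop_succ]
  have hM : M.length = n - (m + 1) := by simp [M]; omega
  have h' := h
  rw [e2] at h'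
  refine ⟨beadPath Bs[m] M Bs[n], ⟨isAP_beadPath h', ?_, ?_⟩, ?_⟩
  · rw [lw_beadPath (P := Bs.take m) (h.2.2.2.1 _ (by simp)).1, ← e1, hκ]; abel
  · have h1 : M.length ≤ (Bead.spine M).length := length_spine_le fun β hβ =>
      (h'.2.2.2.1 β (by simp [hβ])).1
    simp [beadPath]; omega
  · intro v hv
    rcases beadPath_subset hv with hv | hv | hv
    · exact Or.inr ⟨_, List.getElem_mem hi, List.mem_append_left _ hv⟩
    · left
      rw [e2]
      simp at hv ⊢; tauto
    · exact Or.inr ⟨_, List.getElem_mem hj, List.mem_append_right _ hv⟩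

/-- Many beads yield many disjoint long paths. -/
lemma pack_of_beads [Fintype Γ] {ℓ : ℕ} (hℓ : 0 < ℓ) (K : ℕ) : ∀ {Bs : List (Bead V)},
    IsBeads G lab A γ Bs → K * (Fintype.card Γ * ℓ + 1) ≤ Bs.length →
    ∃ Ps : List (List V), Ps.length = K ∧ (∀ l ∈ Ps, GP G lab A γ ℓ l) ∧
      Ps.Pairwise List.Disjoint ∧
      ∀ l ∈ Ps, ∀ v ∈ l, v ∈ Bead.spine Bs ∨ ∃ β ∈ Bs, v ∈ β.inArm ++ β.outArm := by
  induction K with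
  | zero => intro Bs h hl; exact ⟨[], by simp⟩
  | succ K ih =>
    intro Bs h hl
    rw [Nat.add_mul, Nat.one_mul] at hl
    obtain ⟨Cs, Ds, rfl, hC⟩ : ∃ Cs Ds, Bs = Cs ++ Ds ∧
        Cs.length = Fintype.card Γ * ℓ + 1 :=
      ⟨Bs.take (Fintype.card Γ * ℓ + 1), Bs.drop (Fintype.card Γ * ℓ + 1), by simp, by
        rw [List.length_take]; omega⟩
    have hCs : IsBeads G lab A γ Cs := IsBeads.part (Cs := []) (Ds := Ds) (by simpa using h)
    have hDs : IsBeads G lab A γ Ds := IsBeads.part (Cs := Cs) (Ds := []) (by simpa using h)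
    obtain ⟨Ps, h1, h2, h3, h4⟩ := ih hDs (by simp at hl; omega)
    obtain ⟨l, hl1, hl2⟩ := long_of_beads hCs hC hℓ
    refine ⟨l :: Ps, by simp [h1], by simpa using ⟨hl1, h2⟩, List.pairwise_cons.2 ⟨?_, h3⟩, ?_⟩
    · obtain ⟨-, hnd, -, h8, h9⟩ := h
      rw [Bead.spine_append] at hnd
      have hdd := (List.nodup_append.1 hnd).2.2
      have hS : ∀ Es : List (Bead V), ∀ β ∈ Es, ∀ v ∈ β.S, v ∈ Bead.spine Es := by
        intro Es β hβ v hv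
        exact List.mem_flatMap.2 ⟨β, hβ, List.mem_append_left _ hv⟩
      intro l' hl' v hv hv'
      rcases hl2 v hv with hv | ⟨β, hβ, hv⟩ <;> rcases h4 l' hl' v hv' with hv' | ⟨β', hβ', hv'⟩
      · exact hdd v hv v hv' rfl
      · have := (h8 β' (by simp [hβ'])).2 v hv' (by simp [hv])
        exact hdd v hv v (hS Ds β' hβ' v this) rfl
      · have := (h8 β (by simp [hβ])).2 v hv (by simp [hv'])
        exact hdd v (hS Cs β hβ v this) v hv' rfl
      · exact (List.pairwise_append.1 h9).2.2 β hβ β' hβ' hv hv'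
    · intro l' hl' v hv
      rcases List.mem_cons.1 hl' with rfl | hl'
      · rcases hl2 v hv with hv | ⟨β, hβ, hv⟩
        · exact Or.inl (by simp [hv])
        · exact Or.inr ⟨β, by simp [hβ], hv⟩
      · rcases h4 l' hl' v hv with hv | ⟨β, hβ, hv⟩
        · exact Or.inl (by simp [hv])
        · exact Or.inr ⟨β, by simp [hβ], hv⟩

end beads

/-! ### A path meeting many short paths -/

section interval
variable {V : Type}

/-- The concatenation of the intervals `d.2.1` and gaps `d.2.2`. -/
def cat (D : List (List V × List V × List V)) : List V := D.flatMap fun d => d.2.1 ++ d.2.2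

/-- The triple `(P, I, gap)` consists of a set `P` and an interval `I` that starts and ends
in `P`. -/
def Spans (d : List V × List V × List V) : Prop :=
  ∃ x ∈ d.1, ∃ y ∈ d.1, d.2.1.head? = some x ∧ d.2.1.getLast? = some y

lemma nodup_of_disjoint {Ps : List (List V)} (h : Ps.Pairwise List.Disjoint)
    (hne : ∀ P ∈ Ps, P ≠ []) : Ps.Nodup := by
  rw [List.Nodup, List.pairwise_iff_forall_sublist] at *
  intro P Q hs e
  subst e
  have h1 := h hs
  obtain ⟨x, hx⟩ := List.exists_mem_of_ne_nil _ (hne P (hs.subset (by simp)))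
  exact h1 hx hx

open Classical in
/-- If every cut of `L` is straddled by fewer than `M` of the sets, then disjoint intervals can
be selected greedily. -/
lemma interval_greedy (M : ℕ) (j : ℕ) : ∀ (L : List V) (Ps : List (List V)), L.Nodup →
    Ps.Pairwise List.Disjoint → (∀ P ∈ Ps, ∃ v ∈ L, v ∈ P) →
    (∀ L1 L2, L = L1 ++ L2 →
      (Ps.filter fun P => (∃ v ∈ L1, v ∈ P) ∧ ∃ v ∈ L2, v ∈ P).length < M) →
    j * M ≤ Ps.length →
    ∃ D : List (List V × List V × List V), D.length = j ∧ cat D <:+: L ∧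
      (∀ d ∈ D, d.1 ∈ Ps ∧ Spans d ∧ ∀ v ∈ d.1, v ∈ L → v ∈ d.2.1) ∧
      D.Pairwise fun d d' => d.1.Disjoint d'.1 := by
  induction j with
  | zero => intro L Ps _ _ _ _ _; exact ⟨[], rfl, by simp [cat], by simp, by simp⟩
  | succ j ih =>
    intro L Ps hL hPs hmeet hcut hlen
    rw [Nat.add_mul, Nat.one_mul] at hlen
    have hM : 0 < M := lt_of_le_of_lt (Nat.zero_le _) (hcut L [] (by simp))
    have hex : ∃ n, ∃ P ∈ Ps, ∀ v ∈ L.drop n, v ∉ P := by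
      obtain ⟨P, hP⟩ := List.exists_mem_of_length_pos (l := Ps) (by omega)
      exact ⟨L.length, P, hP, by simp⟩
    obtain ⟨P, hP, hPn⟩ := Nat.find_spec hex
    have hmin := fun {m} => Nat.find_min hex (m := m)
    generalize Nat.find hex = n at hPn hmin
    obtain ⟨v0, hv0L, hv0P⟩ := hmeet P hP
    have hv0n : v0 ∈ L.take n := by
      rw [← List.take_append_drop n L] at hv0L
      rcases List.mem_append.1 hv0L with h | h
      · exact h
      · exact absurd hv0P (hPn _ h)
    obtain ⟨n, rfl⟩ : ∃ n', n = n' + 1 := by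
      cases n with
      | zero => simp at hv0n
      | succ n => exact ⟨n, rfl⟩
    have hmin' : ∀ Q ∈ Ps, ∃ v ∈ L.drop n, v ∈ Q := by
      intro Q hQ
      by_contra hno
      push Not at hno
      exact hmin (Nat.lt_succ_self n) ⟨Q, hQ, hno⟩
    obtain ⟨y, hy, hyP⟩ := hmin' P hP
    have hnL : n < L.length := by
      by_contra h
      rw [List.drop_eq_nil_of_le (by omega)] at hy; simp at hy
    have hdrop : L.drop n = L[n] :: L.drop (n + 1) := List.drop_eq_getElem_cons hnL
    obtain rfl : y = L[n] := by
      rw [hdrop, List.mem_cons] at hy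
      rcases hy with h | h
      · exact h
      · exact absurd hyP (hPn y h)
    have htake : L.take (n + 1) = L.take n ++ [L[n]] := (List.take_append_getElem hnL).symm
    have hyL1 : L[n] ∈ L.take (n + 1) := by
      rw [htake]; exact List.mem_append_right _ (List.mem_singleton_self _)
    have hlast : (L.take (n + 1)).getLast? = some L[n] := by
      rw [htake, List.getLast?_concat]
    have e : L = L.take (n + 1) ++ L.drop (n + 1) := (List.take_append_drop _ _).symm
    have hndL : (L.take (n + 1) ++ L.drop (n + 1)).Nodup := by rwa [← e]
    set L1 := L.take (n + 1) with hL1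
    set L2 := L.drop (n + 1) with hL2
    have hne : ∀ P ∈ Ps, P ≠ [] := by
      rintro P hP rfl
      obtain ⟨v, -, hv⟩ := hmeet _ hP
      simp at hv
    have hnd := nodup_of_disjoint hPs hne
    let Qs := Ps.filter fun Q => ¬ ∃ v ∈ L1, v ∈ Q
    have hQs : j * M ≤ Qs.length := by
      have h1 : Ps.length = (Ps.filter fun Q => ∃ v ∈ L1, v ∈ Q).length + Qs.length := by
        have := List.length_eq_length_filter_add (l := Ps) (fun Q => decide (∃ v ∈ L1, v ∈ Q))
        rw [this]
        congr 2
        apply List.filter_congr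
        intro Q _
        rw [decide_not]
      have h2 : (Ps.filter fun Q => ∃ v ∈ L1, v ∈ Q).length ≤
          (P :: Ps.filter fun P => (∃ v ∈ L1, v ∈ P) ∧ ∃ v ∈ L2, v ∈ P).length := by
        refine (List.Nodup.subperm (hnd.filter _) ?_).length_le
        intro Q hQ
        simp only [List.mem_filter, decide_eq_true_eq] at hQ
        by_cases hQP : Q = P
        · simp [hQP]
        refine List.mem_cons_of_mem _ (List.mem_filter.2 ⟨hQ.1, ?_⟩)
        simp only [decide_eq_true_eq]
        refine ⟨hQ.2, ?_⟩
        obtain ⟨v, hv, hvQ⟩ := hmin' Q hQ.1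
        rw [hdrop, List.mem_cons] at hv
        rcases hv with rfl | hv
        · exact absurd hyP (fun h => disjoint_of_mem hPs hQ.1 hP hQP hvQ h)
        · exact ⟨v, hv, hvQ⟩
      have h3 := hcut L1 L2 e
      rw [List.length_cons] at h2
      omega
    have hQmem : ∀ Q ∈ Qs, Q ∈ Ps ∧ ∀ v ∈ L1, v ∉ Q := by
      intro Q hQ
      have := List.mem_filter.1 hQ
      simp only [decide_eq_true_eq, not_exists, not_and] at this
      exact this
    obtain ⟨D, hD1, ⟨u, w, hD2⟩, hD3, hD4⟩ := ih L2 Qs (hL.sublist (List.drop_sublist _ _))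
      (hPs.sublist List.filter_sublist) (by
        intro Q hQ
        obtain ⟨v, hv, hvQ⟩ := hmeet Q (hQmem Q hQ).1
        rw [e] at hv
        rcases List.mem_append.1 hv with hv | hv
        · exact absurd hvQ ((hQmem Q hQ).2 v hv)
        · exact ⟨v, hv, hvQ⟩) (by
        intro L3 L4 e34
        refine lt_of_le_of_lt ?_ (hcut (L1 ++ L3) L4 (by rw [List.append_assoc, ← e34, ← e]))
        refine (List.Nodup.subperm ((hnd.filter _).filter _) ?_).length_le
        intro Q hQ
        simp only [List.mem_filter, decide_eq_true_eq] at hQ ⊢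
        obtain ⟨hQ, ⟨v, hv, hvQ⟩, h2⟩ := hQ
        exact ⟨hQ.1, ⟨v, by simp [hv], hvQ⟩, h2⟩) hQs
    obtain ⟨s, x, t, est, hxP, hs⟩ := exists_first (· ∈ P) L1
      ⟨L[n], hyL1, hyP⟩
    refine ⟨(P, x :: t, u) :: D, by simp [hD1], ⟨s, w, ?_⟩, ?_, ?_⟩
    · rw [e, est, ← hD2]; simp [cat]
    · intro d hd
      rcases List.mem_cons.1 hd with rfl | hd
      · refine ⟨hP, ⟨x, hxP, L[n], hyP, by simp, ?_⟩, ?_⟩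
        · have : (s ++ x :: t).getLast? = some L[n] := by rw [← est, hlast]
          rwa [List.getLast?_append_of_ne_nil _ (by simp)] at this
        · intro v hvP hvL
          rw [e, est] at hvL
          rcases List.mem_append.1 hvL with hv | hv
          · rcases List.mem_append.1 hv with hv | hv
            · exact absurd hvP (hs v hv)
            · exact hv
          · exact absurd hvP (hPn v hv)
      · obtain ⟨h1, h2, h3⟩ := hD3 d hd
        refine ⟨(hQmem _ h1).1, h2, fun v hv hvL => ?_⟩
        rw [e] at hvL
        rcases List.mem_append.1 hvL with hv' | hv'
        · exact absurd hv ((hQmem _ h1).2 v hv')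
        · exact h3 v hv hv'
    · refine List.pairwise_cons.2 ⟨fun d hd => ?_, hD4⟩
      have h1 := hQmem _ (hD3 d hd).1
      refine disjoint_of_mem hPs hP h1.1 ?_
      rintro rfl
      exact h1.2 L[n] hyL1 hyP

open Classical in
/-- From many disjoint sets, each meeting `L` in at most `c` vertices, `m` can be selected whose
intervals on some segment of `L` are disjoint. -/
lemma interval (m : ℕ) (c : ℕ) : ∀ (L : List V) (Ps : List (List V)), L.Nodup →
    Ps.Pairwise List.Disjoint → (∀ P ∈ Ps, ∃ v ∈ L, v ∈ P) →
    (∀ P ∈ Ps, (L.filter (· ∈ P)).length ≤ c) → m ^ c ≤ Ps.length →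
    ∃ D : List (List V × List V × List V), D.length = m ∧ cat D <:+: L ∧
      (∀ d ∈ D, d.1 ∈ Ps ∧ Spans d ∧ ∀ v ∈ d.1, v ∈ cat D → v ∈ d.2.1) ∧
      D.Pairwise fun d d' => d.1.Disjoint d'.1 := by
  induction c with
  | zero =>
    intro L Ps _ _ hmeet hc hlen
    obtain ⟨P, hP⟩ := List.exists_mem_of_length_pos (l := Ps) (by rw [pow_zero] at hlen; omega)
    obtain ⟨v, hv, hvP⟩ := hmeet P hP
    have : v ∈ L.filter (· ∈ P) := List.mem_filter.2 ⟨hv, by simpa using hvP⟩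
    have := List.length_pos_of_mem this
    have := hc P hP
    omega
  | succ c ih =>
    intro L Ps hL hPs hmeet hc hlen
    by_cases hcut : ∀ L1 L2, L = L1 ++ L2 →
      (Ps.filter fun P => (∃ v ∈ L1, v ∈ P) ∧ ∃ v ∈ L2, v ∈ P).length < m ^ c
    · obtain ⟨D, h1, h2, h3, h4⟩ := interval_greedy (m ^ c) m L Ps hL hPs hmeet hcut
        (by rwa [pow_succ, Nat.mul_comm] at hlen)
      refine ⟨D, h1, h2, fun d hd => ?_, h4⟩
      obtain ⟨h5, h6, h7⟩ := h3 d hd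
      exact ⟨h5, h6, fun v hv hv' => h7 v hv (h2.subset hv')⟩
    · push Not at hcut
      obtain ⟨L1, L2, rfl, hbig⟩ := hcut
      obtain ⟨D, h1, h2, h3, h4⟩ := ih L1 _ (List.nodup_append.1 hL).1
        (hPs.sublist List.filter_sublist)
        (by
          intro P hP
          have := (List.mem_filter.1 hP).2
          simp only [decide_eq_true_eq] at this
          exact this.1)
        (by
          intro P hP
          have h := (List.mem_filter.1 hP).2
          simp only [decide_eq_true_eq] at h
          obtain ⟨v, hv, hvP⟩ := h.2
          have h2 : v ∈ L2.filter (· ∈ P) := List.mem_filter.2 ⟨hv, by simpa using hvP⟩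
          have h3 := List.length_pos_of_mem h2
          have h4 := hc P (List.mem_filter.1 hP).1
          rw [List.filter_append, List.length_append] at h4
          omega) hbig
      exact ⟨D, h1, h2.trans ⟨[], L2, by simp⟩, fun d hd =>
        ⟨(List.mem_filter.1 (h3 d hd).1).1, (h3 d hd).2⟩, h4⟩

end interval

section touch
variable {V Γ : Type} [AddCommGroup Γ] {G : SimpleGraph V} {lab : Sym2 V → Γ} {A : Set V} {γ : Γ}

/-- Replacing intervals of a path by other paths with the same ends. -/
lemma isChain_replace {α : Type} {R : V → V → Prop} (I S gap : α → List V) (D : List α)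
    (hI : ∀ d ∈ D, (I d).head? = (S d).head? ∧ (I d).getLast? = (S d).getLast? ∧
      (S d) ≠ [] ∧ (S d).IsChain R)
    (h : (D.flatMap fun d => I d ++ gap d).IsChain R) :
    (D.flatMap fun d => S d ++ gap d).IsChain R ∧
      (D.flatMap fun d => S d ++ gap d).head? = (D.flatMap fun d => I d ++ gap d).head? := by
  induction D with
  | nil => simp
  | cons d D ih =>
    obtain ⟨h1, h2, h3, h4⟩ := hI d (by simp)
    have h5 : I d ≠ [] := by
      intro h5; rw [h5] at h1; exact h3 (List.head?_eq_none_iff.1 h1.symm)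
    simp only [List.flatMap_cons, List.append_assoc] at h ⊢
    rw [List.isChain_append] at h
    obtain ⟨h6, h7, h8⟩ := h
    rw [List.isChain_append] at h7
    obtain ⟨h9, h10⟩ := ih (fun d hd => hI d (by simp [hd])) h7.2.1
    refine ⟨?_, ?_⟩
    · rw [List.isChain_append, List.isChain_append]
      refine ⟨h4, ⟨h7.1, h9, by rw [h10]; exact h7.2.2⟩, ?_⟩
      rw [← h2]
      intro x hx y hy
      refine h8 x hx y ?_
      rw [List.head?_append] at hy ⊢
      rwa [h10] at hy
    · rw [List.head?_append_of_ne_nil _ h3, List.head?_append_of_ne_nil _ h5, h1]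

/-- An `A`-path of weight `γ` is a bead on every segment of its own. -/
lemma exists_bead {P : List V} (hP : IsAP G A P) (hγ : lw lab P = γ) {x y : V} (hx : x ∈ P)
    (hy : y ∈ P) (hxA : x ∉ A) (hyA : y ∉ A) (gap : List V) :
    ∃ β : Bead V, β.gap = gap ∧ β.x = x ∧ β.y = y ∧ IsBead G lab A γ β ∧ β.S.IsChain G.Adj ∧
      β.S.Nodup ∧ (∀ v ∈ β.S, v ∈ P ∧ v ∉ A) ∧ ∀ v ∈ β.inArm ++ β.outArm, v ∈ P := by
  -- choose the direction of `P` such that `x` comes first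
  obtain ⟨P', hP', hγ', hmem, s, t, e, hyt⟩ : ∃ P' : List V, IsAP G A P' ∧ lw lab P' = γ ∧
      (∀ v, v ∈ P' ↔ v ∈ P) ∧ ∃ s t, P' = s ++ x :: t ∧ y ∈ x :: t := by
    obtain ⟨s, t, e⟩ := List.append_of_mem hx
    by_cases hyt : y ∈ x :: t
    · exact ⟨P, hP, hγ, fun _ => Iff.rfl, s, t, e, hyt⟩
    · refine ⟨P.reverse, hP.reverse, by rw [lw_reverse, hγ], by simp, t.reverse, s.reverse,
        by simp [e], ?_⟩
      rw [e] at hy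
      rcases List.mem_append.1 hy with hy | hy
      · simp [hy]
      · exact absurd hy hyt
  obtain ⟨hc, hn, a, m, b, e', ha, hb, hm⟩ := hP'
  obtain ⟨t1, t2, et⟩ := List.append_of_mem hyt
  have hne : ∀ v, v ∉ A → v ≠ a ∧ v ≠ b := fun v hv =>
    ⟨fun h => hv (h ▸ ha), fun h => hv (h ▸ hb)⟩
  obtain ⟨s', rfl⟩ : ∃ s', s = a :: s' := by
    cases s with
    | nil =>
      rw [e] at e'; simp at e'
      exact absurd e'.1 (hne x hxA).1
    | cons z s => rw [e] at e'; simp at e'; exact ⟨s, by rw [e'.1]⟩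
  obtain ⟨t', rfl⟩ : ∃ t', t2 = t' ++ [b] := by
    rcases List.eq_nil_or_concat t2 with rfl | ⟨t', z, rfl⟩
    · rw [e, et] at e'
      have : (a :: s' ++ t1) ++ [y] = (a :: m) ++ [b] := by simpa using e'
      exact absurd (by simpa using (List.append_inj' this rfl).2) (hne y hyA).2
    · rw [e, et] at e'
      have : (a :: s' ++ t1 ++ y :: t') ++ [z] = (a :: m) ++ [b] := by simpa using e'
      have : z = b := by simpa using (List.append_inj' this rfl).2
      exact ⟨t', by simp [this]⟩
  have em : m = s' ++ t1 ++ y :: t' := by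
    rw [e, et] at e'
    have : s' ++ t1 ++ y :: t' ++ [b] = m ++ [b] := by simpa using e'
    exact (List.append_cancel_right this).symm
  -- `t1` is empty if and only if `x = y`
  obtain ⟨t0, et0⟩ : ∃ t0, t1 ++ [y] = x :: t0 := by
    cases t1 with
    | nil => simp at et; exact ⟨[], by simp [et.1]⟩
    | cons z t1 => simp at et; exact ⟨t1 ++ [y], by simp [et.1]⟩
  obtain ⟨e0, ee0⟩ : ∃ e0, x :: t = x :: (e0 ++ [b]) := by
    cases t1 with
    | nil => simp at et; exact ⟨t', by simp [et.2]⟩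
    | cons z t1 => simp at et; exact ⟨t1 ++ y :: t', by simp [et.2]⟩
  have hPeq : P' = (a :: s') ++ (t1 ++ y :: (t' ++ [b])) := by rw [e, et]
  have hin : (a :: (s' ++ t1 ++ [y])) <:+: P' := ⟨[], t' ++ [b], by simp [hPeq]⟩
  have hout : (x :: (e0 ++ [b])) <:+: P' := ⟨a :: s', [], by rw [e, ee0]; simp⟩
  have hS : (t1 ++ [y]) <:+: P' := ⟨a :: s', t' ++ [b], by simp [hPeq]⟩
  have hmA : ∀ v ∈ m, v ∉ A := hm
  refine ⟨⟨t1 ++ [y], gap, a, s' ++ t1, y, x, e0, b⟩, rfl, rfl, rfl,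
    ⟨by simp [et0], by simp, hc.middle hin, hn.sublist hin.sublist, hc.middle hout,
      hn.sublist hout.sublist, ha, hb, ?_, ?_, ?_⟩, hc.middle hS, hn.sublist hS.sublist, ?_, ?_⟩
  · intro v hv; exact hm v (by rw [em]; simp at hv ⊢; tauto)
  · intro v hv
    refine hm v ?_
    have h1 : v ∈ x :: t := by rw [ee0]; simp [hv]
    have h2 : x :: (e0 ++ [b]) = t1 ++ y :: (t' ++ [b]) := by rw [← ee0, et]
    have h3 : x :: e0 = t1 ++ y :: t' := by
      have : (x :: e0) ++ [b] = (t1 ++ y :: t') ++ [b] := by simpa using h2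
      exact List.append_cancel_right this
    rw [em, List.append_assoc, ← h3]
    simp [hv]
  · show lw lab (a :: (s' ++ t1 ++ [y])) + lw lab (x :: (e0 ++ [b])) = γ + lw lab (t1 ++ [y])
    have h1 : lw lab (a :: (s' ++ t1 ++ [y])) = lw lab ((a :: s') ++ [x]) + lw lab (t1 ++ [y]) := by
      rw [et0, ← lw_append_cons, ← et0]; simp
    have h2 : γ = lw lab ((a :: s') ++ [x]) + lw lab (x :: t) := by rw [← hγ', e, lw_append_cons]
    rw [h1, h2, ← ee0]; abel
  · intro v hv
    refine ⟨(hmem v).1 (hS.subset hv), hm v ?_⟩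
    rw [em]; simp at hv ⊢; tauto
  · intro v hv
    refine (hmem v).1 ?_
    rcases List.mem_append.1 hv with hv | hv
    · exact hin.subset hv
    · exact hout.subset hv

/-- A path outside `A` that meets many disjoint short `A`-paths of weight `γ` yields many
disjoint long ones. -/
lemma pack_of_touch [Fintype Γ] {ℓ : ℕ} (hℓ : 0 < ℓ) (K : ℕ) {L : List V} (hc : L.IsChain G.Adj)
    (hn : L.Nodup) (hA : ∀ v ∈ L, v ∉ A) {Ps : List (List V)} (hd : Ps.Pairwise List.Disjoint)
    (hP : ∀ P ∈ Ps, GP G lab A γ 1 P ∧ P.length ≤ ℓ ∧ ∃ v ∈ L, v ∈ P)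
    (hlen : (K * (Fintype.card Γ * ℓ + 1)) ^ ℓ ≤ Ps.length) : Pack (GP G lab A γ ℓ) K := by
  classical
  obtain ⟨D, h1, h2, h3, h4⟩ := interval _ ℓ L Ps hn hd (fun P hp => (hP P hp).2.2) (by
    intro P hp
    refine le_trans ?_ (hP P hp).2.1
    refine (List.Nodup.subperm (hn.filter _) ?_).length_le
    intro v hv
    simpa using (List.mem_filter.1 hv).2) hlen
  have hDA : ∀ v ∈ cat D, v ∉ A := fun v hv => hA v (h2.subset hv)
  have hI : ∀ d ∈ D, ∀ v ∈ d.2.1 ++ d.2.2, v ∈ cat D := fun d hd v hv =>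
    List.mem_flatMap.2 ⟨d, hd, hv⟩
  have hb : ∀ d : {d // d ∈ D}, ∃ β : Bead V, β.gap = d.1.2.2 ∧ IsBead G lab A γ β ∧
      β.S.IsChain G.Adj ∧ β.S.Nodup ∧ (∀ v ∈ β.S, v ∈ d.1.1 ∧ v ∉ A) ∧
      (∀ v ∈ β.inArm ++ β.outArm, v ∈ d.1.1) ∧ d.1.2.1.head? = β.S.head? ∧
      d.1.2.1.getLast? = β.S.getLast? := by
    rintro ⟨d, hd⟩
    obtain ⟨h5, ⟨x, hx, y, hy, h6, h7⟩, h8⟩ := h3 d hd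
    obtain ⟨β, g1, g2, g3, g4, g5, g6, g7, g8⟩ := exists_bead (hP _ h5).1.1 (hP _ h5).1.2.1 hx hy
      (hDA x (hI d hd x (List.mem_append_left _ (List.mem_of_head? h6))))
      (hDA y (hI d hd y (List.mem_append_left _ (List.mem_of_getLast? h7)))) d.2.2
    exact ⟨β, g1, g4, g5, g6, g7, g8, by rw [h6, g4.1, g2], by rw [h7, g4.2.1, g3]⟩
  choose B b1 b2 b3 b4 b5 b6 b7 b8 using hb
  have hcatc : (cat D).IsChain G.Adj := hc.middle h2
  have hcatn : (cat D).Nodup := hn.sublist h2.sublist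
  have hcat : cat D = D.attach.flatMap fun d => d.1.2.1 ++ d.1.2.2 := by
    conv_lhs => rw [cat, ← List.attach_map_subtype_val D, List.flatMap_map]
  have hspine : Bead.spine (D.attach.map B) = D.attach.flatMap fun d => (B d).S ++ d.1.2.2 := by
    rw [Bead.spine, List.flatMap_map]
    simp only [b1]
  have hDdis : ∀ d ∈ D, ∀ d' ∈ D, d ≠ d' → d.1.Disjoint d'.1 := by
    intro d hd d' hd' hne
    have : Std.Symm (fun d d' : List V × List V × List V => d.1.Disjoint d'.1) :=
      ⟨fun _ _ h => h.symm⟩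
    exact h4.forall hd hd' hne
  rw [hcat, List.nodup_flatMap] at hcatn
  have hcatdis : ∀ d ∈ D, ∀ d' ∈ D, d ≠ d' →
      (d.2.1 ++ d.2.2).Disjoint (d'.2.1 ++ d'.2.2) := by
    intro d hd d' hd' hne
    have : Std.Symm (fun d d' : {d // d ∈ D} =>
        (d.1.2.1 ++ d.1.2.2).Disjoint (d'.1.2.1 ++ d'.1.2.2)) :=
      ⟨fun _ _ h => h.symm⟩
    exact List.Pairwise.forall (R := fun d d' : {d // d ∈ D} =>
        (d.1.2.1 ++ d.1.2.2).Disjoint (d'.1.2.1 ++ d'.1.2.2)) hcatn.2 (List.mem_attach _ ⟨d, hd⟩)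
      (List.mem_attach _ ⟨d', hd'⟩) (by simpa using hne)
  -- the selected short paths do not meet the gaps
  have hgap : ∀ d ∈ D, ∀ d' ∈ D, ∀ v ∈ d.1, v ∉ d'.2.2 := by
    intro d hd d' hd' v hv hv'
    have h5 := (h3 d hd).2.2 v hv (hI d' hd' v (List.mem_append_right _ hv'))
    by_cases hne : d = d'
    · subst hne
      exact (List.nodup_append.1 (hcatn.1 ⟨d, hd⟩ (List.mem_attach _ _))).2.2 v h5 v hv' rfl
    · exact hcatdis d hd d' hd' hne (List.mem_append_left _ h5) (List.mem_append_right _ hv')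
  have hnodup : D.Nodup := by
    rw [List.Nodup, List.pairwise_iff_forall_sublist]
    intro d d' hs e
    subst e
    have := (List.pairwise_iff_forall_sublist.1 h4) hs
    obtain ⟨x, hx, -⟩ := (h3 d (hs.subset (by simp))).2.1
    exact this hx hx
  obtain ⟨hch, -⟩ := isChain_replace (R := G.Adj) (fun d : {d // d ∈ D} => d.1.2.1)
    (fun d => (B d).S) (fun d => d.1.2.2) D.attach (fun d _ => ⟨b7 d, b8 d, fun h => by
      have := (b2 d).1; rw [h] at this; simp at this, b3 d⟩) (by rwa [← hcat])
  suffices hB : IsBeads G lab A γ (D.attach.map B) by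
    obtain ⟨Qs, q1, q2, q3, -⟩ := pack_of_beads hℓ K hB (by simp [h1])
    exact ⟨Qs, q1, q2, q3⟩
  rw [← hspine] at hch
  refine ⟨hch, ?_, ?_, ?_, ?_⟩
  · rw [hspine, List.nodup_flatMap]
    refine ⟨fun d hd => ?_, ?_⟩
    · refine (b4 d).append (List.nodup_append.1 (hcatn.1 d hd)).2.1 ?_
      intro v hv hv'
      exact hgap _ d.2 _ d.2 v (b5 d v hv).1 hv'
    · have : D.attach.Nodup := List.nodup_attach.2 hnodup
      refine this.imp ?_
      intro d d' hne v hv hv'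
      have hne' : d.1 ≠ d'.1 := fun h => hne (Subtype.ext h)
      rcases List.mem_append.1 hv with hv | hv <;> rcases List.mem_append.1 hv' with hv' | hv'
      · exact hDdis _ d.2 _ d'.2 hne' (b5 d v hv).1 (b5 d' v hv').1
      · exact hgap _ d.2 _ d'.2 v (b5 d v hv).1 hv'
      · exact hgap _ d'.2 _ d.2 v (b5 d' v hv').1 hv
      · exact hcatdis _ d.2 _ d'.2 hne' (List.mem_append_right _ hv) (List.mem_append_right _ hv')
  · rw [hspine]
    intro v hv
    obtain ⟨d, -, hv⟩ := List.mem_flatMap.1 hv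
    rcases List.mem_append.1 hv with hv | hv
    · exact (b5 d v hv).2
    · exact hDA v (hI _ d.2 v (List.mem_append_right _ hv))
  · intro β hβ
    obtain ⟨d, -, rfl⟩ := List.mem_map.1 hβ
    refine ⟨b2 d, fun v hv hv' => ?_⟩
    rw [hspine] at hv'
    obtain ⟨d', -, hv'⟩ := List.mem_flatMap.1 hv'
    rcases List.mem_append.1 hv' with hv' | hv'
    · by_cases hne : d.1 = d'.1
      · rwa [Subtype.ext hne]
      · exact absurd (b5 d' v hv').1 (fun h => hDdis _ d.2 _ d'.2 hne (b6 d v hv) h)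
    · exact absurd hv' (hgap _ d.2 _ d'.2 v (b6 d v hv))
  · rw [List.pairwise_map]
    have : D.attach.Nodup := List.nodup_attach.2 hnodup
    refine this.imp ?_
    intro d d' hne v hv hv'
    exact hDdis _ d.2 _ d'.2 (fun h => hne (Subtype.ext h)) (b6 d v hv) (b6 d' v hv')

end touch

/-! ### A path through many ears of a path -/

section ladder
variable {V : Type} {H : SimpleGraph V}

/-- The vertices of `e` form a path from `P` to `Q` that is otherwise disjoint from `P` and `Q`. -/
def Rung (H : SimpleGraph V) (P Q e : List V) : Prop :=
  ∃ p m q, (∀ v, v ∈ e ↔ v ∈ p :: (m ++ [q])) ∧ (p :: (m ++ [q])).IsChain H.Adj ∧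
    (p :: (m ++ [q])).Nodup ∧ p ∈ P ∧ q ∈ Q ∧ ∀ v ∈ m, v ∉ P ∧ v ∉ Q

lemma Rung.symm {P Q e : List V} (h : Rung H P Q e) : Rung H Q P e := by
  obtain ⟨p, m, q, h1, h2, h3, h4, h5, h6⟩ := h
  have e' : q :: (m.reverse ++ [p]) = (p :: (m ++ [q])).reverse := by simp
  refine ⟨q, m.reverse, p, fun v => by rw [e', List.mem_reverse, h1], ?_, ?_, h5, h4, ?_⟩
  · rw [e', List.isChain_reverse]
    exact h2.imp fun _ _ h => h.symm
  · rw [e']; exact List.nodup_reverse.2 h3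
  · intro v hv; exact (h6 v (by simpa using hv)).symm

/-- There is a path that starts at the head of `P`, uses only vertices of `U` and of members of
`Es`, and contains `r` members of `Es`. -/
def Collects (H : SimpleGraph V) (P U : List V) (Es : List (List V)) (r : ℕ) : Prop :=
  ∃ (T : List V) (Fs : List (List V)), T.IsChain H.Adj ∧ T.Nodup ∧
    (∀ x ∈ T.head?, x ∈ P.head?) ∧ (∀ v ∈ T, v ∈ U ∨ ∃ e ∈ Es, v ∈ e) ∧ Fs ⊆ Es ∧ Fs.Nodup ∧
    Fs.length = r ∧ ∀ e ∈ Fs, ∀ v ∈ e, v ∈ T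

lemma Collects.zero (P U : List V) (Es : List (List V)) : Collects H P U Es 0 :=
  ⟨[], [], by simp⟩

/-- Follow `P` to `p`, then the ear `e` to its other end `q`, and continue from there. -/
lemma Collects.glue {P s t m P' U U' : List V} {p q : V} {e : List V} {Es Es' : List (List V)}
    {r : ℕ} (hP : P = s ++ p :: t) (hPc : P.IsChain H.Adj) (hPn : P.Nodup)
    (hmem : ∀ v, v ∈ e ↔ v ∈ p :: (m ++ [q])) (hec : (p :: (m ++ [q])).IsChain H.Adj)
    (hen : (p :: (m ++ [q])).Nodup) (hs : ∀ v ∈ s, v ∉ e)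
    (hP' : (q :: P').IsChain H.Adj) (h : Collects H P' U' Es' r)
    (hPU : P ⊆ U) (hU' : U' ⊆ U) (he : e ∈ Es) (hEs : Es' ⊆ Es) (heEs : e ∉ Es')
    (hd1 : ∀ v ∈ U', v ∉ s ∧ v ∉ e) (hd2 : ∀ f ∈ Es', ∀ v ∈ f, v ∉ s ∧ v ∉ e) :
    Collects H P U Es (r + 1) := by
  obtain ⟨T, Fs, h1, h2, h3, h4, h5, h6, h7, h8⟩ := h
  have hse : (s ++ p :: (m ++ [q])).IsChain H.Adj := by
    rw [List.isChain_split]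
    rw [hP, List.isChain_split] at hPc
    exact ⟨hPc.1, hec⟩
  have hsn : (s ++ p :: (m ++ [q])).Nodup := by
    rw [hP] at hPn
    refine (List.nodup_append.1 hPn).1.append hen ?_
    intro v hv hv'
    exact hs v hv ((hmem v).2 hv')
  refine ⟨(s ++ p :: (m ++ [q])) ++ T, e :: Fs, ?_, ?_, ?_, ?_, ?_, ?_, by simp [h7], ?_⟩
  · rw [List.isChain_append]
    refine ⟨hse, h1, ?_⟩
    intro x hx y hy
    have hx' : x = q := by
      rw [List.getLast?_append_of_ne_nil _ (by simp), ← List.cons_append,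
        List.getLast?_concat] at hx
      simpa using hx.symm
    subst hx'
    have := h3 y hy
    obtain ⟨P2, rfl⟩ := eq_cons_of_head? this
    exact (List.isChain_cons_cons.1 hP').1
  · refine hsn.append h2 ?_
    intro v hv hv'
    have : v ∉ s ∧ v ∉ e := by
      rcases h4 v hv' with h | ⟨f, hf, h⟩
      · exact hd1 v h
      · exact hd2 f hf v h
    rcases List.mem_append.1 hv with hv | hv
    · exact this.1 hv
    · exact this.2 ((hmem v).2 hv)
  · intro x hx
    rw [hP]
    cases s <;> simpa using hx
  · intro v hv
    rcases List.mem_append.1 hv with hv | hv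
    · rcases List.mem_append.1 hv with hv | hv
      · exact Or.inl (hPU (by rw [hP]; simp [hv]))
      · exact Or.inr ⟨e, he, (hmem v).2 hv⟩
    · rcases h4 v hv with h | ⟨f, hf, h⟩
      · exact Or.inl (hU' h)
      · exact Or.inr ⟨f, hEs hf, h⟩
  · exact List.cons_subset.2 ⟨he, List.Subset.trans h5 hEs⟩
  · exact List.nodup_cons.2 ⟨fun h => heEs (h5 h), h6⟩
  · intro f hf v hv
    rcases List.mem_cons.1 hf with rfl | hf
    · exact List.mem_append_left _ (List.mem_append_right _ ((hmem v).1 hv))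
    · exact List.mem_append_right _ (h8 f hf v hv)

/-- Splitting a list of sets that contains `e` by properties of which every other member has one. -/
lemma exists_filter_ge {Es : List (List V)} {e : List V} (p q : List V → Prop) {n k : ℕ}
    (h : ∀ f ∈ Es, f ≠ e → p f ∨ q f) (hnd : Es.Nodup) (hn : n + k ≤ Es.length) :
    (∃ Es', List.Sublist Es' Es ∧ e ∉ Es' ∧ (∀ f ∈ Es', p f) ∧ n ≤ Es'.length) ∨
    (∃ Es', List.Sublist Es' Es ∧ e ∉ Es' ∧ (∀ f ∈ Es', q f) ∧ k ≤ Es'.length) := by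
  classical
  by_contra hno
  push Not at hno
  have h1 := hno.1 (Es.filter fun f => f ≠ e ∧ p f) List.filter_sublist (by simp)
    (fun f hf => by simpa using (by simpa using hf : f ∈ Es ∧ f ≠ e ∧ p f).2.2)
  have h2 := hno.2 (Es.filter fun f => f ≠ e ∧ q f) List.filter_sublist (by simp)
    (fun f hf => by simpa using (by simpa using hf : f ∈ Es ∧ f ≠ e ∧ q f).2.2)
  have h3 : Es.length ≤ (e :: ((Es.filter fun f => f ≠ e ∧ p f) ++
      Es.filter fun f => f ≠ e ∧ q f)).length := by
    refine (List.Nodup.subperm hnd ?_).length_le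
    intro f hf
    by_cases hfe : f = e
    · simp [hfe]
    · rcases h f hf hfe with hp | hp <;> simp [hf, hfe, hp]
  simp only [List.length_cons, List.length_append] at h3
  omega

/-- The ladder case: two disjoint paths joined by many disjoint rungs. -/
lemma collects_ladder (r : ℕ) : ∀ (P Q : List V) (Es : List (List V)), P.IsChain H.Adj → P.Nodup →
    Q.IsChain H.Adj → Q.Nodup → P.Disjoint Q → Es.Pairwise List.Disjoint →
    (∀ e ∈ Es, Rung H P Q e) → 2 ^ r ≤ Es.length → Collects H P (P ++ Q) Es r := by
  induction r with
  | zero => intros; exact Collects.zero _ _ _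
  | succ r ih =>
    intro P Q Es hPc hPn hQc hQn hPQ hEs hR hlen
    have hEne : ∀ e ∈ Es, e ≠ [] := by
      rintro e he rfl
      obtain ⟨p, m, q, h1, -⟩ := hR _ he
      have := (h1 p).2 (by simp)
      simp at this
    have hnd := nodup_of_disjoint hEs hEne
    have hpos : 0 < 2 ^ r := Nat.pos_of_ne_zero (by positivity)
    rw [pow_succ] at hlen
    obtain ⟨s, p, t, hP, ⟨e, he, hpe⟩, hs⟩ := exists_first (fun v => ∃ e ∈ Es, v ∈ e) P (by
      obtain ⟨e, he⟩ := List.exists_mem_of_length_pos (l := Es) (by omega)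
      obtain ⟨p, m, q, h1, h2, h3, h4, -⟩ := hR e he
      exact ⟨p, h4, e, he, (h1 p).2 (by simp)⟩)
    obtain ⟨p', m, q, h1, h2, h3, h4, h5, h6⟩ := hR e he
    have hpP : p ∈ P := by rw [hP]; simp
    obtain rfl : p = p' := by
      have := (h1 p).1 hpe
      simp only [List.mem_cons, List.mem_append, List.not_mem_nil, or_false] at this
      rcases this with h | h | h
      · exact h
      · exact absurd hpP (h6 p h).1
      · exact absurd (h ▸ h5 : p ∈ Q) (fun h' => hPQ hpP h')
    obtain ⟨Q1, Q2, hQ⟩ := List.append_of_mem h5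
    have hqe : q ∈ e := (h1 q).2 (by simp)
    -- ends of the other ears
    have hother : ∀ f ∈ Es, f ≠ e → Rung H t Q1.reverse f ∨ Rung H t Q2 f := by
      intro f hf hfe
      obtain ⟨p', m', q', g1, g2, g3, g4, g5, g6⟩ := hR f hf
      have hdis := disjoint_of_mem hEs hf he hfe
      have hp't : p' ∈ t := by
        rw [hP] at g4
        rcases List.mem_append.1 g4 with h | h
        · exact absurd ⟨f, hf, (g1 p').2 (by simp)⟩ (hs p' h)
        · rcases List.mem_cons.1 h with rfl | h
          · exact absurd hpe (fun h => hdis ((g1 p').2 (by simp)) h)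
          · exact h
      have hq' : q' ∈ f := (g1 q').2 (by simp)
      rw [hQ] at g5
      rcases List.mem_append.1 g5 with h | h
      · exact Or.inl ⟨p', m', q', g1, g2, g3, hp't, by simpa using h, fun v hv =>
          ⟨fun h => (g6 v hv).1 (by rw [hP]; simp [h]),
            fun h => (g6 v hv).2 (by rw [hQ]; simp at h; simp [h])⟩⟩
      · rcases List.mem_cons.1 h with rfl | h
        · exact absurd hqe (fun h => hdis hq' h)
        · exact Or.inr ⟨p', m', q', g1, g2, g3, hp't, h, fun v hv =>
            ⟨fun h => (g6 v hv).1 (by rw [hP]; simp [h]),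
              fun h => (g6 v hv).2 (by rw [hQ]; simp [h])⟩⟩
    have htc : t.IsChain H.Adj := by
      rw [hP] at hPc; exact hPc.suffix ⟨s ++ [p], by simp⟩
    have hPn' := hPn
    have hQn' := hQn
    have hQc' := hQc
    rw [hP] at hPn'
    rw [hQ] at hQn' hQc'
    rw [List.isChain_split] at hQc'
    have hmain : ∀ Q' : List V, (q :: Q').IsChain H.Adj → Q'.Nodup → Q' ⊆ Q → q ∉ Q' →
        (∃ Es', List.Sublist Es' Es ∧ e ∉ Es' ∧ (∀ f ∈ Es', Rung H t Q' f) ∧ 2 ^ r ≤ Es'.length) →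
        Collects H P (P ++ Q) Es (r + 1) := by
      rintro Q' hQ'c hQ'n hQ'Q hq ⟨Es', hsub, heE, hRf, hl⟩
      have := ih Q' t Es' (hQ'c.suffix ⟨[q], rfl⟩) hQ'n htc
        ((List.nodup_cons.1 (List.nodup_append.1 hPn').2.1).2)
        (fun v hv hv' => hPQ (by rw [hP]; simp [hv']) (hQ'Q hv)) (hEs.sublist hsub)
        (fun f hf => (hRf f hf).symm) hl
      refine Collects.glue hP hPc hPn h1 h2 h3 (fun v hv hve => hs v hv ⟨e, he, hve⟩) hQ'c this
        (List.subset_append_left _ _) ?_ he hsub.subset heE ?_ ?_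
      · intro v hv
        rcases List.mem_append.1 hv with hv | hv
        · exact List.mem_append_right _ (hQ'Q hv)
        · exact List.mem_append_left _ (by rw [hP]; simp [hv])
      · intro v hv
        rcases List.mem_append.1 hv with hv | hv
        · refine ⟨fun h => hPQ (by rw [hP]; simp [h]) (hQ'Q hv), fun h => ?_⟩
          have := (h1 v).1 h
          simp only [List.mem_cons, List.mem_append, List.not_mem_nil, or_false] at this
          rcases this with h | h | h
          · subst h; exact hPQ hpP (hQ'Q hv)
          · exact (h6 v h).2 (hQ'Q hv)
          · subst h; exact hq hv
        · have hvP : v ∈ P := by rw [hP]; simp [hv]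
          refine ⟨fun h => (List.nodup_append.1 hPn').2.2 v h v (by simp [hv]) rfl, fun h => ?_⟩
          have := (h1 v).1 h
          simp only [List.mem_cons, List.mem_append, List.not_mem_nil, or_false] at this
          rcases this with h | h | h
          · subst h
            exact (List.nodup_cons.1 (List.nodup_append.1 hPn').2.1).1 hv
          · exact (h6 v h).1 hvP
          · subst h; exact hPQ hvP h5
      · intro f hf v hv
        exact ⟨fun h => hs v h ⟨f, hsub.subset hf, hv⟩, fun h =>
          disjoint_of_mem hEs (hsub.subset hf) he (fun h => heE (h ▸ hf)) hv h⟩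
    rcases exists_filter_ge (n := 2 ^ r) (k := 2 ^ r) _ _ hother hnd (by omega) with h | h
    · refine hmain _ ?_ (List.nodup_reverse.2 (List.nodup_append.1 hQn').1) ?_ ?_ h
      · have : q :: Q1.reverse = (Q1 ++ [q]).reverse := by simp
        rw [this, List.isChain_reverse]
        exact hQc'.1.imp fun _ _ h => h.symm
      · intro v hv; rw [hQ]; simp at hv; simp [hv]
      · intro h
        exact (List.nodup_append.1 hQn').2.2 q (by simpa using h) q (by simp) rfl
    · refine hmain _ hQc'.2 (List.nodup_cons.1 (List.nodup_append.1 hQn').2.1).2 ?_ ?_ h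
      · intro v hv; rw [hQ]; simp [hv]
      · exact (List.nodup_cons.1 (List.nodup_append.1 hQn').2.1).1

/-- A path with many disjoint ears. -/
lemma collects_ears (r : ℕ) : ∀ (P : List V) (Es : List (List V)), P.IsChain H.Adj → P.Nodup →
    Es.Pairwise List.Disjoint → (∀ e ∈ Es, Rung H P P e) → 4 ^ r ≤ Es.length →
    Collects H P P Es r := by
  induction r with
  | zero => intros; exact Collects.zero _ _ _
  | succ r ih =>
    intro P Es hPc hPn hEs hR hlen
    have hEne : ∀ e ∈ Es, e ≠ [] := by
      rintro e he rfl
      obtain ⟨p, m, q, h1, -⟩ := hR _ he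
      have := (h1 p).2 (by simp)
      simp at this
    have hnd := nodup_of_disjoint hEs hEne
    have hpos : 0 < 4 ^ r := Nat.pos_of_ne_zero (by positivity)
    rw [pow_succ] at hlen
    obtain ⟨s, p, t, hP, ⟨e, he, hpe⟩, hs⟩ := exists_first (fun v => ∃ e ∈ Es, v ∈ e) P (by
      obtain ⟨e, he⟩ := List.exists_mem_of_length_pos (l := Es) (by omega)
      obtain ⟨p, m, q, h1, h2, h3, h4, -⟩ := hR e he
      exact ⟨p, h4, e, he, (h1 p).2 (by simp)⟩)
    have hpP : p ∈ P := by rw [hP]; simp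
    obtain ⟨m, q, h1, h2, h3, h5, h6⟩ : ∃ m q, (∀ v, v ∈ e ↔ v ∈ p :: (m ++ [q])) ∧
        (p :: (m ++ [q])).IsChain H.Adj ∧ (p :: (m ++ [q])).Nodup ∧ q ∈ P ∧ ∀ v ∈ m, v ∉ P := by
      obtain ⟨p', m, q, h1, h2, h3, h4, h5, h6⟩ := hR e he
      have hp' := (h1 p).1 hpe
      simp only [List.mem_cons, List.mem_append, List.not_mem_nil, or_false] at hp'
      rcases hp' with h | h | h
      · subst h; exact ⟨m, q, h1, h2, h3, h5, fun v hv => (h6 v hv).1⟩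
      · exact absurd hpP (h6 p h).1
      · subst h
        have e' : p :: (m.reverse ++ [p']) = (p' :: (m ++ [p])).reverse := by simp
        refine ⟨m.reverse, p', fun v => by rw [e', List.mem_reverse, h1], ?_, ?_, h4, ?_⟩
        · rw [e', List.isChain_reverse]
          exact h2.imp fun _ _ h => h.symm
        · rw [e']; exact List.nodup_reverse.2 h3
        · intro v hv; exact (h6 v (by simpa using hv)).1
    have hqe : q ∈ e := (h1 q).2 (by simp)
    have hqt : q ∈ t := by
      have h5' := h5
      rw [hP] at h5'
      rcases List.mem_append.1 h5' with h | h
      · exact absurd ⟨e, he, hqe⟩ (hs q h)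
      · rcases List.mem_cons.1 h with rfl | h
        · exact absurd h3 (by simp)
        · exact h
    obtain ⟨M, T2, ht⟩ := List.append_of_mem hqt
    have hP2 : P = s ++ p :: (M ++ q :: T2) := by rw [hP, ht]
    have hPn' := hPn
    have hPc' := hPc
    rw [hP2] at hPn' hPc'
    have htn := (List.nodup_cons.1 (List.nodup_append.1 hPn').2.1)
    have hMT := List.nodup_append.1 htn.2
    have hPc2 : (M ++ q :: T2).IsChain H.Adj := hPc'.suffix ⟨s ++ [p], by simp⟩
    rw [List.isChain_split] at hPc2
    have hMrev : (q :: M.reverse).IsChain H.Adj := by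
      have : q :: M.reverse = (M ++ [q]).reverse := by simp
      rw [this, List.isChain_reverse]
      exact hPc2.1.imp fun _ _ h => h.symm
    have hMP : M.reverse ⊆ P := by
      intro v hv; rw [hP2]; simp at hv; simp [hv]
    have hTP : T2 ⊆ P := by
      intro v hv; rw [hP2]; simp [hv]
    -- ends of the other ears
    have hother : ∀ f ∈ Es, f ≠ e → Rung H M.reverse M.reverse f ∨
        (Rung H T2 T2 f ∨ Rung H T2 M.reverse f) := by
      intro f hf hfe
      have hdis := disjoint_of_mem hEs hf he hfe
      have hend : ∀ v ∈ f, v ∈ P → v ∈ M.reverse ∨ v ∈ T2 := by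
        intro v hv hvP
        rw [hP2] at hvP
        simp only [List.mem_append, List.mem_cons] at hvP
        rcases hvP with h | rfl | h | rfl | h
        · exact absurd ⟨f, hf, hv⟩ (hs v h)
        · exact absurd hpe (fun h => hdis hv h)
        · simp [h]
        · exact absurd hqe (fun h => hdis hv h)
        · simp [h]
      obtain ⟨p', m', q', g1, g2, g3, g4, g5, g6⟩ := hR f hf
      have hm1 : ∀ v ∈ m', v ∉ M.reverse ∧ v ∉ T2 := fun v hv =>
        ⟨fun h => (g6 v hv).1 (hMP h), fun h => (g6 v hv).1 (hTP h)⟩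
      rcases hend p' ((g1 p').2 (by simp)) g4 with h | h <;>
        rcases hend q' ((g1 q').2 (by simp)) g5 with h' | h'
      · exact Or.inl ⟨p', m', q', g1, g2, g3, h, h', fun v hv => ⟨(hm1 v hv).1, (hm1 v hv).1⟩⟩
      · exact Or.inr (Or.inr (Rung.symm ⟨p', m', q', g1, g2, g3, h, h', hm1⟩))
      · exact Or.inr (Or.inr ⟨p', m', q', g1, g2, g3, h, h', fun v hv => (hm1 v hv).symm⟩)
      · exact Or.inr (Or.inl ⟨p', m', q', g1, g2, g3, h, h',
          fun v hv => ⟨(hm1 v hv).2, (hm1 v hv).2⟩⟩)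
    have hmain : ∀ (P' U' : List V) (Es' : List (List V)), (q :: P').IsChain H.Adj →
        (∀ v ∈ U', v ∈ M.reverse ∨ v ∈ T2) → List.Sublist Es' Es → e ∉ Es' → Collects H P' U' Es' r →
        Collects H P P Es (r + 1) := by
      intro P' U' Es' hP' hU' hsub heE hcol
      refine Collects.glue hP hPc hPn h1 h2 h3 (fun v hv hve => hs v hv ⟨e, he, hve⟩) hP' hcol
        (List.Subset.refl _) ?_ he hsub.subset heE ?_ ?_
      · intro v hv
        rcases hU' v hv with h | h
        · exact hMP h
        · exact hTP h
      · intro v hv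
        have hv2 : v ∈ M ∨ v ∈ T2 := by simpa using hU' v hv
        have hvP : v ∈ P := by rw [hP2]; simp; tauto
        refine ⟨fun h => (List.nodup_append.1 hPn').2.2 v h v (by simp; tauto) rfl, fun h => ?_⟩
        have := (h1 v).1 h
        simp only [List.mem_cons, List.mem_append, List.not_mem_nil, or_false] at this
        rcases this with h | h | h
        · subst h
          exact htn.1 (by simp; tauto)
        · exact h6 v h hvP
        · subst h
          rcases hv2 with h | h
          · exact hMT.2.2 v h v (by simp) rfl
          · exact (List.nodup_cons.1 hMT.2.1).1 h
      · intro f hf v hv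
        exact ⟨fun h => hs v h ⟨f, hsub.subset hf, hv⟩, fun h =>
          disjoint_of_mem hEs (hsub.subset hf) he (fun h => heE (h ▸ hf)) hv h⟩
    have hMn : M.reverse.Nodup := List.nodup_reverse.2 hMT.1
    have hTn : T2.Nodup := (List.nodup_cons.1 hMT.2.1).2
    have hMc : M.reverse.IsChain H.Adj := hMrev.suffix ⟨[q], rfl⟩
    have hTc : T2.IsChain H.Adj := hPc2.2.suffix ⟨[q], rfl⟩
    rcases exists_filter_ge (n := 4 ^ r) (k := 2 * 4 ^ r) _ _ hother hnd (by omega) with h | h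
    · obtain ⟨Es', hsub, heE, hRf, hl⟩ := h
      exact hmain _ _ _ hMrev (fun v hv => Or.inl hv) hsub heE
        (ih _ Es' hMc hMn (hEs.sublist hsub) hRf hl)
    · obtain ⟨Es', hsub, heE, hRf, hl⟩ := h
      classical
      have hsplit := List.length_eq_length_filter_add (l := Es') (fun f => decide (Rung H T2 T2 f))
      by_cases hbig : 4 ^ r ≤ (Es'.filter fun f => decide (Rung H T2 T2 f)).length
      · refine hmain _ _ _ hPc2.2 (fun v hv => Or.inr hv) (List.filter_sublist.trans hsub)
          (fun h => heE (List.mem_filter.1 h).1)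
          (ih _ _ hTc hTn (hEs.sublist (List.filter_sublist.trans hsub)) (fun f hf => ?_) hbig)
        simpa using (List.mem_filter.1 hf).2
      · refine hmain _ _ _ hPc2.2 (fun v hv => (List.mem_append.1 hv).symm)
          (List.filter_sublist.trans hsub) (fun h => heE (List.mem_filter.1 h).1)
          (collects_ladder r T2 M.reverse (Es'.filter fun f => !decide (Rung H T2 T2 f))
            hTc hTn hMc hMn ?_ (hEs.sublist (List.filter_sublist.trans hsub))
            (fun f hf => ?_) ?_)
        · intro v hv hv'
          exact hMT.2.2 v (by simpa using hv') v (by simp [hv]) rfl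
        · have h1 := List.mem_filter.1 hf
          rcases hRf f h1.1 with h | h
          · simp [h] at h1
          · exact h
        · have : 2 ^ r ≤ 4 ^ r := Nat.pow_le_pow_left (by norm_num) r
          omega

end ladder

/-! ### Long paths from short paths linked to a path -/

/-- The graph obtained by isolating the vertices of `A`. -/
def inner {V : Type} (G : SimpleGraph V) (A : Set V) : SimpleGraph V where
  Adj x y := G.Adj x y ∧ x ∉ A ∧ y ∉ A
  symm := ⟨fun _ _ h => ⟨h.1.symm, h.2.2, h.2.1⟩⟩
  loopless := ⟨fun _ h => G.irrefl h.1⟩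

lemma inner_chain {V : Type} {G : SimpleGraph V} {A : Set V} {l : List V}
    (h : l.IsChain (inner G A).Adj) : l.IsChain G.Adj := h.imp fun _ _ h => h.1

lemma chain_inner {V : Type} {G : SimpleGraph V} {A : Set V} {l : List V}
    (h : l.IsChain G.Adj) (hA : ∀ v ∈ l, v ∉ A) : l.IsChain (inner G A).Adj := by
  induction l with
  | nil => simp
  | cons x l ih =>
    cases l with
    | nil => simp
    | cons y l =>
      rw [List.isChain_cons_cons] at h ⊢
      exact ⟨⟨h.1, hA x (by simp), hA y (by simp)⟩, ih h.2 fun v hv => hA v (by simp [hv])⟩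

/-- Every vertex of a walk of length at least one in `inner G A` lies outside `A`. -/
lemma not_mem_of_inner_chain {V : Type} {G : SimpleGraph V} {A : Set V} {x y : V} {l : List V}
    (h : (x :: y :: l).IsChain (inner G A).Adj) : ∀ v ∈ x :: y :: l, v ∉ A := by
  induction l generalizing x y with
  | nil =>
    rw [List.isChain_cons_cons] at h
    simpa using ⟨h.1.2.1, h.1.2.2⟩
  | cons z l ih =>
    rw [List.isChain_cons_cons] at h
    intro v hv
    rcases List.mem_cons.1 hv with rfl | hv
    · exact h.1.2.1
    · exact ih h.2 v hv

lemma pairwise_map_toList {V : Type} {Y : Finset V} {β : Type} {r : β → β → Prop} {e : V → β}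
    (h : ∀ y ∈ Y, ∀ y' ∈ Y, y ≠ y' → r (e y) (e y')) : (Y.toList.map e).Pairwise r := by
  rw [List.pairwise_map]
  refine (Y.nodup_toList).imp_of_mem ?_
  intro a b ha hb hab
  exact h a (by simpa using ha) b (by simpa using hb) hab

lemma exists_marked_split {V : Type} (p : V → Prop) [DecidablePred p] (W : List V) :
    ∃ (u : List V) (D : List (V × List V)), W = u ++ D.flatMap (fun d => d.1 :: d.2) ∧
      D.map Prod.fst = W.filter p := by
  induction W with
  | nil => exact ⟨[], [], by simp⟩
  | cons x W ih =>
    obtain ⟨u, D, h1, h2⟩ := ih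
    by_cases hx : p x
    · exact ⟨[], (x, u) :: D, by simp [← h1], by simp [hx, h2]⟩
    · exact ⟨x :: u, D, by simp [← h1], by simp [hx, h2]⟩

/-- In a group of exponent two, a tooth from an `A`-path of weight `γ` to a vertex `w` is a bead:
it contributes twice to the weight. -/
lemma tooth_bead {V Γ : Type} [AddCommGroup Γ] {G : SimpleGraph V} {lab : Sym2 V → Γ} {A : Set V}
    {γ : Γ} (hΓ : ∀ x : Γ, x + x = 0) {P : List V} (hP : GP G lab A γ 1 P) {z w : V} {t : List V}
    (hz : z ∈ P) (hc : (z :: (t ++ [w])).IsChain G.Adj) (hn : (z :: (t ++ [w])).Nodup)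
    (hA : ∀ v ∈ z :: (t ++ [w]), v ∉ A) (hd : (t ++ [w]).Disjoint P) :
    ∃ β : Bead V, β.S = [w] ∧ IsBead G lab A γ β ∧
      ∀ v ∈ β.inArm ++ β.outArm, v ∈ P ∨ v ∈ t ++ [w] := by
  obtain ⟨⟨hPc, hPn, a, m, b, rfl, ha, hb, hm⟩, hPw, -⟩ := hP
  have hzA : z ∉ A := hA z (by simp)
  have hzm : z ∈ m := by
    simp only [List.mem_cons, List.mem_append, List.not_mem_nil, or_false] at hz
    rcases hz with rfl | h | rfl
    · exact absurd ha hzA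
    · exact h
    · exact absurd hb hzA
  obtain ⟨m1, m2, rfl⟩ := List.append_of_mem hzm
  have e0 : a :: ((m1 ++ z :: m2) ++ [b]) = (a :: m1) ++ z :: (m2 ++ [b]) := by simp
  rw [e0] at hPc hPn hPw hd
  have hPc' := List.isChain_split.1 hPc
  have e1 : a :: ((m1 ++ z :: t) ++ [w]) = (a :: m1) ++ z :: (t ++ [w]) := by simp
  have e2 : w :: ((t.reverse ++ z :: m2) ++ [b]) = (t ++ [w]).reverse ++ z :: (m2 ++ [b]) := by simp
  have e3 : (t ++ [w]).reverse ++ [z] = (z :: (t ++ [w])).reverse := by simp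
  refine ⟨⟨[w], [], a, m1 ++ z :: t, w, w, t.reverse ++ z :: m2, b⟩, rfl,
    ⟨rfl, rfl, ?_, ?_, ?_, ?_, ha, hb, ?_, ?_, ?_⟩, ?_⟩ <;>
    simp only [Bead.inArm, Bead.outArm, e1, e2]
  · exact List.isChain_split.2 ⟨hPc'.1, hc⟩
  · rw [List.nodup_append] at hPn ⊢
    refine ⟨hPn.1, hn, ?_⟩
    rintro x hx y hy rfl
    rcases List.mem_cons.1 hy with rfl | hy
    · exact hPn.2.2 _ hx _ (by simp) rfl
    · exact hd hy (List.mem_append_left _ hx)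
  · refine List.isChain_split.2 ⟨?_, hPc'.2⟩
    rw [e3, List.isChain_reverse]
    exact hc.imp fun _ _ h => h.symm
  · rw [List.nodup_append] at hPn ⊢
    refine ⟨List.nodup_reverse.2 (List.nodup_cons.1 hn).2, hPn.2.1, ?_⟩
    rintro x hx y hy rfl
    exact hd (List.mem_reverse.1 hx) (List.mem_append_right _ hy)
  · intro v hv
    simp only [List.mem_append, List.mem_cons] at hv
    rcases hv with h | rfl | h
    · exact hm v (by simp [h])
    · exact hzA
    · exact hA v (by simp [h])
  · intro v hv
    simp only [List.mem_append, List.mem_cons, List.mem_reverse] at hv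
    rcases hv with h | rfl | h
    · exact hA v (by simp [h])
    · exact hzA
    · exact hm v (by simp [h])
  · rw [lw_append_cons, lw_append_cons lab _ z (m2 ++ [b]), e3, lw_reverse, lw_single, add_zero,
      ← hPw, lw_append_cons lab (a :: m1) z (m2 ++ [b])]
    have := hΓ (lw lab (z :: (t ++ [w])))
    rw [add_assoc, ← add_assoc (lw lab (z :: (t ++ [w]))), this, zero_add]
  · intro v hv
    simp only [List.mem_append, List.mem_cons, List.mem_reverse, List.not_mem_nil, or_false] at hv ⊢
    tauto

section teeth
variable {V Γ : Type} [AddCommGroup Γ] [Fintype V] [DecidableEq V]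
  {G : SimpleGraph V} {lab : Sym2 V → Γ} {A : Set V} {γ : Γ}

/-- The fans of size two at the vertices of `Y` are ears of `W`. A path through many of these ears meets
many of the disjoint short paths. -/
lemma pack_of_linked_two [Fintype Γ] {ℓ : ℕ} (hℓ : 0 < ℓ) (K : ℕ) {W : List V}
    (hWc : W.IsChain (inner G A).Adj) (hWn : W.Nodup) (hWA : ∀ v ∈ W, v ∉ A) {Y : Finset V}
    (hY : Linked (inner G A) W.toFinset 2 Y) (P : V → List V)
    (hP : ∀ y ∈ Y, GP G lab A γ 1 (P y) ∧ (P y).length ≤ ℓ ∧ y ∈ P y ∧ y ∉ A ∧ (P y).Disjoint W)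
    (hPd : ∀ y ∈ Y, ∀ y' ∈ Y, y ≠ y' → (P y).Disjoint (P y'))
    (hcard : 4 ^ ((K * (Fintype.card Γ * ℓ + 1)) ^ ℓ) ≤ Y.card) : Pack (GP G lab A γ ℓ) K := by
  have hYW : ∀ y ∈ Y, y ∉ W := fun y hy hw => (hP y hy).2.2.2.2 (hP y hy).2.2.1 hw
  obtain ⟨g, w, hg⟩ := hY.fan (Finset.disjoint_left.2 fun y hy hw => hYW y hy (by simpa using hw))
  let e : V → List V := fun y => w y 0 :: (((g y 0).reverse ++ y :: g y 1) ++ [w y 1])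
  have hmem : ∀ y v, v ∈ e y ↔ v = y ∨ v ∈ g y 0 ++ [w y 0] ∨ v ∈ g y 1 ++ [w y 1] := by
    intro y v; simp [e]; tauto
  have hed : ∀ y ∈ Y, ∀ y' ∈ Y, y ≠ y' → (e y).Disjoint (e y') := by
    intro y hy y' hy' hne v hv hv'
    rw [hmem] at hv hv'
    have d : ∀ i j, v ∈ g y i ++ [w y i] → v ∈ g y' j ++ [w y' j] → False := fun i j h h' =>
      (hg y hy i).2.2.2.2.2 y' hy' j (by simp [hne]) h h'
    have n1 : ∀ i, v ∈ g y i ++ [w y i] → v ∉ Y := fun i h => (hg y hy i).2.2.2.2.1 v h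
    have n2 : ∀ i, v ∈ g y' i ++ [w y' i] → v ∉ Y := fun i h => (hg y' hy' i).2.2.2.2.1 v h
    rcases hv with rfl | hv | hv <;> rcases hv' with h' | hv' | hv'
    · exact hne h'
    · exact n2 _ hv' hy
    · exact n2 _ hv' hy
    · exact n1 _ hv (h' ▸ hy')
    · exact d _ _ hv hv'
    · exact d _ _ hv hv'
    · exact n1 _ hv (h' ▸ hy')
    · exact d _ _ hv hv'
    · exact d _ _ hv hv'
  have hchain : ∀ y ∈ Y, (e y).IsChain (inner G A).Adj := by
    intro y hy
    have h0 := (hg y hy 0).1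
    have h1 := (hg y hy 1).1
    have h0' : ((w y 0 :: (g y 0).reverse) ++ [y]).IsChain (inner G A).Adj := by
      have : (w y 0 :: (g y 0).reverse) ++ [y] = (y :: (g y 0 ++ [w y 0])).reverse := by simp
      rw [this, List.isChain_reverse]
      exact h0.imp fun _ _ h => h.symm
    have := List.isChain_split.2 ⟨h0', h1⟩
    simpa [e] using this
  have heA : ∀ y ∈ Y, ∀ v ∈ e y, v ∉ A := by
    intro y hy
    have := hchain y hy
    obtain ⟨a, b, t, ht⟩ : ∃ a b t, e y = a :: b :: t := by
      simp only [e]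
      cases (g y 0).reverse with
      | nil => exact ⟨_, _, _, rfl⟩
      | cons => exact ⟨_, _, _, rfl⟩
    rw [ht] at this ⊢
    exact not_mem_of_inner_chain this
  have hrung : ∀ y ∈ Y, Rung (inner G A) W W (e y) := by
    intro y hy
    have h0 := hg y hy 0
    have h1 := hg y hy 1
    refine ⟨w y 0, (g y 0).reverse ++ y :: g y 1, w y 1, fun v => Iff.rfl, hchain y hy, ?_,
      by simpa using h0.2.2.1, by simpa using h1.2.2.1, ?_⟩
    · have hd := h0.2.2.2.2.2 y hy 1 (by simp)
      have n0 := List.nodup_reverse.2 (List.nodup_cons.1 h0.2.1).2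
      have e1 : w y 0 :: (((g y 0).reverse ++ y :: g y 1) ++ [w y 1])
          = (g y 0 ++ [w y 0]).reverse ++ (y :: (g y 1 ++ [w y 1])) := by simp
      rw [e1, List.nodup_append]
      refine ⟨n0, h1.2.1, ?_⟩
      rintro a ha b hb rfl
      rw [List.mem_reverse] at ha
      rcases List.mem_cons.1 hb with rfl | hb
      · exact (List.nodup_cons.1 h0.2.1).1 ha
      · exact hd ha hb
    · intro v hv
      have : v ∉ W := by
        simp only [List.mem_append, List.mem_reverse, List.mem_cons] at hv
        rcases hv with h | rfl | h
        · simpa using h0.2.2.2.1 v h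
        · exact hYW v hy
        · simpa using h1.2.2.2.1 v h
      exact ⟨this, this⟩
  obtain ⟨T, Fs, h1, h2, -, h4, h5, h6, h7, h8⟩ := collects_ears _ W (Y.toList.map e) hWc hWn
    (pairwise_map_toList hed) (by
      intro l hl
      obtain ⟨y, hy, rfl⟩ := List.mem_map.1 hl
      exact hrung y (by simpa using hy)) (by simpa using hcard)
  have hTA : ∀ v ∈ T, v ∉ A := by
    intro v hv
    rcases h4 v hv with h | ⟨l, hl, hvl⟩
    · exact hWA v h
    · obtain ⟨y, hy, rfl⟩ := List.mem_map.1 hl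
      exact heA y (by simpa using hy) v hvl
  let Y' := Y.filter (· ∈ T)
  have hFs : Fs ⊆ Y'.toList.map e := by
    intro l hl
    obtain ⟨y, hy, rfl⟩ := List.mem_map.1 (h5 hl)
    refine List.mem_map.2 ⟨y, ?_, rfl⟩
    simp only [Y', Finset.mem_toList, Finset.mem_filter]
    exact ⟨by simpa using hy, h8 _ hl y ((hmem y y).2 (.inl rfl))⟩
  have hle := (h6.subperm hFs).length_le
  refine pack_of_touch hℓ K (inner_chain h1) h2 hTA (Ps := Y'.toList.map P)
    (pairwise_map_toList fun y hy y' hy' => hPd y (Finset.mem_filter.1 hy).1 y'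
      (Finset.mem_filter.1 hy').1) ?_ (by
      rw [h7] at hle
      simpa using hle)
  intro l hl
  obtain ⟨y, hy, rfl⟩ := List.mem_map.1 hl
  simp only [Y', Finset.mem_toList, Finset.mem_filter] at hy
  exact ⟨(hP y hy.1).1, (hP y hy.1).2.1, y, hy.2, (hP y hy.1).2.2.1⟩

/-- In a group of exponent two, teeth from `W` to the short paths are beads on `W`. -/
lemma pack_of_linked_one [Fintype Γ] (hΓ : ∀ x : Γ, x + x = 0) {ℓ : ℕ} (hℓ : 0 < ℓ) (K : ℕ)
    {W : List V} (hWc : W.IsChain (inner G A).Adj) (hWn : W.Nodup) (hWA : ∀ v ∈ W, v ∉ A)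
    {Y : Finset V} (hY : Linked (inner G A) W.toFinset 1 Y) (P : V → List V)
    (hP : ∀ y ∈ Y, GP G lab A γ 1 (P y) ∧ (P y).length ≤ ℓ ∧ y ∈ P y ∧ y ∉ A ∧ (P y).Disjoint W)
    (hPd : ∀ y ∈ Y, ∀ y' ∈ Y, y ≠ y' → (P y).Disjoint (P y'))
    (hcard : ℓ * (K * (Fintype.card Γ * ℓ + 1)) ≤ Y.card) : Pack (GP G lab A γ ℓ) K := by
  classical
  have hYW : ∀ y ∈ Y, y ∉ W := fun y hy hw => (hP y hy).2.2.2.2 (hP y hy).2.2.1 hw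
  obtain ⟨g, w, hg⟩ := hY.fan (Finset.disjoint_left.2 fun y hy hw => hYW y hy (by simpa using hw))
  -- cut each linking path at its last vertex on one of the short paths
  have hcut : ∀ y : Y, ∃ (z : V) (t : List V) (i : V), i ∈ Y ∧ z ∈ P i ∧
      (z :: (t ++ [w y 0])) <:+ (y.1 :: (g y 0 ++ [w y 0])) ∧
      ∀ v ∈ t ++ [w y 0], ∀ i ∈ Y, v ∉ P i := by
    rintro ⟨y, hy⟩
    obtain ⟨s, z, t, h1, ⟨i, hi, hz⟩, h3⟩ := exists_last (fun v => ∃ i ∈ Y, v ∈ P i)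
      (y :: (g y 0 ++ [w y 0])) ⟨y, by simp, y, hy, (hP y hy).2.2.1⟩
    have ht : t ≠ [] := by
      rintro rfl
      have : y :: (g y 0 ++ [w y 0]) = (y :: g y 0) ++ [w y 0] := by simp
      rw [this] at h1
      have := (List.append_inj' h1 rfl).2
      simp only [List.cons.injEq, and_true] at this
      subst this
      exact (hP i hi).2.2.2.2 hz (by simpa using (hg y hy 0).2.2.1)
    obtain ⟨t', x, rfl⟩ := List.eq_nil_or_concat t |>.resolve_left ht
    rw [List.concat_eq_append] at h1 h3
    have hx : x = w y 0 := by
      have e1 : y :: (g y 0 ++ [w y 0]) = (y :: g y 0) ++ [w y 0] := by simp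
      have e2 : s ++ z :: (t' ++ [x]) = (s ++ z :: t') ++ [x] := by simp
      rw [e1, e2] at h1
      have := (List.append_inj' h1 rfl).2
      simpa using this.symm
    subst hx
    refine ⟨z, t', i, hi, hz, ⟨s, h1.symm⟩, ?_⟩
    intro v hv i hi hvi
    exact h3 v hv ⟨i, hi, hvi⟩
  choose! z t φ hφ hz hsuf hU using fun y (hy : y ∈ Y) => hcut ⟨y, hy⟩
  dsimp only at hsuf hU
  have hfd : ∀ y ∈ Y, ∀ y' ∈ Y, y ≠ y' →
      (y :: (g y 0 ++ [w y 0])).Disjoint (y' :: (g y' 0 ++ [w y' 0])) := by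
    intro y hy y' hy' hne v hv hv'
    rcases List.mem_cons.1 hv with rfl | hv
    · rcases List.mem_cons.1 hv' with h | h
      · exact hne h
      · exact (hg y' hy' 0).2.2.2.2.1 _ h hy
    · rcases List.mem_cons.1 hv' with rfl | h
      · exact (hg y hy 0).2.2.2.2.1 _ hv hy'
      · exact (hg y hy 0).2.2.2.2.2 y' hy' 0 (by simp [hne]) hv h
  have hzinj : ∀ y ∈ Y, ∀ y' ∈ Y, z y = z y' → y = y' := by
    intro y hy y' hy' h
    by_contra hne
    exact hfd y hy y' hy' hne (a := z y) ((hsuf y hy).subset (by simp))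
      ((hsuf y' hy').subset (by rw [h]; simp))
  have hwinj : ∀ y ∈ Y, ∀ y' ∈ Y, w y 0 = w y' 0 → y = y' := by
    intro y hy y' hy' h
    by_contra hne
    exact hfd y hy y' hy' hne (a := w y 0) (by simp) (by rw [h]; simp)
  have hI : K * (Fintype.card Γ * ℓ + 1) ≤ (Y.image φ).card := by
    have : Y.card ≤ ℓ * (Y.image φ).card := by
      refine Finset.card_le_mul_card_image Y ℓ fun i hi => ?_
      obtain ⟨y0, hy0, rfl⟩ := Finset.mem_image.1 hi
      refine le_trans ?_ (hP (φ y0) (hφ y0 hy0)).2.1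
      refine le_trans ?_ (List.toFinset_card_le _)
      refine Finset.card_le_card_of_injOn z ?_ ?_
      · intro y hy
        rw [Finset.mem_coe, Finset.mem_filter] at hy
        have := hz y hy.1
        rw [hy.2] at this
        simpa using this
      · intro y hy y' hy' h
        rw [Finset.mem_coe, Finset.mem_filter] at hy hy'
        exact hzinj y hy.1 y' hy'.1 h
    exact Nat.le_of_mul_le_mul_left (hcard.trans this) hℓ
  have hψ : ∀ i ∈ Y.image φ, ∃ y ∈ Y, φ y = i := fun i hi => Finset.mem_image.1 hi
  choose! ψ hψY hψ using hψ
  -- one bead for each short path reached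
  have hbead : ∀ i ∈ Y.image φ, ∃ β : Bead V, β.S = [w (ψ i) 0] ∧ IsBead G lab A γ β ∧
      ∀ v ∈ β.inArm ++ β.outArm, v ∈ P i ∨ v ∈ t (ψ i) ++ [w (ψ i) 0] := by
    intro i hi
    have hy := hψY i hi
    have hiY : i ∈ Y := hψ i hi ▸ hφ _ hy
    have h0 := hg _ hy 0
    have hA : ∀ v ∈ (ψ i) :: (g (ψ i) 0 ++ [w (ψ i) 0]), v ∉ A := by
      have := h0.1
      obtain ⟨b, l, e⟩ : ∃ b l, g (ψ i) 0 ++ [w (ψ i) 0] = b :: l :=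
        List.exists_cons_of_ne_nil (by simp)
      rw [e] at this ⊢
      exact not_mem_of_inner_chain this
    refine tooth_bead hΓ (hP i hiY).1 (z := z (ψ i)) ?_
      (inner_chain (h0.1.suffix (hsuf _ hy))) (h0.2.1.sublist (hsuf _ hy).sublist)
      (fun v hv => hA v ((hsuf _ hy).subset hv)) (fun v hv hv' => hU _ hy v hv i hiY hv')
    have := hz _ hy
    rwa [hψ i hi] at this
  have hbead' : ∀ i, ∃ β : Bead V, i ∈ Y.image φ → β.S = [w (ψ i) 0] ∧ IsBead G lab A γ β ∧
      ∀ v ∈ β.inArm ++ β.outArm, v ∈ P i ∨ v ∈ t (ψ i) ++ [w (ψ i) 0] := by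
    intro i
    by_cases hi : i ∈ Y.image φ
    · obtain ⟨β, h⟩ := hbead i hi
      exact ⟨β, fun _ => h⟩
    · exact ⟨⟨[], [], i, [], i, i, [], i⟩, fun h => absurd h hi⟩
  choose β hβ' using hbead'
  have hβS := fun i hi => (hβ' i hi).1
  have hβ := fun i hi => (hβ' i hi).2.1
  have hβm := fun i hi => (hβ' i hi).2.2
  obtain ⟨u, D, hD1, hD2⟩ := exists_marked_split (fun v => ∃ i ∈ Y.image φ, w (ψ i) 0 = v) W
  have hD3 : ∀ d ∈ D, ∃ i ∈ Y.image φ, w (ψ i) 0 = d.1 := by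
    intro d hd
    have : d.1 ∈ D.map Prod.fst := List.mem_map_of_mem hd
    rw [hD2, List.mem_filter] at this
    simpa using this.2
  have hj : ∀ v, (∃ i ∈ Y.image φ, w (ψ i) 0 = v) → ∃ i ∈ Y.image φ, w (ψ i) 0 = v := fun v h => h
  choose! j hjI hjw using hj
  let Bs : List (Bead V) := D.map fun d => { β (j d.1) with gap := d.2 }
  have hspine : Bead.spine Bs = D.flatMap fun d => d.1 :: d.2 := by
    simp only [Bead.spine, Bs, List.flatMap_map]
    refine List.flatMap_congr ?_
    intro d hd
    rw [hβS _ (hjI _ (hD3 d hd)), hjw _ (hD3 d hd)]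
    rfl
  have hsufW : Bead.spine Bs <:+ W := ⟨u, by rw [hspine, ← hD1]⟩
  have hbeads : IsBeads G lab A γ Bs := by
    refine ⟨inner_chain (hWc.suffix hsufW), hWn.sublist hsufW.sublist,
      fun v hv => hWA v (hsufW.subset hv), ?_, ?_⟩
    · intro b hb
      obtain ⟨d, hd, rfl⟩ := List.mem_map.1 hb
      have hi := hjI _ (hD3 d hd)
      have hiY : j d.1 ∈ Y := hψ _ hi ▸ hφ _ (hψY _ hi)
      refine ⟨hβ _ hi, fun v hv hvs => ?_⟩
      have hvW := hsufW.subset hvs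
      show v ∈ (β (j d.1)).S
      rw [hβS _ hi]
      rcases hβm _ hi v hv with h | h
      · exact absurd hvW ((hP _ hiY).2.2.2.2 h)
      · rcases List.mem_append.1 h with h | h
        · exfalso
          have := (hsuf _ (hψY _ hi))
          have h0 := hg _ (hψY _ hi) 0
          -- the interior of the tooth avoids `W`
          have hin : v ∈ (ψ (j d.1)) :: (g (ψ (j d.1)) 0 ++ [w (ψ (j d.1)) 0]) :=
            this.subset (by simp [h])
          have hne : v ≠ w (ψ (j d.1)) 0 := by
            rintro rfl
            have hn := h0.2.1.sublist this.sublist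
            rw [List.nodup_cons, List.nodup_append] at hn
            exact hn.2.2.2 _ h _ (by simp) rfl
          simp only [List.mem_cons, List.mem_append, List.not_mem_nil, or_false] at hin
          rcases hin with rfl | hin | hin
          · exact hYW _ (hψY _ hi) hvW
          · exact h0.2.2.2.1 v hin (by simpa using hvW)
          · exact hne hin
        · exact h
    · simp only [Bs]
      rw [List.pairwise_map]
      have hnd : (D.map Prod.fst).Nodup := by rw [hD2]; exact hWn.filter _
      rw [List.Nodup, List.pairwise_map] at hnd
      refine hnd.imp_of_mem ?_
      intro d d' hd hd' hne
      have hi := hjI _ (hD3 d hd)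
      have hi' := hjI _ (hD3 d' hd')
      have hiY : j d.1 ∈ Y := hψ _ hi ▸ hφ _ (hψY _ hi)
      have hiY' : j d'.1 ∈ Y := hψ _ hi' ▸ hφ _ (hψY _ hi')
      have hne1 : j d.1 ≠ j d'.1 := by
        intro h
        exact hne (by rw [← hjw _ (hD3 d hd), ← hjw _ (hD3 d' hd'), h])
      have hne2 : ψ (j d.1) ≠ ψ (j d'.1) := by
        intro h
        apply hne1
        rw [← hψ _ hi, ← hψ _ hi', h]
      intro v hv hv'
      rcases hβm _ hi v hv with h | h <;> rcases hβm _ hi' v hv' with h' | h'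
      · exact hPd _ hiY _ hiY' hne1 h h'
      · exact hU _ (hψY _ hi') v h' _ hiY h
      · exact hU _ (hψY _ hi) v h _ hiY' h'
      · exact hfd _ (hψY _ hi) _ (hψY _ hi') hne2
          ((hsuf _ (hψY _ hi)).subset (List.mem_cons_of_mem _ h))
          ((hsuf _ (hψY _ hi')).subset (List.mem_cons_of_mem _ h'))
  have hlen : (Y.image φ).card ≤ Bs.length := by
    have e : Bs.length = (D.map Prod.fst).length := by simp [Bs]
    rw [e, hD2]
    refine le_trans ?_ (List.toFinset_card_le _)
    refine Finset.card_le_card_of_injOn (fun i => w (ψ i) 0) ?_ ?_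
    · intro i hi
      rw [Finset.mem_coe, List.mem_toFinset, List.mem_filter]
      exact ⟨by simpa using (hg _ (hψY i hi) 0).2.2.1, decide_eq_true ⟨i, hi, rfl⟩⟩
    · intro i hi i' hi' h
      have := hwinj _ (hψY i hi) _ (hψY i' hi') h
      rw [← hψ i hi, ← hψ i' hi', this]
  obtain ⟨Ps, h1, h2, h3, -⟩ := pack_of_beads hℓ K hbeads (hI.trans hlen)
  exact ⟨Ps, h1, h2, h3⟩

end teeth

/-! ### A path meeting almost all long paths -/

section pathw
variable {V Γ : Type} [AddCommGroup Γ] {G : SimpleGraph V} {lab : Sym2 V → Γ} {A : Set V} {γ : Γ}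

lemma Pack.mono {V : Type} {C C' : List V → Prop} {k : ℕ} (h : Pack C k) (hC : ∀ l, C l → C' l) :
    Pack C' k := by
  obtain ⟨Ps, h1, h2, h3⟩ := h
  exact ⟨Ps, h1, fun l hl => hC l (h2 l hl), h3⟩

lemma Pack.of_le {V : Type} {C : List V → Prop} {k k' : ℕ} (h : Pack C k) (hk : k' ≤ k) :
    Pack C k' := by
  obtain ⟨Ps, h1, h2, h3⟩ := h
  exact ⟨Ps.take k', by simp [h1, hk], fun l hl => h2 l (List.mem_of_mem_take hl),
    h3.sublist (List.take_sublist _ _)⟩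

lemma exists_ends {l : List V} (h : IsAP G A l) :
    ∃ a b, a ∈ l ∧ b ∈ l ∧ ∀ v ∈ l, v ∈ A → v = a ∨ v = b := by
  obtain ⟨-, -, a, m, b, rfl, ha, hb, hm⟩ := h
  refine ⟨a, b, by simp, by simp, ?_⟩
  intro v hv hvA
  simp only [List.mem_cons, List.mem_append, List.not_mem_nil, or_false] at hv
  rcases hv with h | h | h
  · exact .inl h
  · exact absurd hvA (hm v h)
  · exact .inr h

lemma exists_biUnion {α V : Type} (Ps : List α) (m : ℕ) (Q : α → V → Prop)
    (h : ∀ p ∈ Ps, ∃ X : Finset V, X.card ≤ m ∧ ∀ v, Q p v → v ∈ X) :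
    ∃ X : Finset V, X.card ≤ Ps.length * m ∧ ∀ p ∈ Ps, ∀ v, Q p v → v ∈ X := by
  classical
  induction Ps with
  | nil => exact ⟨∅, by simp⟩
  | cons p Ps ih =>
    obtain ⟨X, h1, h2⟩ := ih fun q hq => h q (by simp [hq])
    obtain ⟨X', h3, h4⟩ := h p (by simp)
    refine ⟨X' ∪ X, (Finset.card_union_le _ _).trans ?_, ?_⟩
    · simp only [List.length_cons, Nat.add_mul]; omega
    · intro q hq v hv
      rcases List.mem_cons.1 hq with rfl | hq
      · exact Finset.mem_union_left _ (h4 v hv)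
      · exact Finset.mem_union_right _ (h2 q hq v hv)

/-- A class of `A`-paths that splits into fibers which are disjoint outside of `A` is hit by few
vertices if each fiber is. -/
lemma hit_of_fibers {I : Type} {C : List V → Prop} (ι : List V → I) {K m : ℕ}
    (hAP : ∀ l, C l → IsAP G A l)
    (hd : ∀ l l', C l → C l' → ι l ≠ ι l' → ∀ v ∈ l, v ∈ l' → v ∈ A)
    (hf : ∀ l₀, C l₀ → ∃ X : Finset V, X.card ≤ m ∧ ∀ l, C l → ι l = ι l₀ → ∃ x ∈ X, x ∈ l)
    (hK : ¬ Pack C K) : ∃ X : Finset V, X.card ≤ K * (m + 2) ∧ Hit C X := by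
  classical
  obtain ⟨Ps, h1, h2, -, h4⟩ := exists_blocking C (fun l l' => ι l ≠ ι l' ∧ l.Disjoint l') K
    (by
      rintro ⟨Ps, h1, h2, h3⟩
      exact hK ⟨Ps, h1, h2, h3.imp fun h => h.2⟩)
  have hX : ∀ p ∈ Ps, ∃ X : Finset V, X.card ≤ m + 2 ∧ ∀ l, C l → ¬ (ι l ≠ ι p ∧ l.Disjoint p) →
      ∃ x ∈ X, x ∈ l := by
    intro p hp
    obtain ⟨X, hX, hX'⟩ := hf p (h2 p hp)
    obtain ⟨a, b, -, -, hab⟩ := exists_ends (hAP p (h2 p hp))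
    refine ⟨X ∪ {a, b}, (Finset.card_union_le _ _).trans
      (Nat.add_le_add hX (Finset.card_insert_le _ _)), ?_⟩
    intro l hl hn
    by_cases hι : ι l = ι p
    · obtain ⟨x, hx, hxl⟩ := hX' l hl hι
      exact ⟨x, Finset.mem_union_left _ hx, hxl⟩
    · simp only [ne_eq, hι, not_false_eq_true, true_and, List.Disjoint] at hn
      push Not at hn
      obtain ⟨v, hv, hv', -⟩ := hn
      refine ⟨v, Finset.mem_union_right _ ?_, hv⟩
      rcases hab v hv' (hd l p hl (h2 p hp) hι v hv hv') with rfl | rfl <;> simp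
  have : Nonempty (Finset V) := ⟨∅⟩
  choose! X hX1 hX2 using hX
  obtain ⟨Z, hZ, hZ'⟩ := exists_biUnion Ps (m + 2) (fun p v => v ∈ X p)
    (fun p hp => ⟨X p, hX1 p hp, fun v hv => hv⟩)
  refine ⟨Z, hZ.trans (Nat.mul_le_mul_right _ h1.le), fun l hl => ?_⟩
  obtain ⟨p, hp, hn⟩ := h4 l hl
  obtain ⟨x, hx, hxl⟩ := hX2 p hp l hl hn
  exact ⟨x, hZ' p hp x hx, hxl⟩

/-- Any two vertices of a walk are joined by a part of the walk. -/
lemma exists_conn_of_chain {H : SimpleGraph V} {m : List V} (hm : m.IsChain H.Adj) {u v : V}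
    (hu : u ∈ m) (hv : v ∈ m) : ∃ p, Conn H.Adj u v p ∧ p ⊆ m := by
  have key : ∀ {u v : V} {s t : List V}, m = s ++ u :: t → v ∈ u :: t →
      ∃ p, Conn H.Adj u v p ∧ p ⊆ m := by
    intro u v s t e hv
    obtain ⟨t1, t2, e'⟩ := List.append_of_mem hv
    have hinf : t1 ++ [v] <:+: m := ⟨s, t2, by rw [e, e']; simp⟩
    refine ⟨t1 ++ [v], ⟨hm.middle hinf, ?_, by simp⟩, hinf.subset⟩
    cases t1 with
    | nil => simp at e' ⊢; exact e'.1.symm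
    | cons x t1 => simp at e' ⊢; exact e'.1.symm
  obtain ⟨s, t, e⟩ := List.append_of_mem hu
  have hv' := hv
  rw [e] at hv'
  rcases List.mem_append.1 hv' with h | h
  · obtain ⟨s1, s2, rfl⟩ := List.append_of_mem h
    obtain ⟨p, hp, hp'⟩ := key (u := v) (v := u) (s := s1) (t := s2 ++ u :: t)
      (by rw [e]; simp) (by simp)
    exact ⟨p.reverse, hp.reverse.mono fun _ _ h => h.symm, by
      intro x hx; exact hp' (List.mem_reverse.1 hx)⟩
  · exact key e h

lemma IsAP.conn {l : List V} (h : IsAP G A l) {u v : V} (hu : u ∈ l) (huA : u ∉ A) (hv : v ∈ l)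
    (hvA : v ∉ A) : ∃ p, Conn (inner G A).Adj u v p ∧ p ⊆ l ∧ ∀ x ∈ p, x ∉ A := by
  obtain ⟨hc, -, a, m, b, rfl, ha, hb, hm⟩ := h
  have hmem : ∀ x, x ∈ a :: (m ++ [b]) → x ∉ A → x ∈ m := by
    intro x hx hxA
    simp only [List.mem_cons, List.mem_append, List.not_mem_nil, or_false] at hx
    rcases hx with rfl | h | rfl
    · exact absurd ha hxA
    · exact h
    · exact absurd hb hxA
  have hinf : m <:+: a :: (m ++ [b]) := ⟨[a], [b], by simp⟩
  obtain ⟨p, hp, hp'⟩ := exists_conn_of_chain (chain_inner (hc.middle hinf) hm) (hmem u hu huA)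
    (hmem v hv hvA)
  exact ⟨p, hp, fun x hx => hinf.subset (hp' hx), fun x hx => hm x (hp' hx)⟩

/-- An `A`-path with at least three vertices has an interior vertex. -/
lemma IsAP.exists_interior {l : List V} (h : IsAP G A l) (hl : 2 < l.length) :
    ∃ v ∈ l, v ∉ A := by
  obtain ⟨-, -, a, m, b, rfl, -, -, hm⟩ := h
  cases m with
  | nil => simp at hl
  | cons x m => exact ⟨x, by simp, hm x (by simp)⟩

/-- There is a walk from `u` to `v` that avoids the set of vertices `L`. -/
def Reach (H : SimpleGraph V) (L : List V) (u v : V) : Prop :=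
  ∃ p, Conn H.Adj u v p ∧ ∀ x ∈ p, x ∉ L

lemma Reach.trans {H : SimpleGraph V} {L : List V} {u v w : V} (h : Reach H L u v)
    (h' : Reach H L v w) : Reach H L u w := by
  obtain ⟨p, hp, hpL⟩ := h
  obtain ⟨q, hq, hqL⟩ := h'
  obtain ⟨s, rfl⟩ := hp.eq_concat
  obtain ⟨t, rfl⟩ := hq.eq_cons
  refine ⟨s ++ v :: t, hp.join hq, ?_⟩
  intro x hx
  rcases List.mem_append.1 hx with h | h
  · exact hpL x (by simp [h])
  · exact hqL x h

lemma Reach.symm {H : SimpleGraph V} {L : List V} {u v : V} (h : Reach H L u v) :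
    Reach H L v u := by
  obtain ⟨p, hp, hpL⟩ := h
  exact ⟨p.reverse, hp.reverse.mono fun _ _ h => h.symm, fun x hx => hpL x (List.mem_reverse.1 hx)⟩

/-- The interiors of the `A`-paths avoiding `L` lie in components of `G - A - L`. If the paths in
each such component can be hit by few vertices, then so can all of them. -/
lemma hit_of_components (L : List V) {C : List V → Prop} {K m : ℕ}
    (hC : ∀ l, C l → IsAP G A l ∧ 2 < l.length ∧ ∀ v ∈ l, v ∉ A → v ∉ L)
    (hf : ∀ l₀, C l₀ → ∀ u ∈ l₀, u ∉ A → ∃ X : Finset V, X.card ≤ m ∧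
      ∀ l, C l → (∀ v ∈ l, v ∉ A → Reach (inner G A) L u v) → ∃ x ∈ X, x ∈ l)
    (hK : ¬ Pack C K) : ∃ X : Finset V, X.card ≤ K * (m + 2) ∧ Hit C X := by
  have hconn : ∀ l, C l → ∀ u ∈ l, u ∉ A → ∀ v ∈ l, v ∉ A → Reach (inner G A) L u v := by
    intro l hl u hu huA v hv hvA
    obtain ⟨p, hp, hpl, hpA⟩ := (hC l hl).1.conn hu huA hv hvA
    exact ⟨p, hp, fun x hx => (hC l hl).2.2 x (hpl hx) (hpA x hx)⟩
  have hdir : ∀ l l', C l → C l' → ∀ v ∈ l, v ∈ l' → v ∉ A → ∀ w,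
      (∃ u ∈ l, u ∉ A ∧ Reach (inner G A) L u w) → ∃ u ∈ l', u ∉ A ∧ Reach (inner G A) L u w := by
    rintro l l' hl hl' v hv hv' hvA w ⟨u, hu, huA, hr⟩
    exact ⟨v, hv', hvA, (hconn l hl v hv hvA u hu huA).trans hr⟩
  refine hit_of_fibers (fun l => {w | ∃ u ∈ l, u ∉ A ∧ Reach (inner G A) L u w})
    (fun l hl => (hC l hl).1) ?_ ?_ hK
  · intro l l' hl hl' hne v hv hv'
    by_contra hvA
    refine hne (Set.ext fun w => ⟨hdir l l' hl hl' v hv hv' hvA w, hdir l' l hl' hl v hv' hv hvA w⟩)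
  · intro l₀ hl₀
    obtain ⟨u, hu, huA⟩ := (hC l₀ hl₀).1.exists_interior (hC l₀ hl₀).2.1
    obtain ⟨X, hX, hX'⟩ := hf l₀ hl₀ u hu huA
    refine ⟨X, hX, fun l hl hι => hX' l hl ?_⟩
    intro v hv hvA
    obtain ⟨u', hu', huA', hr⟩ := (Set.ext_iff.1 hι v).1
      ⟨v, hv, hvA, hconn l hl v hv hvA v hv hvA⟩
    exact (hconn l₀ hl₀ u hu huA u' hu' huA').trans hr

/-- The paths of the class `C` inside the component of `z` in `G - A - W` cannot be hit by `n`
vertices. -/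
def Rich (G : SimpleGraph V) (A : Set V) (C : List V → Prop) (n : ℕ) (z : V) (W : List V) : Prop :=
  ¬ ∃ X : Finset V, X.card ≤ n ∧
    ∀ l, C l → (∀ v ∈ l, v ∉ A → Reach (inner G A) W z v) → ∃ x ∈ X, x ∈ l

/-- If there are no `k + 1` disjoint long paths, and the long paths have the Erdős–Pósa property
for the parameter `k`, then a bounded number of vertices and a path avoiding `A` together meet
all long paths. -/
lemma exists_path [Fintype V] {ℓ k g : ℕ} (hℓ : 2 ≤ ℓ)
    (hg : ∀ G' : SimpleGraph V, Pack (GP G' lab A γ ℓ) k ∨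
      ∃ X : Finset V, X.card ≤ g ∧ Hit (GP G' lab A γ ℓ) X)
    (hK : ¬ Pack (GP G lab A γ ℓ) (k + 1)) :
    ∃ (W : List V) (X : Finset V), W.IsChain (inner G A).Adj ∧ W.Nodup ∧ (∀ v ∈ W, v ∉ A) ∧
      X.card ≤ (k + 1) * (2 * k + 2) + g + 1 ∧
      ∀ l, GP G lab A γ ℓ l → (∀ x ∈ X, x ∉ l) → ∃ v ∈ W, v ∈ l := by
  classical
  have hlen : ∀ l, GP G lab A γ ℓ l → 2 < l.length := fun l hl => lt_of_le_of_lt hℓ hl.2.2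
  by_cases hex : ∃ n z W, n = (z :: W).length ∧ (z :: W).IsChain (inner G A).Adj ∧
      (z :: W).Nodup ∧ (∀ v ∈ z :: W, v ∉ A) ∧ Rich G A (GP G lab A γ ℓ) (2 * k) z W
  swap
  · obtain ⟨X, hX, hX'⟩ := hit_of_components (G := G) (A := A) (C := GP G lab A γ ℓ) (m := 2 * k) []
      (fun l hl => ⟨hl.1, hlen l hl, by simp⟩) (by
        intro l hl u hu huA
        by_contra hcon
        exact hex ⟨_, u, [], rfl, by simp, by simp, by simpa using huA, hcon⟩) hK
    refine ⟨[], X, by simp, by simp, by simp, by omega, ?_⟩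
    intro l hl hl'
    obtain ⟨x, hx, hxl⟩ := hX' l hl
    exact absurd hxl (hl' x hx)
  -- take a longest path whose head sees a rich component
  obtain ⟨n, ⟨z, W, rfl, hc, hn, hA, hrich⟩, hmax⟩ : ∃ n, (∃ z W, n = (z :: W).length ∧
      (z :: W).IsChain (inner G A).Adj ∧ (z :: W).Nodup ∧ (∀ v ∈ z :: W, v ∉ A) ∧
      Rich G A (GP G lab A γ ℓ) (2 * k) z W) ∧ ∀ m, (∃ z W, m = (z :: W).length ∧
      (z :: W).IsChain (inner G A).Adj ∧ (z :: W).Nodup ∧ (∀ v ∈ z :: W, v ∉ A) ∧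
      Rich G A (GP G lab A γ ℓ) (2 * k) z W) → m ≤ n := by
    obtain ⟨n, hn⟩ := hex
    have hb : ∀ m, (∃ z W, m = (z :: W).length ∧
      (z :: W).IsChain (inner G A).Adj ∧ (z :: W).Nodup ∧ (∀ v ∈ z :: W, v ∉ A) ∧
      Rich G A (GP G lab A γ ℓ) (2 * k) z W) → m ≤ Fintype.card V := by
      rintro m ⟨z, W, rfl, -, h, -⟩
      exact h.length_le_card
    exact ⟨_, Nat.findGreatest_spec (P := fun m => ∃ z W, m = (z :: W).length ∧
      (z :: W).IsChain (inner G A).Adj ∧ (z :: W).Nodup ∧ (∀ v ∈ z :: W, v ∉ A) ∧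
      Rich G A (GP G lab A γ ℓ) (2 * k) z W) (hb n hn) hn,
      fun m hm => Nat.le_findGreatest (hb m hm) hm⟩
  let B : Set V := {v | Reach (inner G A) W z v}
  -- long paths inside the rich component that avoid `z`
  obtain ⟨X1, hX1, hX1'⟩ : ∃ X : Finset V, X.card ≤ (k + 1) * (2 * k + 2) ∧
      Hit (fun l => GP G lab A γ ℓ l ∧ z ∉ l ∧ ∀ v ∈ l, v ∉ A → v ∈ B) X := by
    refine hit_of_components (G := G) (A := A) (z :: W) ?_ ?_ (fun h => hK (h.mono fun l hl => hl.1))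
    · rintro l ⟨hl, hz, hB⟩
      refine ⟨hl.1, hlen l hl, ?_⟩
      intro v hv hvA hvW
      rcases List.mem_cons.1 hvW with rfl | hvW
      · exact hz hv
      · obtain ⟨p, hp, hpW⟩ := hB v hv hvA
        exact hpW v hp.last_mem hvW
    · rintro l ⟨hl, hz, hB⟩ u hu huA
      -- the component of `u` contains a neighbour `y` of `z`
      obtain ⟨y, hzy, hyW, hyu⟩ : ∃ y, (inner G A).Adj y z ∧ y ∉ z :: W ∧
          Reach (inner G A) (z :: W) y u := by
        obtain ⟨p, hp, hpW⟩ := hB u hu huA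
        obtain ⟨p', hp', hn', hsub⟩ := exists_nodup_conn hp
        obtain ⟨t, rfl⟩ := hp'.eq_cons
        cases t with
        | nil =>
          have : u = z := by simpa using hp'.2.2.symm
          exact absurd (this ▸ hu) hz
        | cons y t =>
          have hyt : ∀ x ∈ y :: t, x ∉ z :: W := by
            intro x hx hxW
            rcases List.mem_cons.1 hxW with rfl | h
            · exact (List.nodup_cons.1 hn').1 hx
            · exact hpW x (hsub (List.mem_cons_of_mem _ hx)) h
          have h1 := hp'.1
          rw [List.isChain_cons_cons] at h1
          refine ⟨y, h1.1.symm, hyt y (by simp), y :: t, ⟨h1.2, rfl, ?_⟩, hyt⟩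
          simpa using hp'.2.2
      have hnr : ¬ Rich G A (GP G lab A γ ℓ) (2 * k) y (z :: W) := by
        intro hr
        have := hmax _ ⟨y, z :: W, rfl, List.isChain_cons_cons.2 ⟨hzy, hc⟩,
          List.nodup_cons.2 ⟨hyW, hn⟩, by
            intro v hv
            rcases List.mem_cons.1 hv with rfl | hv
            · exact hzy.2.1
            · exact hA v hv, hr⟩
        simp at this
      obtain ⟨X, hX, hX'⟩ := not_not.1 hnr
      exact ⟨X, hX, fun l hl hl' => hX' l hl.1 fun v hv hvA => hyu.trans (hl' v hv hvA)⟩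
  -- long paths avoiding the rich component
  have hG' : ∀ l, GP (inner G B) lab A γ ℓ l ↔ GP G lab A γ ℓ l ∧ ∀ v ∈ l, v ∉ B := by
    intro l
    constructor
    · rintro ⟨⟨h1, h2, h3⟩, h4, h5⟩
      refine ⟨⟨⟨inner_chain h1, h2, h3⟩, h4, h5⟩, ?_⟩
      obtain ⟨a, m, b, rfl, -⟩ := h3
      obtain ⟨c, t, e⟩ : ∃ c t, m ++ [b] = c :: t := List.exists_cons_of_ne_nil (by simp)
      rw [e] at h1 ⊢
      exact not_mem_of_inner_chain h1
    · rintro ⟨⟨⟨h1, h2, h3⟩, h4, h5⟩, h6⟩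
      exact ⟨⟨chain_inner h1 h6, h2, h3⟩, h4, h5⟩
  have hBA : ∀ v ∈ B, v ∉ A := by
    rintro v ⟨p, hp, -⟩
    obtain ⟨t, rfl⟩ := hp.eq_cons
    cases t with
    | nil =>
      have : v = z := by simpa using hp.2.2.symm
      exact this ▸ hA z (by simp)
    | cons y t => exact not_mem_of_inner_chain hp.1 v hp.last_mem
  obtain ⟨X2, hX2, hX2'⟩ : ∃ X : Finset V, X.card ≤ g ∧ Hit (GP (inner G B) lab A γ ℓ) X := by
    rcases hg (inner G B) with ⟨Ps, h1, h2, h3⟩ | h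
    · exfalso
      have hE : ∀ p ∈ Ps, ∃ X : Finset V, X.card ≤ 2 ∧ ∀ v, v ∈ p ∧ v ∈ A → v ∈ X := by
        intro p hp
        obtain ⟨a, b, -, -, hab⟩ := exists_ends (h2 p hp).1
        refine ⟨{a, b}, Finset.card_insert_le _ _, ?_⟩
        rintro v ⟨hv, hvA⟩
        rcases hab v hv hvA with rfl | rfl <;> simp
      obtain ⟨E, hE1, hE2⟩ := exists_biUnion Ps 2 (fun p v => v ∈ p ∧ v ∈ A) hE
      refine hrich ⟨E, by rw [h1] at hE1; omega, fun l hl hlB => ?_⟩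
      by_contra! hlE
      refine hK ⟨l :: Ps, by simp [h1], ?_, ?_⟩
      · intro l' hl'
        rcases List.mem_cons.1 hl' with rfl | h
        · exact hl
        · exact ((hG' l').1 (h2 l' h)).1
      · rw [List.pairwise_cons]
        refine ⟨fun p hp v hv hvp => ?_, h3⟩
        by_cases hvA : v ∈ A
        · exact hlE v (hE2 p hp v ⟨hvp, hvA⟩) hv
        · exact ((hG' p).1 (h2 p hp)).2 v hvp (hlB v hv hvA)
    · exact h
  refine ⟨W, X1 ∪ X2 ∪ {z}, hc.tail, (List.nodup_cons.1 hn).2,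
    fun v hv => hA v (List.mem_cons_of_mem _ hv), ?_, ?_⟩
  · have h1 := Finset.card_union_le (X1 ∪ X2) {z}
    have h2 := Finset.card_union_le X1 X2
    rw [Finset.card_singleton] at h1
    omega
  · intro l hl hlX
    by_contra! hlW
    have hzl : z ∉ l := hlX z (by simp)
    have hno : ¬ (∀ v ∈ l, v ∉ A → v ∈ B) := by
      intro h
      obtain ⟨x, hx, hxl⟩ := hX1' l ⟨hl, hzl, h⟩
      exact hlX x (by simp [hx]) hxl
    have hno2 : ¬ (∀ v ∈ l, v ∉ B) := by
      intro h
      obtain ⟨x, hx, hxl⟩ := hX2' l ((hG' l).2 ⟨hl, h⟩)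
      exact hlX x (by simp [hx]) hxl
    push Not at hno hno2
    obtain ⟨v, hv, hvA, hvB⟩ := hno
    obtain ⟨u, hu, huB⟩ := hno2
    obtain ⟨p, hp, hpl, -⟩ := hl.1.conn hu (hBA u huB) hv hvA
    exact hvB (Reach.trans huB ⟨p, hp, fun x hx hxW => hlW x hxW (hpl hx)⟩)

end pathw

/-! ### Removing the core vertices of short paths -/

section core
variable {V Γ : Type} [AddCommGroup Γ] [DecidableEq V]
  {G : SimpleGraph V} {lab : Sym2 V → Γ} {A : Set V} {γ : Γ}

/-- The vertices of a maximal family of disjoint short paths meeting `W` form a bounded set that hits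
all short paths meeting `W`. -/
lemma exists_hit_touch [Fintype Γ] {ℓ : ℕ} (hℓ : 0 < ℓ) (K : ℕ) {W : List V}
    (hWc : W.IsChain (inner G A).Adj) (hWn : W.Nodup) (hWA : ∀ v ∈ W, v ∉ A)
    (hK : ¬ Pack (GP G lab A γ ℓ) K) :
    ∃ X : Finset V, X.card ≤ (K * (Fintype.card Γ * ℓ + 1)) ^ ℓ * ℓ ∧
      ∀ l, GP G lab A γ 1 l → l.length ≤ ℓ → (∀ x ∈ X, x ∉ l) → l.Disjoint W := by
  obtain ⟨Ps, h1, h2, h3, h4⟩ := exists_blocking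
    (fun l => GP G lab A γ 1 l ∧ l.length ≤ ℓ ∧ ∃ v ∈ W, v ∈ l) List.Disjoint
    ((K * (Fintype.card Γ * ℓ + 1)) ^ ℓ) (by
      rintro ⟨Ps, h1, h2, h3⟩
      exact hK (pack_of_touch hℓ K (inner_chain hWc) hWn hWA h3 h2 h1.ge))
  obtain ⟨X, hX, hX'⟩ := exists_biUnion Ps ℓ (fun p v => v ∈ p) (fun p hp =>
    ⟨p.toFinset, (List.toFinset_card_le _).trans (h2 p hp).2.1, by simp⟩)
  refine ⟨X, hX.trans (Nat.mul_le_mul_right _ h1.le), fun l hl hlen hlX v hv hvW => ?_⟩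
  obtain ⟨p, hp, hn⟩ := h4 l ⟨hl, hlen, v, hvW, hv⟩
  exact hn fun x hx hx' => hlX x (hX' p hp x hx') hx

variable [Fintype V]

/-- Either there is a large set linked to `W` whose members lie on disjoint short paths, or
removing few vertices leaves no short path with a core vertex in its interior. -/
lemma exists_linked_or {ℓ c : ℕ} (hc : c = 1 ∨ c = 2) {W : List V} {X₀ : Finset V}
    (hX₀ : ∀ l, GP G lab A γ 1 l → l.length ≤ ℓ → (∀ x ∈ X₀, x ∉ l) → l.Disjoint W) (N : ℕ) :
    (∃ (Y : Finset V) (P : V → List V), Y.card = N ∧ Linked (inner G A) W.toFinset c Y ∧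
      (∀ y ∈ Y, GP G lab A γ 1 (P y) ∧ (P y).length ≤ ℓ ∧ y ∈ P y ∧ y ∉ A ∧ (P y).Disjoint W) ∧
      ∀ y ∈ Y, ∀ y' ∈ Y, y ≠ y' → (P y).Disjoint (P y')) ∨
    ∃ X : Finset V, X₀ ⊆ X ∧ X.card ≤ X₀.card + (2 * N + 1) ^ 2 + N * ℓ ∧
      ∀ l, GP G lab A γ 1 l → l.length ≤ ℓ → (∀ x ∈ X, x ∉ l) → ∀ u ∈ l, u ∉ A →
        ¬ IsCore (inner G A) W.toFinset c X u := by
  induction N with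
  | zero => exact .inl ⟨∅, fun _ => [], rfl, fun R _ => by simp, by simp, by simp⟩
  | succ n ih =>
    rcases ih with ⟨Y, P, hYn, hY, hP, hPd⟩ | ⟨X, h1, h2, h3⟩
    swap
    · right
      refine ⟨X, h1, h2.trans ?_, h3⟩
      have : (2 * n + 1) ^ 2 ≤ (2 * (n + 1) + 1) ^ 2 := Nat.pow_le_pow_left (by omega) 2
      have : n * ℓ ≤ (n + 1) * ℓ := Nat.mul_le_mul_right _ (by omega)
      omega
    obtain ⟨X₁, hX₁, hstep⟩ := hY.step hc
    obtain ⟨X₂, hX₂, hX₂'⟩ := exists_biUnion Y.toList ℓ (fun y v => v ∈ P y) (fun y hy =>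
      ⟨(P y).toFinset, (List.toFinset_card_le _).trans (hP y (by simpa using hy)).2.1, by simp⟩)
    by_cases hall : ∀ l, GP G lab A γ 1 l → l.length ≤ ℓ → (∀ x ∈ X₀ ∪ X₁ ∪ X₂, x ∉ l) →
        ∀ u ∈ l, u ∉ A → ¬ IsCore (inner G A) W.toFinset c (X₀ ∪ X₁ ∪ X₂) u
    · right
      refine ⟨X₀ ∪ X₁ ∪ X₂, ?_, ?_, hall⟩
      · intro x hx; simp [hx]
      · have e1 := Finset.card_union_le (X₀ ∪ X₁) X₂
        have e2 := Finset.card_union_le X₀ X₁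
        rw [hYn] at hX₁
        rw [Finset.length_toList, hYn] at hX₂
        have : (2 * n + 1) ^ 2 ≤ (2 * (n + 1) + 1) ^ 2 := Nat.pow_le_pow_left (by omega) 2
        have : n * ℓ ≤ (n + 1) * ℓ := Nat.mul_le_mul_right _ (by omega)
        omega
    · left
      push Not at hall
      obtain ⟨l, hl, hlen, hlX, u, hu, huA, hcore⟩ := hall
      have hlP : ∀ y ∈ Y, l.Disjoint (P y) := fun y hy v hv hv' =>
        hlX v (Finset.mem_union_right _ (hX₂' y (by simpa using hy) v hv')) hv
      have huY : u ∉ Y := fun h => hlP u h hu (hP u h).2.2.1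
      have hPu : ∀ y ∈ Y, Function.update P u l y = P y := fun y hy =>
        Function.update_of_ne (fun h : y = u => huY (h ▸ hy)) _ _
      refine ⟨insert u Y, Function.update P u l, by rw [Finset.card_insert_of_notMem huY, hYn],
        hstep u (hcore.anti fun x hx => by simp [hx]), ?_, ?_⟩
      · intro y hy
        rcases Finset.mem_insert.1 hy with rfl | hy
        · rw [Function.update_self]
          exact ⟨hl, hlen, hu, huA, hX₀ l hl hlen fun x hx => hlX x (by simp [hx])⟩
        · rw [hPu y hy]; exact hP y hy
      · intro y hy y' hy' hne
        rcases Finset.mem_insert.1 hy with rfl | hyY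
        · rcases Finset.mem_insert.1 hy' with rfl | hy'
          · exact absurd rfl hne
          · rw [Function.update_self, hPu y' hy']; exact hlP y' hy'
        · rcases Finset.mem_insert.1 hy' with rfl | hy'
          · rw [Function.update_self, hPu y hyY]; exact (hlP y hyY).symm
          · rw [hPu y hyY, hPu y' hy']; exact hPd y hyY y' hy' hne

/-- The bound on the number of vertices removed before all long paths meet a path `W` and no short
path has a core vertex. -/
def coreBound (q ℓ k g : ℕ) : ℕ :=
  let M := (k + 1) * (q * ℓ + 1)
  let N := 4 ^ (M ^ ℓ) + ℓ * M
  (k + 1) * (2 * k + 2) + g + 1 + M ^ ℓ * ℓ + (2 * N + 1) ^ 2 + N * ℓ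

/-- After deletion of a bounded set `X`, all long paths meet a path `W` outside `A`, and every path of
weight `γ` through a core vertex is long. -/
lemma exists_core_free [Fintype Γ] {ℓ k g c : ℕ} (hℓ : 2 ≤ ℓ)
    (hc : (c = 1 ∧ ∀ x : Γ, x + x = 0) ∨ c = 2)
    (hg : ∀ G' : SimpleGraph V, Pack (GP G' lab A γ ℓ) k ∨
      ∃ X : Finset V, X.card ≤ g ∧ Hit (GP G' lab A γ ℓ) X)
    (hK : ¬ Pack (GP G lab A γ ℓ) (k + 1)) :
    ∃ (W : List V) (X : Finset V), (∀ v ∈ W, v ∉ A) ∧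
      X.card ≤ coreBound (Fintype.card Γ) ℓ k g ∧
      (∀ l, GP G lab A γ ℓ l → (∀ x ∈ X, x ∉ l) → ∃ v ∈ W, v ∈ l) ∧
      ∀ l, GP G lab A γ 1 l → (∀ x ∈ X, x ∉ l) →
        (∃ u ∈ l, u ∉ A ∧ IsCore (inner G A) W.toFinset c X u) → GP G lab A γ ℓ l := by
  obtain ⟨W, X0, hWc, hWn, hWA, hX0, hX0'⟩ := exists_path hℓ hg hK
  obtain ⟨X1, hX1, hX1'⟩ := exists_hit_touch (by omega) (k + 1) hWc hWn hWA hK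
  have hcard := Finset.card_union_le X0 X1
  rcases exists_linked_or (G := G) (lab := lab) (A := A) (γ := γ) (ℓ := ℓ) (c := c)
    (by rcases hc with h | h <;> omega) (W := W) (X₀ := X0 ∪ X1)
    (fun l hl hlen hlX => hX1' l hl hlen fun x hx => hlX x (by simp [hx]))
    (4 ^ (((k + 1) * (Fintype.card Γ * ℓ + 1)) ^ ℓ) + ℓ * ((k + 1) * (Fintype.card Γ * ℓ + 1)))
    with ⟨Y, P, hYn, hY, hP, hPd⟩ | ⟨X, h1, h2, h3⟩
  · exfalso
    rcases hc with ⟨rfl, hΓ⟩ | rfl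
    · exact hK (pack_of_linked_one hΓ (by omega) (k + 1) hWc hWn hWA hY P hP hPd
        (by rw [hYn]; exact Nat.le_add_left _ _))
    · exact hK (pack_of_linked_two (by omega) (k + 1) hWc hWn hWA hY P hP hPd
        (by rw [hYn]; exact Nat.le_add_right _ _))
  · refine ⟨W, X, hWA, ?_, fun l hl hlX => hX0' l hl fun x hx => hlX x (h1 (by simp [hx])), ?_⟩
    · refine h2.trans ?_
      unfold coreBound
      dsimp only
      omega
    · rintro l hl hlX ⟨u, hu, huA, hcore⟩
      refine ⟨hl.1, hl.2.1, ?_⟩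
      by_contra hlen
      exact h3 l hl (by omega) hlX u hu huA hcore

end core

/-! ### Groups of exponent two -/

section hull
variable {V Γ : Type} [AddCommGroup Γ] {G : SimpleGraph V} {lab : Sym2 V → Γ} {A : Set V} {γ : Γ}

lemma exists_crossing {H : SimpleGraph V} {p : List V} {z v : V} (hp : Conn H.Adj z v p)
    (S : Set V) (hz : z ∉ S) (hv : v ∈ S) : ∃ x y, x ∈ p ∧ x ∉ S ∧ y ∈ S ∧ H.Adj y x := by
  obtain ⟨s, y, t, rfl, hy, hs⟩ := exists_first (· ∈ S) p ⟨v, hp.last_mem, hv⟩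
  rcases List.eq_nil_or_concat s with rfl | ⟨s, x, rfl⟩
  · have : y = z := by simpa using hp.2.1
    exact absurd (this ▸ hy) hz
  · rw [List.concat_eq_append] at hp hs
    refine ⟨x, y, by simp, hs x (by simp), hy, ?_⟩
    have h : ([x] ++ y :: t).IsChain H.Adj := hp.1.middle ⟨s, [], by simp⟩
    rw [List.singleton_append, List.isChain_cons_cons] at h
    exact h.1.symm

/-- If `Γ` has exponent two, the vertices that cannot be separated from `W` by the removed set carry
all long paths that avoid it, and no short paths. -/
lemma hit_of_exponent_two [Fintype Γ] [Fintype V] (hΓ : ∀ x : Γ, x + x = 0) {f : ℕ → ℕ}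
    (hf : LEPP Γ γ 1 f) {ℓ k g : ℕ} (hℓ : 2 ≤ ℓ)
    (hg : ∀ G' : SimpleGraph V, Pack (GP G' lab A γ ℓ) k ∨
      ∃ X : Finset V, X.card ≤ g ∧ Hit (GP G' lab A γ ℓ) X)
    (hK : ¬ Pack (GP G lab A γ ℓ) (k + 1)) :
    ∃ X : Finset V, X.card ≤ coreBound (Fintype.card Γ) ℓ k g + f (k + 1) ∧
      Hit (GP G lab A γ ℓ) X := by
  classical
  obtain ⟨W, X, hWA, hX, hlong, hshort⟩ := exists_core_free hℓ (.inl ⟨rfl, hΓ⟩) hg hK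
  let M : Set V := {v | v ∉ A ∧ IsCore (inner G A) W.toFinset 1 X v}
  let U : Set V := M ∪ {v | v ∈ A ∧ v ∉ X}
  let G' : SimpleGraph V :=
    { Adj := fun x y => G.Adj x y ∧ x ∈ U ∧ y ∈ U ∧ ¬ (x ∈ A ∧ y ∈ A)
      symm := ⟨fun _ _ h => ⟨h.1.symm, h.2.2.1, h.2.1, fun h' => h.2.2.2 ⟨h'.2, h'.1⟩⟩⟩
      loopless := ⟨fun _ h => G.irrefl h.1⟩ }
  have hUX : ∀ v ∈ U, v ∉ X := by
    rintro v (h | h)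
    · exact h.2.1
    · exact h.2
  -- paths of the restricted graph
  have hG' : ∀ l, GP G' lab A γ 1 l → GP G lab A γ ℓ l := by
    rintro l ⟨⟨h1, h2, h3⟩, h4, h5⟩
    have hlU : ∀ v ∈ l, v ∈ U := by
      intro v hv
      obtain ⟨a, m, b, rfl, -⟩ := h3
      obtain ⟨s, t, e⟩ := List.append_of_mem hv
      rw [e] at h1
      cases t with
      | cons y t =>
        have : (v :: y :: t).IsChain G'.Adj := h1.suffix ⟨s, rfl⟩
        rw [List.isChain_cons_cons] at this
        exact this.1.2.1
      | nil =>
        rcases List.eq_nil_or_concat s with rfl | ⟨s, x, rfl⟩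
        · have := congrArg List.length e
          simp at this
        · have : [x, v].IsChain G'.Adj := h1.middle ⟨s, [], by simp⟩
          rw [List.isChain_cons_cons] at this
          exact this.1.2.2.1
    refine hshort l ⟨⟨h1.imp fun _ _ h => h.1, h2, h3⟩, h4, h5⟩
      (fun x hx hxl => hUX x (hlU x hxl) hx) ?_
    obtain ⟨a, m, b, rfl, ha, hb, hm⟩ := h3
    cases m with
    | nil =>
      rw [List.nil_append, List.isChain_cons_cons] at h1
      exact absurd ⟨ha, hb⟩ h1.1.2.2.2
    | cons x m =>
      have hxA := hm x (by simp)
      refine ⟨x, by simp, hxA, ?_⟩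
      rcases hlU x (by simp) with h | h
      · exact h.2
      · exact absurd h.1 hxA
  rcases hf V G' lab A (k + 1) with h | ⟨Z, hZ, hZ'⟩
  · exact absurd (h.mono hG') hK
  refine ⟨X ∪ Z, (Finset.card_union_le _ _).trans (Nat.add_le_add hX hZ), fun l hl => ?_⟩
  by_contra! hcon
  have hlX : ∀ x ∈ X, x ∉ l := fun x hx => hcon x (by simp [hx])
  obtain ⟨w, hwW, hwl⟩ := hlong l hl hlX
  have hlU : ∀ v ∈ l, v ∈ U := by
    intro v hv
    by_cases hvA : v ∈ A
    · exact .inr ⟨hvA, fun h => hlX v h hv⟩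
    · refine .inl ⟨hvA, fun h => hlX v h hv, fun R hR hvR => ?_⟩
      by_contra hvR'
      have hR' : bd (inner G A) W.toFinset R ⊆ X := by
        rw [← Finset.sdiff_eq_empty_iff_subset, ← Finset.card_eq_zero]
        omega
      have hwR : w ∈ R := by
        by_contra hwR
        exact hlX w (hR' (mem_bd.2 ⟨hwR, .inl (by simpa using hwW)⟩)) hwl
      obtain ⟨p, hp, hpl, -⟩ := hl.1.conn hv hvA hwl (hWA w hwW)
      obtain ⟨x, y, hxp, hxR, hyR, hadj⟩ := exists_crossing hp (↑R) (by simpa using hvR')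
        (by simpa using hwR)
      exact hlX x (hR' (mem_bd.2 ⟨by simpa using hxR, .inr ⟨y, by simpa using hyR, hadj⟩⟩))
        (hpl hxp)
  obtain ⟨x, hx, hxl⟩ := hZ' l (by
    obtain ⟨⟨h1, h2, a, m, b, rfl, ha, hb, hm⟩, h4, h5⟩ := hl
    refine ⟨⟨?_, h2, a, m, b, rfl, ha, hb, hm⟩, h4, by omega⟩
    have hmne : m ≠ [] := by
      rintro rfl
      simp at h5; omega
    -- no edge of the path has both ends in `A`
    have key : ∀ (x : V) (r : List V), (x :: (r ++ [b])).IsChain G.Adj →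
        (∀ v ∈ x :: (r ++ [b]), v ∈ U) → (∀ v ∈ r, v ∉ A) → (x ∈ A → r ≠ []) →
        (x :: (r ++ [b])).IsChain G'.Adj := by
      intro x r
      induction r generalizing x with
      | nil =>
        intro h hU _ hxA
        rw [List.nil_append, List.isChain_cons_cons] at h ⊢
        exact ⟨⟨h.1, hU x (by simp), hU b (by simp), fun h => hxA h.1 rfl⟩, by simp⟩
      | cons y r ih =>
        intro h hU hr _
        rw [List.cons_append, List.isChain_cons_cons] at h ⊢
        refine ⟨⟨h.1, hU x (by simp), hU y (by simp), fun h => hr y (by simp) h.2⟩, ?_⟩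
        exact ih y h.2 (fun v hv => hU v (List.mem_cons_of_mem _ hv))
          (fun v hv => hr v (by simp [hv])) (fun h => absurd h (hr y (by simp)))
    exact key a m h1 hlU hm fun _ => hmne)
  exact hcon x (by simp [hx]) hxl

/-! ### Tails of core vertices -/

/-- The set `M` avoids `A` and `X`, and a walk that leaves `M` within the complement of `A` and `X`
can return to `M` only at the vertex where it left. -/
structure IsHull (G : SimpleGraph V) (A X M : Set V) : Prop where
  notA : ∀ v ∈ M, v ∉ A
  notX : ∀ v ∈ M, v ∉ X
  ret : ∀ v ∈ M, ∀ z, z ∉ M → z ∉ X → (inner G A).Adj v z → ∀ v' ∈ M, ∀ p,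
    Conn (inner G A).Adj z v' p → (∀ x ∈ p, x ∉ X) → v ∈ p

/-- A core vertex `v` with a neighbour `z` that is not core is the only vertex outside `X` that
separates `z` from `W`. -/
lemma isHull_core [Fintype V] [DecidableEq V] (W X : Finset V) :
    IsHull G A ↑X {v | v ∉ A ∧ IsCore (inner G A) W 2 X v} where
  notA v hv := hv.1
  notX v hv := by simpa using hv.2.1
  ret := by
    rintro v ⟨hvA, hv⟩ z hz hzX hadj v' ⟨-, hv'⟩ p hp hpX
    have hz' : ¬ IsCore (inner G A) W 2 X z := fun h => hz ⟨hadj.2.2, h⟩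
    unfold IsCore at hz'
    push Not at hz'
    obtain ⟨R, hR, hzR, hzR'⟩ := hz' (by simpa using hzX)
    -- a separation of order one showing that `z` is not core has `v` as its separator
    have hvR : v ∉ R := fun h => hzR (mem_bd.2 ⟨hzR', .inr ⟨v, h, hadj⟩⟩)
    have hvb : v ∈ bd (inner G A) W R := by
      by_contra h
      exact hvR (hv.2 R hR h)
    have hbd : ∀ x ∈ bd (inner G A) W R, x ∉ X → x = v := by
      intro x hx hxX
      exact Finset.card_le_one.1
        (show (bd (inner G A) W R \ X).card ≤ 1 by omega) x (by simp [hx, hxX]) v (by simp [hvb, hv.1])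
    by_cases hv'R : v' ∈ R
    · obtain ⟨x, y, hxp, hxR, hyR, hxy⟩ := exists_crossing hp (↑R) (by simpa using hzR')
        (by simpa using hv'R)
      have := hbd x (mem_bd.2 ⟨by simpa using hxR, .inr ⟨y, by simpa using hyR, hxy⟩⟩)
        (by simpa using hpX x hxp)
      exact this ▸ hxp
    · have : v' ∈ bd (inner G A) W R := by
        by_contra h
        exact hv'R (hv'.2 R hR h)
      exact hbd v' this hv'.1 ▸ hp.last_mem

/-- A path from `a ∈ A` to `v` with interior `t` outside of `A`, `X` and `M`. -/
def Tail (G : SimpleGraph V) (A X M : Set V) (a : V) (t : List V) (v : V) : Prop :=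
  (a :: (t ++ [v])).IsChain G.Adj ∧ (a :: (t ++ [v])).Nodup ∧ a ∈ A ∧ a ∉ X ∧
    ∀ x ∈ t, x ∉ A ∧ x ∉ X ∧ x ∉ M

variable {X M : Set V}

/-- Tails of distinct vertices of `M` have disjoint interiors, as otherwise there would be a path
outside of `M` between these vertices. -/
lemma IsHull.tail_unique (h : IsHull G A X M) {a a' v v' x : V} {t t' : List V} (hv : v ∈ M)
    (hv' : v' ∈ M) (ht : Tail G A X M a t v) (ht' : Tail G A X M a' t' v') (hx : x ∈ t)
    (hx' : x ∈ t') : v = v' := by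
  obtain ⟨s, r, rfl⟩ := List.append_of_mem hx
  obtain ⟨s', r', rfl⟩ := List.append_of_mem hx'
  have hr : ∀ y ∈ x :: r, y ∉ A ∧ y ∉ X ∧ y ∉ M := fun y hy => ht.2.2.2.2 y (by simp [hy])
  have hr' : ∀ y ∈ x :: r', y ∉ A ∧ y ∉ X ∧ y ∉ M := fun y hy => ht'.2.2.2.2 y (by simp [hy])
  have hc : (x :: (r ++ [v])).IsChain (inner G A).Adj := by
    refine chain_inner (ht.1.middle ⟨a :: s, [], by simp⟩) ?_
    intro y hy
    simp only [List.mem_cons, List.mem_append, List.not_mem_nil, or_false] at hy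
    rcases hy with rfl | hy | rfl
    · exact (hr y (by simp)).1
    · exact (hr y (by simp [hy])).1
    · exact h.notA y hv
  have hc' : (x :: (r' ++ [v'])).IsChain (inner G A).Adj := by
    refine chain_inner (ht'.1.middle ⟨a' :: s', [], by simp⟩) ?_
    intro y hy
    simp only [List.mem_cons, List.mem_append, List.not_mem_nil, or_false] at hy
    rcases hy with rfl | hy | rfl
    · exact (hr' y (by simp)).1
    · exact (hr' y (by simp [hy])).1
    · exact h.notA y hv'
  -- the neighbour of `v` on its tail
  obtain ⟨r0, z, hz⟩ : ∃ r0 z, x :: r = r0 ++ [z] := by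
    rcases List.eq_nil_or_concat (x :: r) with h | ⟨r0, z, h⟩
    · simp at h
    · exact ⟨r0, z, by rw [h, List.concat_eq_append]⟩
  have hzr := hr z (by rw [hz]; simp)
  have hzv : (inner G A).Adj v z := by
    have e : x :: (r ++ [v]) = r0 ++ [z, v] := by
      rw [← List.cons_append, hz]; simp
    rw [e] at hc
    have : [z, v].IsChain (inner G A).Adj := hc.suffix ⟨r0, rfl⟩
    rw [List.isChain_cons_cons] at this
    exact this.1.symm
  have hp : Conn (inner G A).Adj z v' (r.reverse ++ x :: (r' ++ [v'])) := by
    refine Conn.join ?_ ⟨hc', rfl, by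
      rw [← List.cons_append, List.getLast?_concat]⟩
    have e : r.reverse ++ [x] = (x :: r).reverse := by simp
    rw [e]
    refine ⟨?_, ?_, by simp⟩
    swap
    · rw [hz, List.reverse_append]; rfl
    rw [List.isChain_reverse]
    exact (hc.front ⟨[v], by simp⟩).imp fun _ _ h => h.symm
  have := h.ret v hv z hzr.2.2 hzr.2.1 hzv v' hv' _ hp (by
    intro y hy
    simp only [List.mem_cons, List.mem_append, List.mem_reverse, List.not_mem_nil, or_false] at hy
    rcases hy with hy | rfl | hy | rfl
    · exact (hr y (by simp [hy])).2.1
    · exact (hr y (by simp)).2.1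
    · exact (hr' y (by simp [hy])).2.1
    · exact h.notX y hv')
  simp only [List.mem_cons, List.mem_append, List.mem_reverse, List.not_mem_nil, or_false] at this
  rcases this with hy | rfl | hy | rfl
  · exact absurd hv (hr v (by simp [hy])).2.2
  · exact absurd hv (hr v (by simp)).2.2
  · exact absurd hv (hr' v (by simp [hy])).2.2
  · rfl

/-- The vertices of `M` on an `A`-path that avoids `X` are consecutive. -/
lemma IsHull.exists_split (h : IsHull G A X M) {l : List V} (hl : IsAP G A l)
    (hlX : ∀ x ∈ l, x ∉ X) (hM : ∃ v ∈ l, v ∈ M) :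
    ∃ a t L t' b, l = a :: (t ++ L ++ t' ++ [b]) ∧ L ≠ [] ∧ (∀ v ∈ L, v ∈ M) ∧
      (∀ x ∈ t ++ t', x ∉ A ∧ x ∉ X ∧ x ∉ M) ∧ a ∈ A ∧ b ∈ A := by
  obtain ⟨hc, hn, a, m, b, rfl, ha, hb, hm⟩ := hl
  have hM' : ∃ v ∈ m, v ∈ M := by
    obtain ⟨v, hv, hvM⟩ := hM
    refine ⟨v, ?_, hvM⟩
    simp only [List.mem_cons, List.mem_append, List.not_mem_nil, or_false] at hv
    rcases hv with rfl | hv | rfl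
    · exact absurd ha (h.notA _ hvM)
    · exact hv
    · exact absurd hb (h.notA _ hvM)
  have hmX : ∀ x ∈ m, x ∉ X := fun x hx => hlX x (by simp [hx])
  obtain ⟨t, v, r, rfl, hv, ht⟩ := exists_first (· ∈ M) m hM'
  by_cases hr : ∃ z ∈ r, z ∉ M
  swap
  · push Not at hr
    refine ⟨a, t, v :: r, [], b, by simp, by simp, ?_, ?_, ha, hb⟩
    · intro x hx
      rcases List.mem_cons.1 hx with rfl | hx
      · exact hv
      · exact hr x hx
    · intro x hx
      rw [List.append_nil] at hx
      exact ⟨hm x (by simp [hx]), hmX x (by simp [hx]), ht x hx⟩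
  obtain ⟨s, z, t', rfl, hz, hs⟩ := exists_first (· ∉ M) r hr
  have hs' : ∀ x ∈ v :: s, x ∈ M := by
    intro x hx
    rcases List.mem_cons.1 hx with rfl | hx
    · exact hv
    · exact not_not.1 (hs x hx)
  have ht' : ∀ x ∈ t', x ∉ M := by
    intro u hu huM
    obtain ⟨t1, t2, rfl⟩ := List.append_of_mem hu
    obtain ⟨s0, y, hy⟩ : ∃ s0 y, v :: s = s0 ++ [y] := by
      rcases List.eq_nil_or_concat (v :: s) with h | ⟨r0, z, h⟩
      · simp at h
      · exact ⟨r0, z, by rw [h, List.concat_eq_append]⟩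
    have e : a :: (t ++ v :: (s ++ z :: (t1 ++ u :: t2)) ++ [b]) =
        a :: (t ++ s0) ++ (y :: z :: (t1 ++ [u])) ++ (t2 ++ [b]) := by
      have : t ++ v :: (s ++ z :: (t1 ++ u :: t2)) = t ++ (v :: s) ++ z :: (t1 ++ u :: t2) := by simp
      rw [this, hy]; simp
    have e' : t ++ v :: (s ++ z :: (t1 ++ u :: t2)) =
        (t ++ s0) ++ (y :: z :: (t1 ++ [u])) ++ t2 := by
      have : t ++ v :: (s ++ z :: (t1 ++ u :: t2)) = t ++ (v :: s) ++ z :: (t1 ++ u :: t2) := by simp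
      rw [this, hy]; simp
    have hsub : ∀ x ∈ y :: z :: (t1 ++ [u]), x ∈ t ++ v :: (s ++ z :: (t1 ++ u :: t2)) := by
      intro x hx; rw [e']; exact List.mem_append_left _ (List.mem_append_right _ hx)
    rw [e] at hc hn
    have hc1 : (y :: z :: (t1 ++ [u])).IsChain (inner G A).Adj :=
      chain_inner (hc.middle ⟨_, _, rfl⟩) fun x hx => hm x (hsub x hx)
    have hn1 : (y :: z :: (t1 ++ [u])).Nodup := hn.sublist (List.IsInfix.sublist ⟨_, _, rfl⟩)
    rw [List.isChain_cons_cons] at hc1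
    have := h.ret y (hs' y (by rw [hy]; simp)) z hz
      (hmX z (hsub z (by simp))) hc1.1 u huM (z :: (t1 ++ [u]))
      ⟨hc1.2, rfl, by
        have : z :: (t1 ++ [u]) = (z :: t1) ++ [u] := by simp
        rw [this, List.getLast?_concat]⟩ (fun x hx => hmX x (hsub x (List.mem_cons_of_mem _ hx)))
    exact (List.nodup_cons.1 hn1).1 this
  refine ⟨a, t, v :: s, z :: t', b, by simp, by simp, hs', ?_, ha, hb⟩
  intro x hx
  refine ⟨hm x ?_, hmX x ?_, ?_⟩
  · simp only [List.mem_append, List.mem_cons] at hx ⊢; tauto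
  · simp only [List.mem_append, List.mem_cons] at hx ⊢; tauto
  · simp only [List.mem_append, List.mem_cons] at hx
    rcases hx with hx | rfl | hx
    · exact ht x hx
    · exact hz
    · exact ht' x hx

end hull

/-! ### Replacing tails by gadgets -/

section gadget
variable {V Γ : Type} [AddCommGroup Γ] {G : SimpleGraph V} {lab : Sym2 V → Γ} {A X M : Set V} {γ : Γ}

/-- Vertices of the gadget graph: `(v, none)` is the vertex `v` itself, `(v, some none)` is the hub
of the gadget at `v`, and `(v, some (some i))` are its two legs. -/
abbrev GV (V : Type) : Type := V × Option (Option Bool)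

/-- The adjacency relation of the gadget graph. The graph `G` is kept within `M`; each `v ∈ M` is
joined to its hub, the hub to both legs, and the leg `i` to every `a` that sends a tail of weight
`ω i` to `v`. -/
def gadAdj (G : SimpleGraph V) (lab : Sym2 V → Γ) (A X M : Set V) (ω : Bool → Γ) :
    GV V → GV V → Prop
  | (x, none), (y, none) => x ∈ M ∧ y ∈ M ∧ G.Adj x y
  | (x, none), (y, some none) => x = y ∧ x ∈ M
  | (x, some none), (y, none) => x = y ∧ x ∈ M
  | (x, some none), (y, some (some _)) => x = y ∧ x ∈ M
  | (x, some (some _)), (y, some none) => x = y ∧ x ∈ M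
  | (x, some (some i)), (y, none) =>
    x ∈ M ∧ ∃ t, Tail G A X M y t x ∧ lw lab (y :: (t ++ [x])) = ω i
  | (y, none), (x, some (some i)) =>
    x ∈ M ∧ ∃ t, Tail G A X M y t x ∧ lw lab (y :: (t ++ [x])) = ω i
  | _, _ => False

/-- The gadget graph. -/
def gadG (G : SimpleGraph V) (lab : Sym2 V → Γ) (A X M : Set V) (ω : Bool → Γ) :
    SimpleGraph (GV V) where
  Adj := gadAdj G lab A X M ω
  symm := ⟨by
    rintro ⟨x, _ | _ | i⟩ ⟨y, _ | _ | j⟩ h <;> simp only [gadAdj] at h ⊢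
    · exact ⟨h.2.1, h.1, h.2.2.symm⟩
    · exact ⟨h.1.symm, h.1 ▸ h.2⟩
    · exact h
    · exact ⟨h.1.symm, h.1 ▸ h.2⟩
    · exact ⟨h.1.symm, h.1 ▸ h.2⟩
    · exact h
    · exact ⟨h.1.symm, h.1 ▸ h.2⟩⟩
  loopless := ⟨by
    rintro ⟨x, _ | _ | i⟩ h
    · exact G.irrefl h.2.2
    · exact h
    · exact h⟩

/-- The labelling of the gadget graph: the route from `a` through the leg `i` and the hub to `v` has
weight `ω i`, as the tail that it replaces. -/
def gadLab (lab : Sym2 V → Γ) (ω : Bool → Γ) (lam : Γ) (μ : Bool → Γ) : Sym2 (GV V) → Γ :=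
  Sym2.lift ⟨fun p q => match p, q with
    | (x, none), (y, none) => lab s(x, y)
    | (_, none), (_, some none) => lam
    | (_, some none), (_, none) => lam
    | (_, some none), (_, some (some i)) => μ i
    | (_, some (some i)), (_, some none) => μ i
    | (_, some (some i)), (_, none) => ω i - lam - μ i
    | (_, none), (_, some (some i)) => ω i - lam - μ i
    | _, _ => 0, by
    rintro ⟨x, _ | _ | i⟩ ⟨y, _ | _ | j⟩ <;> simp [Sym2.eq_swap]⟩

/-- The terminals of the gadget graph. -/
def gadA (A X : Set V) : Set (GV V) := {p | p.2 = none ∧ p.1 ∈ A ∧ p.1 ∉ X}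

lemma lw_map_base (ω : Bool → Γ) (lam : Γ) (μ : Bool → Γ) (L : List V) :
    lw (gadLab lab ω lam μ) (L.map fun x => (x, none)) = lw lab L := by
  induction L with
  | nil => rfl
  | cons x L ih =>
    cases L with
    | nil => rfl
    | cons y L =>
      simp only [List.map_cons, lw_cons_cons] at ih ⊢
      rw [ih]; rfl

/-- A path of the gadget graph that arrives at `v` walks along `G` within `M` and then leaves to a
terminal through the gadget of the last vertex `y` of this walk. -/
lemma exists_walkout (hM : IsHull G A X M) {ω : Bool → Γ} {e : GV V} (he : e ∈ gadA A X) :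
    ∀ (r : List (GV V)) (v : V), v ∈ M → ((v, none) :: (r ++ [e])).IsChain (gadG G lab A X M ω).Adj →
      ((v, none) :: (r ++ [e])).Nodup → (∀ p ∈ r, p ∉ gadA A X) →
      ∃ L L₀ y j s b, r = L.map (fun x => (x, none)) ++ [(y, some none), (y, some (some j))] ∧
        e = (b, none) ∧ v :: L = L₀ ++ [y] ∧ (v :: L).IsChain G.Adj ∧ (∀ x ∈ v :: L, x ∈ M) ∧
        Tail G A X M b s y ∧ lw lab (b :: (s ++ [y])) = ω j := by
  intro r
  obtain ⟨b, he2⟩ : ∃ b, e = (b, none) := ⟨e.1, Prod.ext rfl he.1⟩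
  subst he2
  obtain ⟨-, hbA, hbX⟩ := he
  simp only at hbA hbX
  induction r with
  | nil =>
    intro v hv hc _ _
    rw [List.nil_append, List.isChain_cons_cons] at hc
    exact absurd hbA (hM.notA _ hc.1.2.1)
  | cons p r ih =>
    intro v hv hc hn hr
    rw [List.cons_append, List.isChain_cons_cons] at hc
    obtain ⟨h1, hc⟩ := hc
    have hn' := List.nodup_cons.1 hn
    obtain ⟨x, _ | _ | i⟩ := p
    · obtain ⟨L, L₀, y, j, s, b', rfl, hb', hL, hLc, hLM, ht, hw⟩ := ih x h1.2.1 hc hn'.2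
        fun q hq => hr q (List.mem_cons_of_mem _ hq)
      refine ⟨x :: L, v :: L₀, y, j, s, b', by simp, hb', by rw [hL]; simp, ?_, ?_, ht, hw⟩
      · rw [List.isChain_cons_cons]; exact ⟨h1.2.2, hLc⟩
      · intro z hz
        rcases List.mem_cons.1 hz with rfl | hz
        · exact hv
        · exact hLM z hz
    · obtain rfl : v = x := h1.1
      cases r with
      | nil =>
        rw [List.nil_append, List.isChain_cons_cons] at hc
        have : v = b := hc.1.1
        exact absurd (this ▸ hbA) (hM.notA _ hv)
      | cons p r =>
        rw [List.cons_append, List.isChain_cons_cons] at hc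
        obtain ⟨h2, hc⟩ := hc
        obtain ⟨x, _ | _ | i⟩ := p
        · obtain rfl : v = x := h2.1
          exact absurd (by simp) hn'.1
        · exact absurd h2 id
        · obtain rfl : v = x := h2.1
          cases r with
          | nil =>
            rw [List.nil_append, List.isChain_cons_cons] at hc
            obtain ⟨-, t, ht, hw⟩ := hc.1
            refine ⟨[], [], v, i, t, b, by simp, rfl, rfl, by simp, by simpa using hv, ht, hw⟩
          | cons p r =>
            rw [List.cons_append, List.isChain_cons_cons] at hc
            obtain ⟨h3, hc⟩ := hc
            obtain ⟨x, _ | _ | i'⟩ := p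
            · obtain ⟨-, t, ht, -⟩ := h3
              exact absurd ⟨rfl, ht.2.2.1, ht.2.2.2.1⟩ (hr (x, none) (by simp))
            · obtain rfl : v = x := h3.1
              exact absurd (by simp) (List.nodup_cons.1 hn'.2).1
            · exact absurd h3 id
    · obtain ⟨-, t, ht, -⟩ := h1
      exact absurd ht.2.2.1 (hM.notA _ hv)

/-- A path of the gadget graph of weight `γ` comes from an `A`-path of `G` of the same weight. The
conditions on the labels exclude the paths that use only one gadget. -/
lemma exists_expand (hM : IsHull G A X M) {ω : Bool → Γ} {lam : Γ} {μ : Bool → Γ}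
    (h1 : lam + lam ≠ ω false + ω true - γ)
    (h2 : ∀ i, (lam + μ i) + (lam + μ i) ≠ ω i + ω i - γ) {l : List (GV V)}
    (hl : GP (gadG G lab A X M ω) (gadLab lab ω lam μ) (gadA A X) γ 1 l) :
    ∃ E, GP G lab A γ 1 E ∧ (∀ x ∈ E, x ∉ X) ∧ (∃ u ∈ E, u ∈ M) ∧
      ∀ v ∈ E, ((v, none) ∈ l ∧ (v ∈ M ∨ v ∈ A)) ∨
        ∃ y a t, y ∈ M ∧ (y, some none) ∈ l ∧ Tail G A X M a t y ∧ v ∈ t := by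
  obtain ⟨⟨hc, hn, a, m, e, rfl, ha, he, hm⟩, hw, -⟩ := hl
  obtain ⟨a, rfl⟩ : ∃ b, a = (b, none) := ⟨a.1, Prod.ext rfl ha.1⟩
  have haA : a ∈ A := ha.2.1
  have heN : ∀ (x : V) (i : Option Bool), e ≠ (x, some i) := by
    rintro x i rfl
    exact absurd he.1 (by simp)
  -- the first inner vertex is a leg
  cases m with
  | nil =>
    rw [List.nil_append, List.isChain_cons_cons] at hc
    obtain ⟨b, _ | i⟩ := e
    · exact absurd haA (hM.notA _ hc.1.1)
    · exact absurd rfl (heN b i)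
  | cons p m =>
  rw [List.cons_append, List.isChain_cons_cons] at hc
  obtain ⟨e1, hc⟩ := hc
  have hn1 := List.nodup_cons.1 hn
  obtain ⟨v, _ | _ | i⟩ := p
  · exact absurd haA (hM.notA _ e1.1)
  · exact absurd haA (hM.notA _ e1.2)
  obtain ⟨hv, t, ht, htw⟩ := e1
  -- the second is the hub
  cases m with
  | nil =>
    obtain ⟨b, _ | i⟩ := e
    · simp [gadLab] at hw
      refine absurd ?_ (h2 i)
      rw [← hw]; abel
    · exact absurd rfl (heN b i)
  | cons p m =>
  rw [List.cons_append, List.isChain_cons_cons] at hc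
  obtain ⟨e2, hc⟩ := hc
  have hn2 := List.nodup_cons.1 hn1.2
  obtain ⟨x, _ | _ | j⟩ := p
  · obtain ⟨-, s, hs, -⟩ := e2
    exact absurd ⟨rfl, hs.2.2.1, hs.2.2.2.1⟩ (hm (x, none) (by simp))
  swap
  · exact absurd e2 id
  obtain rfl : v = x := e2.1
  -- the third is `v`
  cases m with
  | nil =>
    rw [List.nil_append, List.isChain_cons_cons] at hc
    obtain ⟨b, _ | i⟩ := e
    · have : v = b := hc.1.1
      exact absurd he.2.1 (this ▸ hM.notA _ hv)
    · exact absurd rfl (heN b i)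
  | cons p m =>
  rw [List.cons_append, List.isChain_cons_cons] at hc
  obtain ⟨e3, hc⟩ := hc
  have hn3 := List.nodup_cons.1 hn2.2
  obtain ⟨x, _ | _ | j⟩ := p
  rotate_left
  · exact absurd e3 id
  · obtain rfl : v = x := e3.1
    have hij : i ≠ j := by
      rintro rfl
      exact absurd (by simp) hn2.1
    exfalso
    cases m with
    | nil =>
      obtain ⟨b, _ | i'⟩ := e
      · simp [gadLab] at hw
        refine h1 ?_
        rw [← hw]
        cases i <;> cases j <;> simp at hij <;> abel
      · exact absurd rfl (heN b i')
    | cons p m =>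
    rw [List.cons_append, List.isChain_cons_cons] at hc
    obtain ⟨x, _ | _ | i'⟩ := p
    · obtain ⟨-, s, hs, -⟩ := hc.1
      exact absurd ⟨rfl, hs.2.2.1, hs.2.2.2.1⟩ (hm (x, none) (by simp))
    · obtain rfl : v = x := hc.1.1
      exact absurd (by simp) hn3.1
    · exact absurd hc.1 id
  obtain rfl : v = x := e3.1
  obtain ⟨L, L₀, y, j, s, b, rfl, rfl, hL, hLc, hLM, hs, hsw⟩ :=
    exists_walkout hM he m v hv hc hn3.2 fun q hq => hm q (by simp [hq])
  have hyM : y ∈ M := hLM y (by rw [hL]; simp)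
  have hvy : v ≠ y := by
    rintro rfl
    exact absurd (by simp) hn3.1
  have hts : ∀ x ∈ t, x ∉ s := fun x hx hx' => hvy (hM.tail_unique hv hyM ht hs hx hx')
  have hab : a ≠ b := by
    rintro rfl
    exact absurd (by simp) hn1.1
  have hLn : (v :: L).Nodup := by
    have : ((v :: L).map fun x => ((x, none) : GV V)).Nodup :=
      hn3.2.sublist (by simp)
    exact this.of_map _
  have htA := ht.2.2.2.2
  have hsA := hs.2.2.2.2
  have hbA : b ∈ A := hs.2.2.1
  have ey : L₀ ++ y :: (s.reverse ++ [b]) = v :: (L ++ (s.reverse ++ [b])) := by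
    rw [show v :: (L ++ (s.reverse ++ [b])) = v :: L ++ (s.reverse ++ [b]) from rfl, hL]; simp
  refine ⟨a :: (t ++ v :: L ++ s.reverse ++ [b]), ⟨⟨?_, ?_, a, t ++ v :: L ++ s.reverse, b, by simp,
    haA, hbA, ?_⟩, ?_, by simp⟩, ?_, ⟨v, by simp, hv⟩, ?_⟩
  · have e : a :: (t ++ v :: L ++ s.reverse ++ [b]) = (a :: t) ++ v :: (L ++ (s.reverse ++ [b])) := by
      simp
    rw [e, List.isChain_split]
    refine ⟨ht.1, ?_⟩
    rw [← ey, List.isChain_split]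
    refine ⟨hL ▸ hLc, ?_⟩
    have : y :: (s.reverse ++ [b]) = (b :: (s ++ [y])).reverse := by simp
    rw [this, List.isChain_reverse]
    exact hs.1.imp fun _ _ h => h.symm
  · have htn := ht.2.1
    have hsn := hs.2.1
    have h1 : ∀ x ∈ t, x ∉ v :: L := fun x hx hx' => (htA x hx).2.2 (hLM x hx')
    have h2 : ∀ x ∈ s, x ∉ v :: L := fun x hx hx' => (hsA x hx).2.2 (hLM x hx')
    have h3 : ∀ x ∈ v :: L, x ∉ A := fun x hx => hM.notA _ (hLM x hx)
    simp only [List.nodup_cons, List.nodup_append, List.mem_append, List.mem_cons,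
      List.mem_reverse, List.not_mem_nil, or_false, not_or, List.nodup_reverse] at *
    grind
  · intro x hx
    simp only [List.mem_append, List.mem_reverse] at hx
    rcases hx with (hx | hx) | hx
    · exact (htA x hx).1
    · exact hM.notA _ (hLM x hx)
    · exact (hsA x hx).1
  · have e : a :: (t ++ v :: L ++ s.reverse ++ [b]) = (a :: t) ++ v :: (L ++ (s.reverse ++ [b])) := by
      simp
    rw [e, lw_append_cons, ← ey, lw_append_cons lab L₀, ← hL]
    have e' : y :: (s.reverse ++ [b]) = (b :: (s ++ [y])).reverse := by simp
    rw [e', lw_reverse, hsw, List.cons_append, htw, ← hw]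
    have e4 : ((v, none) : GV V) :: (L.map (fun x => (x, none)) ++
        [(y, some none), (y, some (some j))] ++ [(b, none)]) = L₀.map (fun x => (x, none)) ++
        (y, none) :: [(y, some none), (y, some (some j)), (b, none)] := by
      have := congrArg (List.map fun x => ((x, none) : GV V)) hL
      simp only [List.map_cons, List.map_append, List.map_nil] at this
      rw [List.append_assoc, ← List.cons_append, this]; simp
    have e5 : (L₀.map fun x => ((x, none) : GV V)) ++ [(y, none)] =
        (v :: L).map fun x => ((x, none) : GV V) := by rw [hL]; simp
    simp only [List.cons_append, lw_cons_cons]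
    rw [e4, lw_append_cons, e5, lw_map_base]
    simp [gadLab]
    abel
  · intro x hx
    simp only [List.mem_cons, List.mem_append, List.mem_reverse, List.not_mem_nil, or_false] at hx
    rcases hx with rfl | ((hx | hx) | hx) | rfl
    · exact ha.2.2
    · exact (htA x hx).2.1
    · exact hM.notX _ (hLM x (by simpa using hx))
    · exact (hsA x hx).2.1
    · exact he.2.2
  · intro x hx
    simp only [List.mem_cons, List.mem_append, List.mem_reverse, List.not_mem_nil, or_false] at hx
    rcases hx with rfl | ((hx | hx) | hx) | rfl
    · exact .inl ⟨by simp, .inr haA⟩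
    · exact .inr ⟨v, a, t, hv, by simp, ht, hx⟩
    · refine .inl ⟨?_, .inl (hLM x (by simpa using hx))⟩
      rcases hx with rfl | hx
      · simp
      · simp [hx]
    · exact .inr ⟨y, b, s, hyM, by simp, hs, hx⟩
    · exact .inl ⟨by simp, .inr hbA⟩

/-- Replacing both tails of a path by routes through gadgets. -/
lemma gp_compress (hM : IsHull G A X M) {ω : Bool → Γ} (lam : Γ) (μ : Bool → Γ) {a b v y : V}
    {t s L L₀ : List V} (ht : Tail G A X M a t v) (htw : lw lab (a :: (t ++ [v])) = ω false)
    (hs : Tail G A X M b s y) (hsw : lw lab (b :: (s ++ [y])) = ω true) (hL : v :: L = L₀ ++ [y])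
    (hLc : (v :: L).IsChain G.Adj) (hLn : (v :: L).Nodup) (hLM : ∀ x ∈ v :: L, x ∈ M)
    (hvy : v ≠ y) (hab : a ≠ b) (hw : ω false + lw lab (v :: L) + ω true = γ) :
    GP (gadG G lab A X M ω) (gadLab lab ω lam μ) (gadA A X) γ 1
      ((a, none) :: (v, some (some false)) :: (v, some none) :: ((v :: L).map (fun x => (x, none)) ++
        [(y, some none), (y, some (some true)), (b, none)])) := by
  have hv : v ∈ M := hLM v (by simp)
  have hy : y ∈ M := hLM y (by rw [hL]; simp)
  have haA := ht.2.2.1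
  have hbA := hs.2.2.1
  have hLA : ∀ x ∈ v :: L, x ∉ A := fun x hx => hM.notA x (hLM x hx)
  have e5 : (L₀.map fun x => ((x, none) : GV V)) ++ [(y, none)] =
      (v :: L).map fun x => ((x, none) : GV V) := by rw [hL]; simp
  have e4 : (v :: L).map (fun x => ((x, none) : GV V)) ++
        [(y, some none), (y, some (some true)), (b, none)] = L₀.map (fun x => (x, none)) ++
        (y, none) :: [(y, some none), (y, some (some true)), (b, none)] := by
    rw [hL]; simp
  refine ⟨⟨?_, ?_, (a, none), (v, some (some false)) :: (v, some none) ::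
    ((v :: L).map (fun x => (x, none)) ++ [(y, some none), (y, some (some true))]), (b, none),
    by simp, ⟨rfl, haA, ht.2.2.2.1⟩, ⟨rfl, hbA, hs.2.2.2.1⟩, ?_⟩, ?_, by simp⟩
  · rw [List.isChain_cons_cons, List.isChain_cons_cons]
    refine ⟨⟨hv, t, ht, htw⟩, ⟨rfl, hv⟩, ?_⟩
    rw [List.map_cons, List.cons_append, List.isChain_cons_cons]
    refine ⟨⟨rfl, hv⟩, ?_⟩
    rw [← List.cons_append, ← List.map_cons (f := fun x => ((x, none) : GV V)), e4,
      List.isChain_split, e5]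
    constructor
    · clear hL e4 e5 hw
      have key : ∀ L : List V, L.IsChain G.Adj → (∀ x ∈ L, x ∈ M) →
          (L.map fun x => ((x, none) : GV V)).IsChain (gadG G lab A X M ω).Adj := by
        intro L
        induction L with
        | nil => simp
        | cons x L ih =>
          cases L with
          | nil => simp
          | cons z L =>
            intro h h'
            rw [List.isChain_cons_cons] at h
            rw [List.map_cons, List.map_cons, List.isChain_cons_cons]
            exact ⟨⟨h' x (by simp), h' z (by simp), h.1⟩,
              ih h.2 fun u hu => h' u (List.mem_cons_of_mem _ hu)⟩
      exact key _ hLc hLM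
    · simp only [List.isChain_cons_cons]
      exact ⟨⟨rfl, hy⟩, ⟨rfl, hy⟩, ⟨hy, s, hs, hsw⟩, by simp⟩
  · have hmap : ((v :: L).map fun x => ((x, none) : GV V)).Nodup :=
      hLn.map fun x x' h => (Prod.ext_iff.1 h).1
    have ha' : a ∉ v :: L := fun h => hLA a h haA
    have hb' : b ∉ v :: L := fun h => hLA b h hbA
    rw [List.nodup_cons, List.nodup_cons, List.nodup_cons, List.nodup_append]
    refine ⟨?_, ?_, ?_, hmap, by simp, ?_⟩
    · simp only [List.mem_cons, not_or] at ha'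
      simp [hab, ha'.1, ha'.2]
    · simp
    · simp [hvy]
    · intro p hp q hq hpq
      subst hpq
      obtain ⟨x, hx, rfl⟩ := List.mem_map.1 hp
      simp at hq
      exact hb' (hq ▸ hx)
  · intro p hp hpA
    simp only [List.mem_cons, List.mem_append, List.mem_map, List.not_mem_nil, or_false] at hp
    rcases hp with rfl | rfl | ⟨x, hx, rfl⟩ | rfl | rfl
    · exact absurd hpA.1 (by simp)
    · exact absurd hpA.1 (by simp)
    · exact hLA x (by simpa using hx) hpA.2.1
    · exact absurd hpA.1 (by simp)
    · exact absurd hpA.1 (by simp)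
  · rw [lw_cons_cons, lw_cons_cons, List.map_cons, List.cons_append, lw_cons_cons,
      ← List.cons_append, ← List.map_cons (f := fun x => ((x, none) : GV V)), e4, lw_append_cons,
      e5, lw_map_base, ← hw]
    simp [gadLab]
    abel

/-- If the paths of weight `γ` that avoid `X` and meet `M` admit no large packing, then those of them
that have two vertices in `M` and tails of prescribed weights `ω false` and `ω true` are hit by a set of
bounded size. -/
lemma hit_of_type [Fintype V] (hM : IsHull G A X M) (hΓ : ∃ x : Γ, x + x ≠ 0) {f : ℕ → ℕ}
    (hf : LEPP Γ γ 1 f) {k : ℕ}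
    (hK : ¬ Pack (fun l => GP G lab A γ 1 l ∧ (∀ x ∈ l, x ∉ X) ∧ ∃ u ∈ l, u ∈ M) k)
    (ω : Bool → Γ) :
    ∃ Z : Finset V, Z.card ≤ f k ∧ ∀ (a b v y : V) (t s L L₀ : List V), Tail G A X M a t v →
      lw lab (a :: (t ++ [v])) = ω false → Tail G A X M b s y → lw lab (b :: (s ++ [y])) = ω true →
      v :: L = L₀ ++ [y] → (v :: L).IsChain G.Adj → (v :: L).Nodup → (∀ x ∈ v :: L, x ∈ M) →
      v ≠ y → a ≠ b → ω false + lw lab (v :: L) + ω true = γ →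
      ∃ z ∈ Z, z = a ∨ z ∈ v :: L ∨ z = b := by
  classical
  obtain ⟨x, hx⟩ := hΓ
  have hch : ∀ c : Γ, ∃ d : Γ, d + d ≠ c := by
    intro c
    by_cases hc : c = 0
    · exact ⟨x, by rwa [hc]⟩
    · exact ⟨0, by rw [add_zero]; exact fun h => hc h.symm⟩
  obtain ⟨lam, hlam⟩ := hch (ω false + ω true - γ)
  choose κ hκ using fun i => hch (ω i + ω i - γ)
  have hμ : ∀ i, (lam + (κ i - lam)) + (lam + (κ i - lam)) ≠ ω i + ω i - γ := by
    intro i; simpa using hκ i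
  rcases hf (GV V) (gadG G lab A X M ω) (gadLab lab ω lam fun i => κ i - lam) (gadA A X) k with
    ⟨Ps, hPk, hP, hd⟩ | ⟨Z, hZ, hZ'⟩
  · refine absurd ?_ hK
    choose! E h1 h2 h3 h4 using fun l hl => exists_expand hM hlam hμ (l := l) hl
    refine ⟨Ps.map E, by simpa using hPk, ?_, ?_⟩
    · intro l hl
      obtain ⟨p, hp, rfl⟩ := List.mem_map.1 hl
      exact ⟨h1 p (hP p hp), h2 p (hP p hp), h3 p (hP p hp)⟩
    · rw [List.pairwise_map]
      refine hd.imp_of_mem fun {p q} hp hq hpq z hz hz' => ?_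
      rcases h4 p (hP p hp) z hz with ⟨h, h'⟩ | ⟨y, a, t, hy, hyp, ht, hzt⟩ <;>
      rcases h4 q (hP q hq) z hz' with ⟨g, g'⟩ | ⟨y', a', t', hy', hyq, ht', hzt'⟩
      · exact hpq h g
      · rcases h' with h' | h'
        · exact (ht'.2.2.2.2 z hzt').2.2 h'
        · exact (ht'.2.2.2.2 z hzt').1 h'
      · rcases g' with g' | g'
        · exact (ht.2.2.2.2 z hzt).2.2 g'
        · exact (ht.2.2.2.2 z hzt).1 g'
      · have := hM.tail_unique hy hy' ht ht' hzt hzt'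
        exact hpq hyp (this ▸ hyq)
  · refine ⟨Z.image Prod.fst, Finset.card_image_le.trans hZ, ?_⟩
    intro a b v y t s L L₀ ht htw hs hsw hL hLc hLn hLM hvy hab hw
    obtain ⟨z, hz, hzl⟩ := hZ' _ (gp_compress hM lam (fun i => κ i - lam) ht htw hs hsw hL hLc hLn hLM
      hvy hab hw)
    refine ⟨z.1, Finset.mem_image_of_mem _ hz, ?_⟩
    have hyL : y ∈ v :: L := by rw [hL]; simp
    simp only [List.mem_cons, List.mem_append, List.mem_map, List.not_mem_nil, or_false] at hzl hyL ⊢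
    rcases hzl with rfl | rfl | rfl | ⟨u, hu, rfl⟩ | rfl | rfl | rfl <;> simp_all

/-- The step from `k` to `k + 1` for groups that are not of exponent two. -/
lemma hit_of_not_exponent_two [Fintype Γ] [Fintype V] {A : Set V} (hΓ : ∃ x : Γ, x + x ≠ 0)
    {f : ℕ → ℕ} (hf : LEPP Γ γ 1 f) {ℓ k g : ℕ} (hℓ : 2 ≤ ℓ)
    (hg : ∀ G' : SimpleGraph V, Pack (GP G' lab A γ ℓ) k ∨
      ∃ X : Finset V, X.card ≤ g ∧ Hit (GP G' lab A γ ℓ) X)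
    (hK : ¬ Pack (GP G lab A γ ℓ) (k + 1)) :
    ∃ X : Finset V, X.card ≤ coreBound (Fintype.card Γ) ℓ k g +
        (Fintype.card (Bool → Γ) * f (k + 1) + (k + 1) * 3) ∧ Hit (GP G lab A γ ℓ) X := by
  classical
  obtain ⟨W, X, hWA, hX, hlong, hshort⟩ := exists_core_free hℓ (.inr rfl) hg hK
  let M : Set V := {v | v ∉ A ∧ IsCore (inner G A) W.toFinset 2 X v}
  have hM : IsHull G A ↑X M := isHull_core _ _
  have hWM : ∀ w ∈ W, w ∉ X → w ∈ M := by
    intro w hw hwX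
    refine ⟨hWA w hw, hwX, fun R _ hwR => ?_⟩
    by_contra h
    exact hwR (mem_bd.2 ⟨h, .inl (by simpa using hw)⟩)
  have hK' : ¬ Pack (fun l => GP G lab A γ 1 l ∧ (∀ x ∈ l, x ∉ (X : Set V)) ∧ ∃ u ∈ l, u ∈ M)
      (k + 1) := by
    refine fun h => hK (h.mono ?_)
    rintro l ⟨h1, h2, u, hu, huM⟩
    exact hshort l h1 (fun x hx hxl => h2 x hxl (by simpa using hx)) ⟨u, hu, huM.1, huM.2⟩
  choose Z hZ hZ' using hit_of_type hM hΓ hf hK'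
  -- the paths with a single vertex in `M`
  let C : List V → Prop := fun l => GP G lab A γ ℓ l ∧ (∀ x ∈ l, x ∉ X) ∧
    ∃ a t v t' b, l = a :: (t ++ [v] ++ t' ++ [b]) ∧ v ∈ M ∧ a ∈ A ∧ b ∈ A ∧
      ∀ x ∈ t ++ t', x ∉ A ∧ x ∉ (X : Set V) ∧ x ∉ M
  obtain ⟨Y, hY, hY'⟩ : ∃ Y : Finset V, Y.card ≤ (k + 1) * (1 + 2) ∧ Hit C Y := by
    have hfil : ∀ {a v b : V} {t t' : List V}, v ∈ M → a ∈ A → b ∈ A →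
        (∀ x ∈ t ++ t', x ∉ A ∧ x ∉ (X : Set V) ∧ x ∉ M) →
        {x | x ∈ a :: (t ++ [v] ++ t' ++ [b]) ∧ x ∈ M} = {v} := by
      intro a v b t t' hv ha hb h
      ext x
      simp only [List.mem_cons, List.mem_append, List.not_mem_nil, or_false, Set.mem_ofPred_eq,
        Set.mem_singleton_iff]
      constructor
      · rintro ⟨rfl | ((hx | rfl) | hx) | rfl, hxM⟩
        · exact absurd ha (hM.notA _ hxM)
        · exact absurd hxM (h x (by simp [hx])).2.2
        · rfl
        · exact absurd hxM (h x (by simp [hx])).2.2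
        · exact absurd hb (hM.notA _ hxM)
      · rintro rfl
        exact ⟨by simp, hv⟩
    refine hit_of_fibers (C := C) (G := G) (A := A) (fun l => {x | x ∈ l ∧ x ∈ M})
      (fun l hl => hl.1.1) ?_ ?_ fun h => hK (h.mono fun l hl => hl.1)
    · rintro l l' ⟨⟨⟨hc, hn, -⟩, -⟩, hlX, a, t, v, t', b, rfl, hv, ha, hb, ht⟩
        ⟨⟨⟨hc', hn', -⟩, -⟩, hlX', a', s, v', s', b', rfl, hv', ha', hb', hs⟩ hne x hx hx'
      rw [hfil hv ha hb ht, hfil hv' ha' hb' hs] at hne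
      have hvv : v ≠ v' := fun h => hne (by rw [h])
      by_contra hxA
      -- both tails at the unique vertex of `M`, seen from the terminals
      have tails : ∀ {a v b : V} {t t' : List V},
          (a :: (t ++ [v] ++ t' ++ [b])).IsChain G.Adj → (a :: (t ++ [v] ++ t' ++ [b])).Nodup →
          (∀ x ∈ a :: (t ++ [v] ++ t' ++ [b]), x ∉ X) → a ∈ A → b ∈ A →
          (∀ x ∈ t ++ t', x ∉ A ∧ x ∉ (X : Set V) ∧ x ∉ M) →
          x ∈ a :: (t ++ [v] ++ t' ++ [b]) → x = v ∨ ∃ a r, Tail G A ↑X M a r v ∧ x ∈ r := by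
        intro a v b t t' hc hn hlX ha hb ht hx
        simp only [List.mem_cons, List.mem_append, List.not_mem_nil, or_false] at hx
        rcases hx with rfl | ((hx | rfl) | hx) | rfl
        · exact absurd ha hxA
        · refine .inr ⟨a, t, ⟨hc.front ⟨t' ++ [b], by simp⟩,
            hn.sublist (List.IsPrefix.sublist ⟨t' ++ [b], by simp⟩), ha, ?_, ?_⟩, hx⟩
          · simpa using hlX a (by simp)
          · exact fun z hz => ht z (by simp [hz])
        · exact .inl rfl
        · refine .inr ⟨b, t'.reverse, ⟨?_, ?_, hb, ?_, ?_⟩, by simpa using hx⟩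
          · have e : b :: (t'.reverse ++ [v]) = (v :: (t' ++ [b])).reverse := by simp
            rw [e, List.isChain_reverse]
            exact (hc.suffix ⟨a :: t, by simp⟩).imp fun _ _ h => h.symm
          · have e : b :: (t'.reverse ++ [v]) = (v :: (t' ++ [b])).reverse := by simp
            rw [e, List.nodup_reverse]
            exact hn.sublist (List.IsSuffix.sublist ⟨a :: t, by simp⟩)
          · simpa using hlX b (by simp)
          · exact fun z hz => ht z (by simpa using Or.inr hz)
        · exact absurd hb hxA
      rcases tails hc hn hlX ha hb ht hx with rfl | ⟨c, r, hr, hxr⟩ <;>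
      rcases tails hc' hn' hlX' ha' hb' hs hx' with h | ⟨c', r', hr', hxr'⟩
      · exact hvv h
      · exact (hr'.2.2.2.2 x hxr').2.2 hv
      · exact (hr.2.2.2.2 x hxr).2.2 (h ▸ hv')
      · exact hvv (hM.tail_unique hv hv' hr hr' hxr hxr')
    · rintro l₀ ⟨-, -, a, t, v, t', b, rfl, hv, ha, hb, ht⟩
      refine ⟨{v}, by simp, fun l _ h => ⟨v, by simp, ?_⟩⟩
      rw [hfil hv ha hb ht] at h
      have : v ∈ {x | x ∈ l ∧ x ∈ M} := by rw [h]; rfl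
      exact this.1
  refine ⟨X ∪ (Finset.univ.biUnion Z ∪ Y), ?_, fun l hl => ?_⟩
  · refine (Finset.card_union_le _ _).trans (Nat.add_le_add hX ?_)
    refine (Finset.card_union_le _ _).trans (Nat.add_le_add ?_ hY)
    refine (Finset.card_biUnion_le_card_mul _ _ (f (k + 1)) fun ω _ => hZ ω).trans ?_
    rw [Finset.card_univ]
  · by_contra! hcon
    have hlX : ∀ x ∈ X, x ∉ l := fun x hx => hcon x (by simp [hx])
    obtain ⟨w, hwW, hwl⟩ := hlong l hl hlX
    obtain ⟨a, t, L, t', b, rfl, hL0, hLM, ht, ha, hb⟩ := hM.exists_split hl.1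
      (fun x hx hxX => hlX x (by simpa using hxX) hx) ⟨w, hwl, hWM w hwW fun h => hlX w h hwl⟩
    obtain ⟨v, L, rfl⟩ := List.exists_cons_of_ne_nil hL0
    cases L with
    | nil =>
      obtain ⟨z, hz, hzl⟩ := hY' _ ⟨hl, fun x hx hxX => hlX x hxX hx, a, t, v, t', b, rfl,
        hLM v (by simp), ha, hb, ht⟩
      exact hcon z (by simp [hz]) hzl
    | cons v' L =>
      obtain ⟨L₀, y, hL⟩ : ∃ L₀ y, v :: v' :: L = L₀ ++ [y] := by
        rcases List.eq_nil_or_concat (v :: v' :: L) with h | ⟨r0, z, h⟩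
        · simp at h
        · exact ⟨r0, z, by rw [h, List.concat_eq_append]⟩
      obtain ⟨⟨hc, hn, -⟩, hw, -⟩ := hl
      have haX : a ∉ X := fun h => hlX a h (by simp)
      have hbX : b ∉ X := fun h => hlX b h (by simp)
      have el : a :: (t ++ v :: v' :: L ++ t' ++ [b]) = (a :: t ++ L₀) ++ y :: (t' ++ [b]) := by
        rw [hL]; simp
      have er : b :: (t'.reverse ++ [y]) = (y :: (t' ++ [b])).reverse := by simp
      have hLn : (v :: v' :: L).Nodup :=
        hn.sublist (List.IsInfix.sublist ⟨a :: t, t' ++ [b], by simp⟩)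
      have ht1 : Tail G A ↑X M a t v := by
        refine ⟨hc.front ⟨v' :: L ++ t' ++ [b], by simp⟩,
          hn.sublist (List.IsPrefix.sublist ⟨v' :: L ++ t' ++ [b], by simp⟩), ha,
          by simpa using haX, fun z hz => ht z (by simp [hz])⟩
      have ht2 : Tail G A ↑X M b t'.reverse y := by
        refine ⟨?_, ?_, hb, by simpa using hbX, fun z hz => ht z (by simpa using Or.inr hz)⟩
        · rw [er, List.isChain_reverse]
          exact (hc.suffix ⟨a :: t ++ L₀, el.symm⟩).imp fun _ _ h => h.symm
        · rw [er, List.nodup_reverse]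
          exact hn.sublist (List.IsSuffix.sublist ⟨a :: t ++ L₀, el.symm⟩)
      obtain ⟨z, hz, hzl⟩ := hZ' (fun i => if i then lw lab (b :: (t'.reverse ++ [y])) else
          lw lab (a :: (t ++ [v]))) a b v y t t'.reverse (v' :: L) L₀ ht1 (by simp) ht2 (by simp) hL
        (hc.middle ⟨a :: t, t' ++ [b], by simp⟩) hLn hLM
        (by
          rintro rfl
          cases L₀ with
          | nil => simp at hL
          | cons u L₀ =>
            have : v :: v' :: L = v :: (L₀ ++ [v]) := by
              rw [hL]; simp at hL; rw [← hL.1]; rfl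
            rw [this] at hLn
            simp at hLn)
        (by
          rintro rfl
          simp at hn)
        (by
          rw [← hw, el, lw_append_cons]
          have e : a :: t ++ L₀ ++ [y] = (a :: t) ++ v :: v' :: L := by rw [hL]; simp
          rw [e, lw_append_cons, er, lw_reverse]
          simp)
      have hzU : z ∈ X ∪ (Finset.univ.biUnion Z ∪ Y) := by
        simp only [Finset.mem_union, Finset.mem_biUnion]
        exact .inr (.inl ⟨_, Finset.mem_univ _, hz⟩)
      refine hcon z hzU ?_
      rcases hzl with rfl | hzl | rfl
      · simp
      · simp only [List.mem_cons, List.mem_append] at hzl ⊢; tauto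
      · simp

end gadget

/-! ### The equivalence -/

/-- For finite groups the Erdős–Pósa property passes from all paths of weight `γ` to the long ones,
by induction on the number of disjoint paths. -/
lemma lepp_of_finite {Γ : Type} [AddCommGroup Γ] [Finite Γ] {γ : Γ} {f : ℕ → ℕ}
    (hf : LEPP Γ γ 1 f) {ℓ : ℕ} (hℓ : 2 ≤ ℓ) : ∃ g, LEPP Γ γ ℓ g := by
  classical
  have := Fintype.ofFinite Γ
  have key : ∀ k, ∃ g : ℕ, ∀ (V : Type) [Fintype V] (G : SimpleGraph V) (lab : Sym2 V → Γ)
      (A : Set V), Pack (GP G lab A γ ℓ) k ∨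
        ∃ X : Finset V, X.card ≤ g ∧ Hit (GP G lab A γ ℓ) X := by
    intro k
    induction k with
    | zero => exact ⟨0, fun V _ G lab A => .inl ⟨[], rfl, by simp, by simp⟩⟩
    | succ k ih =>
      obtain ⟨g, hg⟩ := ih
      by_cases hΓ : ∀ x : Γ, x + x = 0
      · refine ⟨coreBound (Fintype.card Γ) ℓ k g + f (k + 1), fun V _ G lab A => or_iff_not_imp_left.2 fun hK => ?_⟩
        exact hit_of_exponent_two hΓ hf hℓ (fun G' => hg V G' lab A) hK
      · push Not at hΓ
        refine ⟨coreBound (Fintype.card Γ) ℓ k g +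
          (Fintype.card (Bool → Γ) * f (k + 1) + (k + 1) * 3), fun V _ G lab A => or_iff_not_imp_left.2 fun hK => ?_⟩
        exact hit_of_not_exponent_two hΓ hf hℓ (fun G' => hg V G' lab A) hK
  choose g hg using key
  exact ⟨g, fun V _ G lab A k => hg k V G lab A⟩

end LongAPaths

/-- Let `Γ` be an Abelian group, `γ ∈ Γ` and `ℓ` a fixed
positive integer. The long `A`-paths of weight `γ` (those of length at least
`ℓ`) have the Erdős–Pósa property iff the `A`-paths of weight `γ` do. -/
theorem long_gamma_APaths_erdosPosa_iff (Γ : Type) [AddCommGroup Γ] (γ : Γ)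
    (ℓ : ℕ) (hℓ : 0 < ℓ) :
    HasEPP Γ (fun _ _ _ lab P => P.weight lab = γ ∧ ℓ ≤ P.walk.length) ↔
      HasEPP Γ (fun _ _ _ lab P => P.weight lab = γ) := by
  rw [LongAPaths.hasEPP_iff, LongAPaths.hasEPP_iff']
  constructor
  · rintro ⟨f, hf⟩
    exact ⟨f, LongAPaths.lepp_forward γ ℓ f hf⟩
  · rintro ⟨f, hf⟩
    rcases finite_or_infinite Γ with h | h
    · rcases Nat.lt_or_ge 1 ℓ with h1 | h1
      · exact LongAPaths.lepp_of_finite hf h1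
      · obtain rfl : ℓ = 1 := by omega
        exact ⟨f, hf⟩
    · exact absurd hf (LongAPaths.not_lepp_of_infinite γ f)
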